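/- Let $G/K$ be a simply connected symmetric space of compact type: $G$ is a compact simply connected Lie group (realized as a compact subgroup of the unit group of a finite-dimensional real algebra, which is no restriction), $K$ is the identity component of the fixed point group of an involutive automorphism $\theta$ of $G$, the Lie algebra $\mathfrak g$ of $G$ carries an inner product invariant under $\mathrm{Ad}(G)$ and $d\theta$, and $G/K$ carries the induced metric. Let $\pi:G\to G/K$ be the projection and let $\phi:H^0([0,1],\mathfrak g)\to G$ be the parallel transport map on the Hilbert space of $L^2$-paths in $\mathfrak g$: $\phi(u)=g_u(1)$, where $g_u^{-1}g_u'=u$ and $g_u(0)=e$. Let $M$ be a connected equifocal submanifold of $G/K$, that is, a properly immersed complete submanifold such that (a) its normal holonomy group is trivial; (b) if $\nu$ is a parallel normal field and $\nu_{x}$ is a focal normal of multiplicity $k$ for some $x\in M$, then $\nu_{x}$ is one for all $x\in M$; (c) through each $x\in M$ there is a section, i.e. a properly embedded complete connected totally geodesic submanifold $\Sigma_x\ni x$ with $\dim\Sigma_x=\operatorname{codim}M$ meeting all parallel submanifolds of $M$ orthogonally. Fix $x_0\in M$ and assume that $\Sigma_{x_0}$ is not flat and that $T_{x_0}\Sigma_{x_0}=W_1\oplus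 W_2$ is an orthogonal decomposition into non-zero subspaces invariant under the restricted holonomy group of $\Sigma_{x_0}$, chosen so that the factor of the universal covering of $\Sigma_{x_0}$ corresponding to $W_1$ has no Euclidean part (no non-zero vector of $W_1$ is fixed by the restricted holonomy group). Let $D^N_i$ be the $\nabla^\perp$-parallel subbundle of the normal bundle $T^\perp M$ with $(D^N_i)_{x_0}=W_i$, so that $T^\perp M=D^N_1\oplus D^N_2$. Let $\widetilde M:=(\pi\circ\phi)^{-1}(M)\subset H^0([0,1],\mathfrak g)$ (the pull-back of $M$, if $M$ is only immersed), with shape tensor $\widetilde A$ and normal connection $\widetilde\nabla^\perp$, and let $\widetilde\nabla$ be the flat connection of $H^0([0,1],\mathfrak g)$. Let $\widetilde D^N_i\subset T^\perp\widetilde M$ be the horizontal lift of $D^N_i$, and put $$(\widetilde D^T_0)_u:=\bigcap_{n\in T^\perp_u\widetilde M}\operatorname{Ker}\widetilde A_n,\qquad (\widetilde D^T_j)_u:=\Big(\bigcap_{n\in(\widetilde D^N_k)_u}\operatorname{Ker}\widetilde A_n\Big)\ominus(\widetilde D^T_0)_u\quad(\{j,k\}=\{1,2\}).$$ Let $v$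 be a normal vector of $M$ belonging to $D^N_i$, let $\widetilde v$ be the parallel normal field of $M$ extending $v$, and let $\widetilde v^L$ be its horizontal lift to $\widetilde M$. Then $\widetilde v^L$ is differentiable along $\widetilde M$ and: (i) for every $X$ tangent to $\widetilde M$, the normal derivative $\widetilde\nabla^\perp_X\widetilde v^L$ belongs to $\widetilde D^N_i$; (ii) for every $Y\in\widetilde D^T_j\oplus\widetilde D^T_0$ with $j\ne i$, the derivative $\widetilde\nabla_Y\widetilde v^L$ in $H^0([0,1],\mathfrak g)$ vanishes. -/

import Mathlib

open MeasureTheory Set Filter Module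
open scoped Topology Manifold ContDiff RealInnerProductSpace

noncomputable section

/-- A simply connected symmetric space `G/K` of compact type, presented by a symmetric pair
`(G, K)` with `G` simply connected and `K` connected, and carrying the metric induced by a
bi-invariant metric of `G`.

* `G` is a compact simply connected Lie group, written as a compact subgroup of the unit group of a
  finite-dimensional real algebra `𝔸` (for instance a matrix algebra); every compact Lie group is
  isomorphic to such a group. A compact simply connected Lie group is automatically semisimple.
* The Euclidean space `𝔤` is the Lie algebra of `G` with its invariant inner product: `lie`
  identifies it with `{X ∈ 𝔸 | exp (t X) ∈ G for all t}`.
* `θ` is an involutive automorphism of `G`, with differential `dθ`, and `K` is the identity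
  component of its fixed point group. The inner product of `𝔤` is invariant under `Ad G` and
  `dθ`. -/
structure CompactSymmetricSpace (𝔸 𝔤 : Type*) [NormedRing 𝔸] [NormedAlgebra ℝ 𝔸]
    [FiniteDimensional ℝ 𝔸] [NormedAddCommGroup 𝔤] [InnerProductSpace ℝ 𝔤]
    [FiniteDimensional ℝ 𝔤] where
  G : Subgroup 𝔸ˣ
  isCompact_G : IsCompact (G : Set 𝔸ˣ)
  simplyConnected_G : SimplyConnectedSpace G
  lie : 𝔤 →ₗ[ℝ] 𝔸
  lie_injective : Function.Injective lie
  mem_range_lie_iff : ∀ X : 𝔸,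
    X ∈ LinearMap.range lie ↔ ∀ t : ℝ, ∃ g : G, ((g : 𝔸ˣ) : 𝔸) = NormedSpace.exp (t • X)
  norm_ad : ∀ (g : G) (ξ η : 𝔤),
    lie η = ((g : 𝔸ˣ) : 𝔸) * lie ξ * (((g⁻¹ : G) : 𝔸ˣ) : 𝔸) → ‖η‖ = ‖ξ‖
  θ : G ≃* G
  continuous_θ : Continuous θ
  θ_involutive : ∀ g : G, θ (θ g) = g
  dθ : 𝔤 →ₗᵢ[ℝ] 𝔤
  θ_exp : ∀ (ξ : 𝔤) (a b : G), ((a : 𝔸ˣ) : 𝔸) = NormedSpace.exp (lie ξ) →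
    ((b : 𝔸ˣ) : 𝔸) = NormedSpace.exp (lie (dθ ξ)) → θ a = b
  K : Subgroup G
  K_eq : (K : Set G) = connectedComponentIn {g : G | θ g = g} 1

namespace CompactSymmetricSpace

variable {𝔸 𝔤 : Type*} [NormedRing 𝔸] [NormedAlgebra ℝ 𝔸] [FiniteDimensional ℝ 𝔸]
  [NormedAddCommGroup 𝔤] [InnerProductSpace ℝ 𝔤] [FiniteDimensional ℝ 𝔤]

variable (S : CompactSymmetricSpace 𝔸 𝔤)

/-! ### The homogeneous space `G/K` -/

/-- The quotient space `G/K`. -/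
abbrev Q : Type _ := S.G ⧸ S.K

/-- The inclusion of `G` into the algebra `𝔸`. -/
def val (g : S.G) : 𝔸 := ((g : 𝔸ˣ) : 𝔸)

/-- The natural projection `π : G → G/K`. -/
def proj (g : S.G) : S.Q := QuotientGroup.mk g

theorem exists_exp (ξ : 𝔤) : ∃ g : S.G, S.val g = NormedSpace.exp (S.lie ξ) := by
  simpa [val] using (S.mem_range_lie_iff (S.lie ξ)).1 ⟨ξ, rfl⟩ 1

/-- The exponential map `𝔤 → G`. -/
def expG (ξ : 𝔤) : S.G := (S.exists_exp ξ).choose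

/-- The Lie algebra `𝔨_x` of the stabilizer of `x` in `G`. -/
def isotropy (x : S.Q) : Submodule ℝ 𝔤 :=
  Submodule.span ℝ {ζ : 𝔤 | ∀ t : ℝ, S.expG (t • ζ) • x = x}

/-- The tangent space `T_x(G/K)`, realized as the orthogonal complement `𝔭_x` of `𝔨_x` in `𝔤`:
the element `ξ ∈ 𝔭_x` stands for the velocity at `t = 0` of `t ↦ exp(tξ)·x`. For `x = gK` this is
`Ad(g)𝔭`, with `ξ = Ad(g)ξ₀` standing for `g_*ξ₀`, and the inner product of `𝔤` restricts to the
metric of `G/K`. So `T(G/K)` is a subbundle of the trivial bundle with fibre `𝔤`, and vector fields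
along maps into `G/K` are `𝔤`-valued functions. Since `[𝔭, 𝔭] ⊆ 𝔨`, the Levi-Civita connection of
`G/K` is the orthogonal projection to `𝔭_x` of the derivative of `𝔤`-valued functions. -/
def tangent (x : S.Q) : Submodule ℝ 𝔤 := (S.isotropy x)ᗮ

/-- The Riemannian exponential map of `G/K`. -/
def Exp (x : S.Q) (ξ : 𝔤) : S.Q := S.expG ξ • x

section Maps

variable {F : Type*} [NormedAddCommGroup F] [NormedSpace ℝ F]
  {B : Type*} [TopologicalSpace B] {P : Type*} [TopologicalSpace P] [ChartedSpace B P]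

/-- A map from a manifold to `G/K` is smooth on a set if, near each point of it, it lifts to a
smooth map to `G`. -/
def IsSmoothOn (I : ModelWithCorners ℝ F B) (f : P → S.Q) (U : Set P) : Prop :=
  ∀ p ∈ U, ∃ V : Set P, IsOpen V ∧ p ∈ V ∧ ∃ h : P → S.G,
    ContMDiffOn I 𝓘(ℝ, 𝔸) ∞ (fun q => S.val (h q)) V ∧ ∀ q ∈ V, S.proj (h q) = f q

/-- `L` is the differential of `f : P → G/K` at `p`: for a local lift `h` of `f` to `G` one has
`dh(X) h(p)⁻¹ = L X + ζ` with `L X ∈ T_{f p}(G/K)` and `ζ ∈ 𝔨_{f p}`. -/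
def IsDifferentialAt (I : ModelWithCorners ℝ F B) (f : P → S.Q) (p : P)
    (L : TangentSpace I p →L[ℝ] 𝔤) : Prop :=
  ∃ (h : P → S.G) (h' : TangentSpace I p →L[ℝ] 𝔸),
    (∀ᶠ q in 𝓝 p, S.proj (h q) = f q) ∧
    HasMFDerivAt I 𝓘(ℝ, 𝔸) (fun q => S.val (h q)) p h' ∧
    ∀ X, L X ∈ S.tangent (f p) ∧
      ∃ ζ ∈ S.isotropy (f p), h' X = S.lie (L X + ζ) * S.val (h p)

open Classical in
/-- The differential of a map to `G/K` (zero if the map is not differentiable). -/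
def diff (I : ModelWithCorners ℝ F B) (f : P → S.Q) (p : P) : TangentSpace I p →L[ℝ] 𝔤 :=
  if h : ∃ L, S.IsDifferentialAt I f p L then h.choose else 0

end Maps

/-! ### Embedded submanifolds of `G/K` and their holonomy -/

/-- An embedded submanifold of `G/K`, with its tangent spaces. -/
structure Submfd where
  carrier : Set S.Q
  dim : ℕ
  tangent : S.Q → Submodule ℝ 𝔤
  exists_param : ∀ y ∈ carrier,
    ∃ (U : Set (EuclideanSpace ℝ (Fin dim))) (O : Set S.Q) (ψ : EuclideanSpace ℝ (Fin dim) → S.Q),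
      IsOpen U ∧ 0 ∈ U ∧ ψ 0 = y ∧ IsOpen O ∧ ψ '' U = carrier ∩ O ∧
      Topology.IsEmbedding (U.domRestrict ψ) ∧
      S.IsSmoothOn 𝓘(ℝ, EuclideanSpace ℝ (Fin dim)) ψ U ∧
      ∀ a ∈ U, Function.Injective (S.diff 𝓘(ℝ, EuclideanSpace ℝ (Fin dim)) ψ a) ∧
        LinearMap.range (S.diff 𝓘(ℝ, EuclideanSpace ℝ (Fin dim)) ψ a).toLinearMap = tangent (ψ a)

namespace Submfd

variable {S} (N : S.Submfd)

/-- `N` is totally geodesic: covariant derivatives in `G/K` of vector fields tangent to `N` along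
curves in `N` are tangent to `N`. -/
def IsTotallyGeodesic : Prop :=
  ∀ (c : ℝ → S.Q) (c' : ℝ →L[ℝ] 𝔤) (ξ : ℝ → 𝔤) (η ζ : 𝔤),
    (∀ᶠ t in 𝓝 (0 : ℝ), c t ∈ N.carrier ∧ ξ t ∈ N.tangent (c t)) →
    S.IsDifferentialAt 𝓘(ℝ, ℝ) c 0 c' →
    η ∈ S.tangent (c 0) → ζ ∈ S.isotropy (c 0) → HasDerivAt ξ (η + ζ) 0 →
    η ∈ N.tangent (c 0)

/-- `c` restricted to `[0,1]` is a smooth loop in `N` at `y` that is null-homotopic in `N`. -/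
def IsNullLoop (y : S.Q) (c : ℝ → S.Q) : Prop :=
  S.IsSmoothOn 𝓘(ℝ, ℝ) c univ ∧
  ∃ (hy : y ∈ N.carrier) (p : Path (⟨y, hy⟩ : N.carrier) ⟨y, hy⟩),
    (∀ t : unitInterval, (p t : S.Q) = c t) ∧ p.Homotopic (Path.refl _)

/-- `ξ` is a vector field tangent to `N` along `c|[0,1]` that is parallel for the Levi-Civita
connection of the induced metric of `N` (the tangential part of the derivative). -/
def IsParallelAlong (c : ℝ → S.Q) (ξ : ℝ → 𝔤) : Prop :=
  ∀ t ∈ Icc (0 : ℝ) 1, ξ t ∈ N.tangent (c t) ∧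
    ∃ ξ' : 𝔤, HasDerivWithinAt ξ ξ' (Icc 0 1) t ∧ ∀ w ∈ N.tangent (c t), ⟪ξ', w⟫ = 0

/-- The subspace `W` of `T_yN` is invariant under the restricted holonomy group of `N` at `y`. -/
def IsHolonomyInvariant (y : S.Q) (W : Submodule ℝ 𝔤) : Prop :=
  ∀ c ξ, N.IsNullLoop y c → N.IsParallelAlong c ξ → ξ 0 ∈ W → ξ 1 ∈ W

/-- The vector `w ∈ T_yN` is fixed by the restricted holonomy group of `N` at `y`. -/
def IsHolonomyFixed (y : S.Q) (w : 𝔤) : Prop :=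
  ∀ c ξ, N.IsNullLoop y c → N.IsParallelAlong c ξ → ξ 0 = w → ξ 1 = w

/-- The connected submanifold `N` through `y` is flat: its restricted holonomy is trivial. -/
def IsFlatAt (y : S.Q) : Prop := ∀ w ∈ N.tangent y, N.IsHolonomyFixed y w

end Submfd

/-! ### Immersed submanifolds of `G/K` and equifocality -/

section Immersed

variable (E : Type*) [NormedAddCommGroup E] [NormedSpace ℝ E]
  {M : Type*} [TopologicalSpace M] [ChartedSpace E M]

/-- `f : M → G/K` is an immersion. -/
def IsImmersion (f : M → S.Q) : Prop :=
  S.IsSmoothOn 𝓘(ℝ, E) f univ ∧ ∀ m, Function.Injective (S.diff 𝓘(ℝ, E) f m)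

/-- The tangent space of the immersed submanifold `f : M → G/K` at `m`. -/
def tangentOf (f : M → S.Q) (m : M) : Submodule ℝ 𝔤 :=
  LinearMap.range (S.diff 𝓘(ℝ, E) f m).toLinearMap

/-- The normal space of the immersed submanifold `f : M → G/K` at `m`. -/
def normalOf (f : M → S.Q) (m : M) : Submodule ℝ 𝔤 :=
  S.tangent (f m) ⊓ (S.tangentOf E f m)ᗮ

/-- `ν` is a normal vector field of `f : M → G/K`, parallel for the normal connection `∇^⊥`
(the normal part of the derivative). -/
def IsParallelNormal (f : M → S.Q) (ν : M → 𝔤) : Prop :=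
  ContMDiff 𝓘(ℝ, E) 𝓘(ℝ, 𝔤) ∞ ν ∧ (∀ m, ν m ∈ S.normalOf E f m) ∧
  ∀ m (X : TangentSpace 𝓘(ℝ, E) m), ∀ w ∈ S.normalOf E f m,
    @inner ℝ 𝔤 _ (mfderiv 𝓘(ℝ, E) 𝓘(ℝ, 𝔤) ν m X) w = 0

/-- The end-point map `η_ν : M → G/K` of a normal vector field `ν`. -/
def endPoint (f : M → S.Q) (ν : M → 𝔤) (m : M) : S.Q := S.Exp (f m) (ν m)

/-- The normal exponential map of `f`, precomposed with the surjective bundle map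
`M × 𝔤 → T^⊥M` given by orthogonal projection. -/
def normalExp (f : M → S.Q) (p : M × 𝔤) : S.Q :=
  haveI := FiniteDimensional.complete ℝ (S.normalOf E f p.1)
  S.Exp (f p.1) ((S.normalOf E f p.1).starProjection p.2)

/-- The multiplicity of the normal vector `v` at `m` as a focal normal of `f`, i.e. the dimension
`dim T^⊥M - rank` of the kernel of the differential of the normal exponential map at `v`
(where `dim T^⊥M = dim G/K`); `v` is a focal normal if it is positive. -/
def focalMultiplicity (f : M → S.Q) (m : M) (v : 𝔤) : ℕ :=
  finrank ℝ (S.tangent (f m)) - finrank ℝ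
    (LinearMap.range (S.diff (𝓘(ℝ, E).prod 𝓘(ℝ, 𝔤)) (S.normalExp E f) (m, v)).toLinearMap)

/-- `N` is a section of `f : M → G/K` through `f m`: a properly embedded complete connected totally
geodesic submanifold through `f m`, of dimension `codim M`, that meets all parallel submanifolds
`η_ν(M)` (`ν` parallel, `η_ν` an immersion) of `M` orthogonally. A closed subset of the compact
space `G/K` is properly embedded and complete. -/
def IsSection (f : M → S.Q) (m : M) (N : S.Submfd) : Prop :=
  f m ∈ N.carrier ∧ IsClosed N.carrier ∧ IsConnected N.carrier ∧ N.IsTotallyGeodesic ∧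
  N.dim = finrank ℝ (S.normalOf E f m) ∧
  ∀ ν, S.IsParallelNormal E f ν → S.IsImmersion E (S.endPoint f ν) →
    (∃ m', S.endPoint f ν m' ∈ N.carrier) ∧
    ∀ m', S.endPoint f ν m' ∈ N.carrier →
      N.tangent (S.endPoint f ν m') ⟂ S.tangentOf E (S.endPoint f ν) m'

/-- `f : M → G/K` is an equifocal submanifold (a submanifold with parallel focal structure).
A properly immersed submanifold of the compact space `G/K` is compact, hence complete. -/
structure IsEquifocal (f : M → S.Q) : Prop where
  immersion : S.IsImmersion E f
  proper : IsProperMap f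
  /-- The normal holonomy group is trivial: every normal vector extends to a parallel field. -/
  trivialNormalHolonomy : ∀ m, ∀ v ∈ S.normalOf E f m, ∃ ν, S.IsParallelNormal E f ν ∧ ν m = v
  parallelFocal : ∀ ν, S.IsParallelNormal E f ν → ∀ (k : ℕ) (m₀ : M), 1 ≤ k →
    S.focalMultiplicity E f m₀ (ν m₀) = k → ∀ m, S.focalMultiplicity E f m (ν m) = k
  sections : ∀ m, ∃ N, S.IsSection E f m N

/-- The `∇^⊥`-parallel subbundle `D` of the normal bundle of `f` with `D_{x₀} = W`, for `f` with
trivial normal holonomy and `W` a subspace of the normal space at `x₀`. -/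
def parallelSubbundle (f : M → S.Q) (x₀ : M) (W : Submodule ℝ 𝔤) (m : M) : Submodule ℝ 𝔤 :=
  Submodule.span ℝ {v | ∃ ν, S.IsParallelNormal E f ν ∧ ν x₀ ∈ W ∧ ν m = v}

/-- The section `N` of `f` through `f x₀` is not flat, and its tangent space at `f x₀` has the
non-trivial orthogonal decomposition `W 0 ⊕ W 1`, invariant under the restricted holonomy group of
`N`, where the de Rham factor of the universal covering of `N` corresponding to `W 0` has no
Euclidean part (the Euclidean part is tangent to the vectors fixed by the restricted holonomy). -/
structure IsSectionSplitting (f : M → S.Q) (x₀ : M) (N : S.Submfd)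
    (W : Fin 2 → Submodule ℝ 𝔤) : Prop where
  isSection : S.IsSection E f x₀ N
  not_flat : ¬ N.IsFlatAt (f x₀)
  ne_bot : ∀ i, W i ≠ ⊥
  orthogonal : W 0 ⟂ W 1
  sup_eq : W 0 ⊔ W 1 = N.tangent (f x₀)
  invariant : ∀ i, N.IsHolonomyInvariant (f x₀) (W i)
  no_euclidean_part : ∀ w ∈ W 0, N.IsHolonomyFixed (f x₀) w → w = 0

end Immersed

/-! ### The parallel transport map and the lifted submanifold -/

/-- The Hilbert space `H⁰([0,1], 𝔤)` of square integrable paths in `𝔤`. -/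
abbrev H0 (_S : CompactSymmetricSpace 𝔸 𝔤) : Type _ :=
  Lp 𝔤 2 (volume.restrict (Icc (0 : ℝ) 1))

/-- `g` is the `H¹`-path in `G` with `g(0) = e` and `g⁻¹ g' = u`. -/
def IsTransport (u : S.H0) (g : ℝ → S.G) : Prop :=
  ContinuousOn g (Icc 0 1) ∧
  ∀ t ∈ Icc (0 : ℝ) 1, S.val (g t) = 1 + ∫ s in (0 : ℝ)..t, S.val (g s) * S.lie (u s)

open Classical in
/-- The parallel transport map `φ : H⁰([0,1], 𝔤) → G`, `φ(u) = g_u(1)`. -/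
def φ (u : S.H0) : S.G := if h : ∃ g, S.IsTransport u g then h.choose 1 else 1

/-- The composition `π ∘ φ : H⁰([0,1], 𝔤) → G/K`. -/
def πφ (u : S.H0) : S.Q := S.proj (S.φ u)

/-- The differential of `π ∘ φ` at `u`. -/
def dπφ (u : S.H0) : S.H0 →L[ℝ] 𝔤 := S.diff 𝓘(ℝ, S.H0) S.πφ u

/-- The horizontal lift to `u` of a tangent vector `v` of `G/K` at `(π ∘ φ)(u)`. -/
def hlift (u : S.H0) (v : 𝔤) : S.H0 :=
  Classical.epsilon fun n => n ∈ (LinearMap.ker (S.dπφ u).toLinearMap)ᗮ ∧ S.dπφ u n = v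

section Lift

variable (E : Type*) [NormedAddCommGroup E] [NormedSpace ℝ E]
  {M : Type*} [TopologicalSpace M] [ChartedSpace E M]

/-- The lift `M̃ = (π ∘ φ)⁻¹(M)`; since `f : M → G/K` need not be injective, a point of the
immersed submanifold `M̃` of `H⁰([0,1], 𝔤)` is a point `u` with a point of `M` over `(π ∘ φ)(u)`. -/
def lift (f : M → S.Q) : Set (M × S.H0) := {p | f p.1 = S.πφ p.2}

/-- The tangent space `T_u M̃`, the preimage of the tangent space of `M`. -/
def tangentLift (f : M → S.Q) (p : M × S.H0) : Submodule ℝ S.H0 :=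
  (S.tangentOf E f p.1).comap (S.dπφ p.2).toLinearMap

/-- The normal space `T^⊥_u M̃`. -/
def normalLift (f : M → S.Q) (p : M × S.H0) : Submodule ℝ S.H0 := (S.tangentLift E f p)ᗮ

/-- `c` is a curve in `M̃` with `c(0) = p`, differentiable at `0` with velocity `X` in
`H⁰([0,1], 𝔤)`. -/
def IsLiftCurve (f : M → S.Q) (p : M × S.H0) (c : ℝ → M × S.H0) (X : S.H0) : Prop :=
  (∀ t, c t ∈ S.lift f) ∧ c 0 = p ∧
  MDifferentiableAt 𝓘(ℝ, ℝ) 𝓘(ℝ, E) (fun t => (c t).1) 0 ∧ HasDerivAt (fun t => (c t).2) X 0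

/-- `A` is the shape operator `Ã_n` of `M̃` at `p`: for every normal field `η` along a curve in `M̃`
with velocity `X` and `η(0) = n`, the tangential part of the derivative of `η` is `-A X`. -/
def IsShapeOperator (f : M → S.Q) (p : M × S.H0) (n : S.H0) (A : S.H0 →L[ℝ] S.H0) : Prop :=
  (∀ X ∈ S.tangentLift E f p, A X ∈ S.tangentLift E f p) ∧
  ∀ c X (η : ℝ → S.H0) η', S.IsLiftCurve E f p c X → (∀ t, η t ∈ S.normalLift E f (c t)) →
    η 0 = n → HasDerivAt η η' 0 → η' + A X ∈ S.normalLift E f p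

open Classical in
/-- The shape tensor `Ã` of `M̃`; only its values on tangent vectors matter. -/
def shape (f : M → S.Q) (p : M × S.H0) (n : S.H0) : S.H0 →L[ℝ] S.H0 :=
  if h : ∃ A, S.IsShapeOperator E f p n A then h.choose else 0

/-- The horizontal lift `D̃^N` to the normal bundle of `M̃` of a subbundle `D` of the normal bundle
of `M`. -/
def DNLift (f : M → S.Q) (D : M → Submodule ℝ 𝔤) (p : M × S.H0) : Submodule ℝ S.H0 :=
  S.normalLift E f p ⊓ (D p.1).comap (S.dπφ p.2).toLinearMap

/-- The intersection in `T_u M̃` of the kernels of the operators `Ã_n`, `n ∈ V`. -/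
def shapeKer (f : M → S.Q) (p : M × S.H0) (V : Submodule ℝ S.H0) : Submodule ℝ S.H0 :=
  S.tangentLift E f p ⊓ ⨅ n ∈ V, LinearMap.ker (S.shape E f p n).toLinearMap

/-- `D̃^T_0`, the intersection of the kernels of `Ã_n` over all normal vectors `n`. -/
def DT0 (f : M → S.Q) (p : M × S.H0) : Submodule ℝ S.H0 :=
  S.shapeKer E f p (S.normalLift E f p)

/-- `D̃^T_j`, for the decomposition `D 0 ⊕ D 1` of the normal bundle of `M`: the intersection of
the kernels of `Ã_n` over `n ∈ D̃^N_k`, `k ≠ j`, minus `D̃^T_0`. Here `j + 1` is the index in `Fin 2`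
other than `j`. -/
def DT (f : M → S.Q) (D : Fin 2 → M → Submodule ℝ 𝔤) (j : Fin 2) (p : M × S.H0) :
    Submodule ℝ S.H0 :=
  S.shapeKer E f p (S.DNLift E f (D (j + 1)) p) ⊓ (S.DT0 E f p)ᗮ

/-- The horizontal lift `ν^L` to `M̃` of a normal vector field `ν` of `M`. -/
def fieldLift (ν : M → 𝔤) (p : M × S.H0) : S.H0 := S.hlift p.2 (ν p.1)

end Lift

end CompactSymmetricSpace

end

noncomputable section

/-! ### Exponentials in a real Banach algebra -/

section BanachAlgebra

variable {𝔸 : Type*} [NormedRing 𝔸] [NormedAlgebra ℝ 𝔸] [CompleteSpace 𝔸]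

theorem exp_add_smul_real (x : 𝔸) (s t : ℝ) :
    NormedSpace.exp ((s + t) • x) = NormedSpace.exp (s • x) * NormedSpace.exp (t • x) := by
  let _ : NormedAlgebra ℚ 𝔸 := NormedAlgebra.restrictScalars ℚ ℝ 𝔸
  rw [add_smul]
  exact NormedSpace.exp_add_of_commute (((Commute.refl x).smul_left s).smul_right t)

theorem exp_nsmul_real (x : 𝔸) (n : ℕ) :
    NormedSpace.exp x ^ n = NormedSpace.exp ((n : ℝ) • x) := by
  let _ : NormedAlgebra ℚ 𝔸 := NormedAlgebra.restrictScalars ℚ ℝ 𝔸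
  rw [Nat.cast_smul_eq_nsmul, NormedSpace.exp_nsmul]

theorem exp_units_conj_real (y : 𝔸ˣ) (x : 𝔸) :
    NormedSpace.exp (y * x * ↑y⁻¹ : 𝔸) = y * NormedSpace.exp x * ↑y⁻¹ := by
  let _ : NormedAlgebra ℚ 𝔸 := NormedAlgebra.restrictScalars ℚ ℝ 𝔸
  exact NormedSpace.exp_units_conj y x

theorem hasDerivAt_exp_smul_zero (x : 𝔸) :
    HasDerivAt (fun t : ℝ => NormedSpace.exp (t • x)) x 0 := by
  simpa using hasDerivAt_exp_smul_const (𝕂 := ℝ) x 0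

theorem continuous_exp_smul_real (x : 𝔸) : Continuous fun t : ℝ => NormedSpace.exp (t • x) :=
  continuous_iff_continuousAt.2 fun t => (hasDerivAt_exp_smul_const (𝕂 := ℝ) x t).continuousAt

theorem norm_pow_sub_pow_le {a b : 𝔸} {C C' : ℝ} {n : ℕ} (ha : ∀ j ≤ n, ‖a ^ j‖ ≤ C)
    (hb : ∀ j ≤ n, ‖b ^ j‖ ≤ C') : ‖a ^ n - b ^ n‖ ≤ n * (C * ‖a - b‖ * C') := by
  have hC : 0 ≤ C := (norm_nonneg _).trans (ha 0 (Nat.zero_le _))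
  have key : ∀ k m : ℕ, k + m ≤ n → ‖(a ^ k - b ^ k) * b ^ m‖ ≤ k * (C * ‖a - b‖ * C') := by
    intro k
    induction k with
    | zero => intro m _; simp
    | succ k ih =>
      intro m hm
      have e : (a ^ (k + 1) - b ^ (k + 1)) * b ^ m
          = a ^ k * (a - b) * b ^ m + (a ^ k - b ^ k) * b ^ (m + 1) := by
        rw [pow_succ, pow_succ, pow_succ' b m]; noncomm_ring
      rw [e]
      have h1 : ‖a ^ k * (a - b) * b ^ m‖ ≤ C * ‖a - b‖ * C' := by
        refine (norm_mul_le _ _).trans (mul_le_mul ((norm_mul_le _ _).trans ?_)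
          (hb m (by omega)) (norm_nonneg _) (by positivity))
        gcongr
        exact ha k (by omega)
      have h2 := ih (m + 1) (by omega)
      refine (norm_add_le _ _).trans ?_
      push_cast
      linarith
  simpa using key n 0 le_rfl

/-- Von Neumann's limit formula: `k(s/n)^n → exp (s k'(0))` for a curve through `1` whose powers
stay bounded. -/
theorem tendsto_pow_exp {k : ℝ → 𝔸} {A : 𝔸} (hk : HasDerivAt k A 0) (hk0 : k 0 = 1) {C : ℝ}
    (hC : ∀ (t : ℝ) (j : ℕ), ‖k t ^ j‖ ≤ C) (s : ℝ) :
    Tendsto (fun n : ℕ => k (s / n) ^ n) atTop (𝓝 (NormedSpace.exp (s • A))) := by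
  obtain ⟨C', hC'⟩ : ∃ C', ∀ t ∈ Icc (0 : ℝ) 1, ‖NormedSpace.exp (t • s • A)‖ ≤ C' :=
    isCompact_Icc.exists_bound_of_continuousOn (continuous_exp_smul_real (s • A)).continuousOn
  have hr : HasDerivAt (fun t : ℝ => k t - NormedSpace.exp (t • A)) 0 0 := by
    simpa using hk.fun_sub (hasDerivAt_exp_smul_zero A)
  have hr' := hr.isLittleO
  simp only [hk0, zero_smul, NormedSpace.exp_zero, sub_self, sub_zero, smul_zero] at hr'
  have hlim : Tendsto (fun n : ℕ => s / (n : ℝ)) atTop (𝓝 0) :=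
    tendsto_const_div_atTop_nhds_zero_nat s
  have h1 := hr'.comp_tendsto hlim
  have h2 : Tendsto (fun n : ℕ => (n : ℝ) * ‖k (s / n) - NormedSpace.exp ((s / n : ℝ) • A)‖)
      atTop (𝓝 0) := by
    have h3 : (fun n : ℕ => (n : ℝ) * ‖k (s / n) - NormedSpace.exp ((s / n : ℝ) • A)‖)
        =o[atTop] fun n : ℕ => (n : ℝ) * (s / n) :=
      (Asymptotics.isBigO_refl _ _).mul_isLittleO h1.norm_left
    have h4 : (fun n : ℕ => (n : ℝ) * (s / n)) =O[atTop] fun _ : ℕ => (1 : ℝ) := by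
      refine Asymptotics.IsBigO.of_bound |s| (Eventually.of_forall fun n => ?_)
      rcases eq_or_ne (n : ℝ) 0 with h | h
      · simp [h]
      · rw [mul_div_cancel₀ _ h]; simp
    exact (Asymptotics.isLittleO_one_iff ℝ).1 (h3.trans_isBigO h4)
  have h5 : Tendsto (fun n : ℕ => k (s / n) ^ n - NormedSpace.exp ((s / n : ℝ) • A) ^ n)
      atTop (𝓝 0) := by
    refine squeeze_zero_norm' (a := fun n : ℕ => C * C' *
      ((n : ℝ) * ‖k (s / n) - NormedSpace.exp ((s / n : ℝ) • A)‖)) ?_ (by simpa using h2.const_mul (C * C'))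
    filter_upwards [eventually_gt_atTop 0] with n hn
    have hn' : (n : ℝ) ≠ 0 := by positivity
    have := norm_pow_sub_pow_le (a := k (s / n)) (b := NormedSpace.exp ((s / n : ℝ) • A)) (n := n)
      (C := C) (C' := C') (fun j _ => hC _ _) (fun j hj => by
        rw [exp_nsmul_real, smul_smul]
        have := hC' ((j : ℝ) / n) ⟨by positivity, by
          rw [div_le_one (by positivity)]; exact_mod_cast hj⟩
        rwa [smul_smul, div_mul_eq_mul_div, mul_div_assoc] at this)
    refine this.trans (le_of_eq (by ring))
  have h6 : Tendsto (fun n : ℕ => NormedSpace.exp ((s / n : ℝ) • A) ^ n) atTop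
      (𝓝 (NormedSpace.exp (s • A))) := by
    refine tendsto_const_nhds.congr' ?_
    filter_upwards [eventually_gt_atTop 0] with n hn
    have hn' : (n : ℝ) ≠ 0 := by positivity
    rw [exp_nsmul_real, smul_smul, mul_div_cancel₀ _ hn']
  simpa using h5.add h6

end BanachAlgebra

namespace CompactSymmetricSpace

variable {𝔸 𝔤 : Type*} [NormedRing 𝔸] [NormedAlgebra ℝ 𝔸] [FiniteDimensional ℝ 𝔸]
  [NormedAddCommGroup 𝔤] [InnerProductSpace ℝ 𝔤] [FiniteDimensional ℝ 𝔤]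

variable (S : CompactSymmetricSpace 𝔸 𝔤)

/-! ### The group `G` -/

theorem val_mul (a b : S.G) : S.val (a * b) = S.val a * S.val b := by simp [val]

theorem val_one : S.val 1 = 1 := by simp [val]

theorem val_inv_mul (a : S.G) : S.val a⁻¹ * S.val a = 1 := by rw [← val_mul]; simp [val_one]

theorem val_mul_inv (a : S.G) : S.val a * S.val a⁻¹ = 1 := by rw [← val_mul]; simp [val_one]

theorem val_pow (a : S.G) (n : ℕ) : S.val (a ^ n) = S.val a ^ n := by simp [val]

theorem ringInverse_val (a : S.G) : Ring.inverse (S.val a) = S.val a⁻¹ := by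
  simp [val]

theorem val_injective : Function.Injective S.val := fun a b h => Subtype.ext (Units.ext h)

theorem isEmbedding_val : Topology.IsEmbedding S.val := by
  have := FiniteDimensional.complete ℝ 𝔸
  exact Units.isOpenEmbedding_val.isEmbedding.comp Topology.IsEmbedding.subtypeVal

theorem continuous_val : Continuous S.val := S.isEmbedding_val.continuous

theorem isCompact_range_val : IsCompact (range S.val) := by
  have : CompactSpace S.G := isCompact_iff_compactSpace.1 S.isCompact_G
  exact isCompact_range S.continuous_val

theorem exists_norm_val_le : ∃ C, 0 < C ∧ ∀ g, ‖S.val g‖ ≤ C := by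
  obtain ⟨C, hC⟩ := S.isCompact_range_val.isBounded.exists_norm_le
  exact ⟨max C 1, by positivity, fun g => (hC _ ⟨g, rfl⟩).trans (le_max_left _ _)⟩

theorem val_expG (ξ : 𝔤) : S.val (S.expG ξ) = NormedSpace.exp (S.lie ξ) := (S.exists_exp ξ).choose_spec

theorem expG_zero : S.expG 0 = 1 := S.val_injective (by
  rw [val_expG, map_zero, NormedSpace.exp_zero, val_one])

/-- The inclusion `𝔤 → 𝔸` as a continuous linear map. -/
def lieL : 𝔤 →L[ℝ] 𝔸 := LinearMap.toContinuousLinearMap S.lie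

theorem exists_lieInv : ∃ p : 𝔸 →ₗ[ℝ] 𝔤, p ∘ₗ S.lie = LinearMap.id :=
  S.lie.exists_leftInverse_of_injective (LinearMap.ker_eq_bot.2 S.lie_injective)

@[simp] theorem lieL_apply (ξ : 𝔤) : S.lieL ξ = S.lie ξ := rfl

/-- A linear retraction of the inclusion `𝔤 → 𝔸`. -/
def lieInv : 𝔸 →L[ℝ] 𝔤 := LinearMap.toContinuousLinearMap S.exists_lieInv.choose

@[simp] theorem lieInv_lie (ξ : 𝔤) : S.lieInv (S.lie ξ) = ξ :=
  LinearMap.congr_fun S.exists_lieInv.choose_spec ξ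

theorem lie_lieInv {A : 𝔸} (h : A ∈ LinearMap.range S.lie) : S.lie (S.lieInv A) = A := by
  obtain ⟨ξ, rfl⟩ := h
  rw [lieInv_lie]

theorem isClosed_range_lie : IsClosed (LinearMap.range S.lie : Set 𝔸) :=
  Submodule.closed_of_finiteDimensional _

/-- The velocity of a curve in `G` is a tangent vector of `G`. -/
theorem exists_velocity {g : ℝ → S.G} {A : 𝔸} (hg : HasDerivAt (fun t => S.val (g t)) A 0) :
    ∃ ξ, A = S.lie ξ * S.val (g 0) := by
  have := FiniteDimensional.complete ℝ 𝔸
  obtain ⟨C, -, hC⟩ := S.exists_norm_val_le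
  have hk : HasDerivAt (fun t => S.val (g t * (g 0)⁻¹)) (A * S.val (g 0)⁻¹) 0 := by
    simpa only [val_mul] using hg.mul_const (S.val (g 0)⁻¹)
  have hmem : A * S.val (g 0)⁻¹ ∈ LinearMap.range S.lie := by
    refine (S.mem_range_lie_iff _).2 fun s => ?_
    have := tendsto_pow_exp hk (by rw [mul_inv_cancel, val_one])
      (fun t j => by rw [← val_pow]; exact hC _) s
    simp only [← val_pow] at this
    obtain ⟨a, ha⟩ := S.isCompact_range_val.isClosed.mem_of_tendsto this
      (Eventually.of_forall fun n => ⟨_, rfl⟩)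
    exact ⟨a, ha⟩
  obtain ⟨ξ, hξ⟩ := hmem
  exact ⟨ξ, by rw [hξ, mul_assoc, val_inv_mul, mul_one]⟩

theorem lie_eq_of_exp_eq {ξ η : 𝔤} (h : ∀ t : ℝ, S.expG (t • ξ) = S.expG (t • η)) : ξ = η := by
  have := FiniteDimensional.complete ℝ 𝔸
  refine S.lie_injective ((hasDerivAt_exp_smul_zero (S.lie ξ)).unique ?_)
  refine (hasDerivAt_exp_smul_zero (S.lie η)).congr_of_eventuallyEq (Eventually.of_forall fun t => ?_)
  have := congrArg S.val (h t)
  simpa [val_expG] using this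

/-! ### The adjoint representation and the bracket -/

theorem conj_mem_range_lie (g : S.G) (ξ : 𝔤) :
    S.val g * S.lie ξ * S.val g⁻¹ ∈ LinearMap.range S.lie := by
  have := FiniteDimensional.complete ℝ 𝔸
  refine (S.mem_range_lie_iff _).2 fun t => ⟨g * S.expG (t • ξ) * g⁻¹, ?_⟩
  change S.val _ = _
  rw [val_mul, val_mul, val_expG, map_smul]
  have := exp_units_conj_real (g : 𝔸ˣ) (t • S.lie ξ)
  rw [mul_smul_comm, smul_mul_assoc] at this
  exact this.symm

/-- The adjoint representation of `G` on `𝔤`. -/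
def Ad (g : S.G) : 𝔤 →ₗ[ℝ] 𝔤 :=
  S.lieInv.toLinearMap ∘ₗ LinearMap.mulLeft ℝ (S.val g) ∘ₗ LinearMap.mulRight ℝ (S.val g⁻¹) ∘ₗ S.lie

theorem Ad_apply (g : S.G) (ξ : 𝔤) : S.Ad g ξ = S.lieInv (S.val g * S.lie ξ * S.val g⁻¹) := by
  simp [Ad, mul_assoc]

theorem lie_Ad (g : S.G) (ξ : 𝔤) : S.lie (S.Ad g ξ) = S.val g * S.lie ξ * S.val g⁻¹ := by
  rw [Ad_apply, S.lie_lieInv (S.conj_mem_range_lie g ξ)]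

theorem Ad_mul (a b : S.G) (ξ : 𝔤) : S.Ad (a * b) ξ = S.Ad a (S.Ad b ξ) := by
  apply S.lie_injective
  simp only [lie_Ad, mul_inv_rev, val_mul, mul_assoc]

theorem Ad_one (ξ : 𝔤) : S.Ad 1 ξ = ξ := by
  apply S.lie_injective
  simp [lie_Ad, val_one]

@[simp] theorem Ad_inv_Ad (a : S.G) (ξ : 𝔤) : S.Ad a⁻¹ (S.Ad a ξ) = ξ := by
  rw [← Ad_mul, inv_mul_cancel, Ad_one]

@[simp] theorem Ad_Ad_inv (a : S.G) (ξ : 𝔤) : S.Ad a (S.Ad a⁻¹ ξ) = ξ := by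
  rw [← Ad_mul, mul_inv_cancel, Ad_one]

theorem norm_Ad (g : S.G) (ξ : 𝔤) : ‖S.Ad g ξ‖ = ‖ξ‖ := S.norm_ad g ξ _ (S.lie_Ad g ξ)

theorem inner_Ad (g : S.G) (ξ η : 𝔤) : ⟪S.Ad g ξ, S.Ad g η⟫ = ⟪ξ, η⟫ :=
  LinearIsometry.inner_map_map ⟨S.Ad g, S.norm_Ad g⟩ ξ η

theorem hasDerivAt_Ad_expG (ξ η : 𝔤) :
    HasDerivAt (fun t : ℝ => S.lie (S.Ad (S.expG (t • ξ)) η)) (S.lie ξ * S.lie η - S.lie η * S.lie ξ) 0 := by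
  have := FiniteDimensional.complete ℝ 𝔸
  have h1 := hasDerivAt_exp_smul_zero (S.lie ξ)
  have h2 : HasDerivAt (fun t : ℝ => S.val (S.expG (t • ξ))⁻¹) (-S.lie ξ) 0 := by
    refine (hasDerivAt_exp_smul_zero (-S.lie ξ)).congr_of_eventuallyEq
      (Eventually.of_forall fun t => ?_)
    dsimp only
    have e : S.val (S.expG (t • ξ)) * NormedSpace.exp (t • -S.lie ξ) = 1 := by
      rw [val_expG, map_smul, smul_neg, ← neg_smul, ← exp_add_smul_real]
      simp
    calc S.val (S.expG (t • ξ))⁻¹ = S.val (S.expG (t • ξ))⁻¹ *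
          (S.val (S.expG (t • ξ)) * NormedSpace.exp (t • -S.lie ξ)) := by rw [e, mul_one]
      _ = _ := by rw [← mul_assoc, val_inv_mul, one_mul]
  have h3 := (h1.mul_const (S.lie η)).fun_mul h2
  have e : ∀ t : ℝ, S.lie (S.Ad (S.expG (t • ξ)) η)
      = NormedSpace.exp (t • S.lie ξ) * S.lie η * S.val (S.expG (t • ξ))⁻¹ := fun t => by
    rw [lie_Ad, val_expG, map_smul]
  simp only [e]
  convert h3 using 1
  simp [S.expG_zero, val_one, sub_eq_add_neg]

theorem commutator_mem_range_lie (ξ η : 𝔤) :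
    S.lie ξ * S.lie η - S.lie η * S.lie ξ ∈ LinearMap.range S.lie := by
  have h := (S.hasDerivAt_Ad_expG ξ η).tendsto_slope
  refine S.isClosed_range_lie.mem_of_tendsto h (Eventually.of_forall fun t => ?_)
  rw [slope_def_module]
  exact Submodule.smul_mem _ _ (Submodule.sub_mem _ ⟨_, rfl⟩ ⟨_, rfl⟩)

/-- The Lie bracket of `𝔤`. -/
def br : 𝔤 →L[ℝ] 𝔤 →L[ℝ] 𝔤 :=
  (LinearMap.mk₂ ℝ (fun ξ η => S.lieInv (S.lie ξ * S.lie η - S.lie η * S.lie ξ))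
    (fun a b c => by rw [← map_add, map_add]; congr 1; noncomm_ring)
    (fun r a b => by
      rw [← map_smul, map_smul, smul_mul_assoc, mul_smul_comm, smul_sub])
    (fun a b c => by rw [← map_add, map_add]; congr 1; noncomm_ring)
    (fun r a b => by
      rw [← map_smul, map_smul, smul_mul_assoc, mul_smul_comm, smul_sub])).toContinuousBilinearMap

theorem br_apply (ξ η : 𝔤) : S.br ξ η = S.lieInv (S.lie ξ * S.lie η - S.lie η * S.lie ξ) := rfl

theorem lie_br (ξ η : 𝔤) : S.lie (S.br ξ η) = S.lie ξ * S.lie η - S.lie η * S.lie ξ := by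
  rw [br_apply, S.lie_lieInv (S.commutator_mem_range_lie ξ η)]

theorem br_swap (ξ η : 𝔤) : S.br ξ η = -S.br η ξ := by
  apply S.lie_injective
  rw [map_neg, lie_br, lie_br, neg_sub]

theorem br_jacobi (ξ η ζ : 𝔤) :
    S.br ξ (S.br η ζ) = S.br (S.br ξ η) ζ + S.br η (S.br ξ ζ) := by
  apply S.lie_injective
  simp only [map_add, lie_br]
  noncomm_ring

theorem Ad_br (g : S.G) (ξ η : 𝔤) : S.Ad g (S.br ξ η) = S.br (S.Ad g ξ) (S.Ad g η) := by
  apply S.lie_injective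
  simp only [lie_Ad, lie_br]
  have h : ∀ x y : 𝔸, S.val g * x * S.val g⁻¹ * (S.val g * y * S.val g⁻¹)
      = S.val g * (x * y) * S.val g⁻¹ := fun x y => by
    calc _ = S.val g * x * (S.val g⁻¹ * S.val g) * y * S.val g⁻¹ := by noncomm_ring
      _ = _ := by rw [val_inv_mul]; noncomm_ring
  rw [h, h, mul_sub, sub_mul]

theorem hasDerivAt_Ad_expG_br (ξ η : 𝔤) :
    HasDerivAt (fun t : ℝ => S.Ad (S.expG (t • ξ)) η) (S.br ξ η) 0 := by
  refine (S.lieInv.hasFDerivAt.comp_hasDerivAt (0 : ℝ)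
    (S.hasDerivAt_Ad_expG ξ η)).congr_of_eventuallyEq (Eventually.of_forall fun t => ?_)
  simp

theorem inner_br_left (ξ η ζ : 𝔤) : ⟪S.br ξ η, ζ⟫ = -⟪η, S.br ξ ζ⟫ := by
  have h := (S.hasDerivAt_Ad_expG_br ξ η).inner ℝ (S.hasDerivAt_Ad_expG_br ξ ζ)
  simp only [inner_Ad, zero_smul, expG_zero, Ad_one] at h
  have := h.unique (hasDerivAt_const (0 : ℝ) _)
  linarith

theorem expG_Ad (g : S.G) (ξ : 𝔤) : S.expG (S.Ad g ξ) = g * S.expG ξ * g⁻¹ := by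
  have := FiniteDimensional.complete ℝ 𝔸
  apply S.val_injective
  rw [val_expG, lie_Ad, val_mul, val_mul, val_expG]
  exact exp_units_conj_real (g : 𝔸ˣ) _

theorem θ_expG (ξ : 𝔤) : S.θ (S.expG ξ) = S.expG (S.dθ ξ) :=
  S.θ_exp ξ _ _ (S.val_expG ξ) (S.val_expG _)

@[simp] theorem dθ_dθ (ξ : 𝔤) : S.dθ (S.dθ ξ) = ξ := by
  refine S.lie_eq_of_exp_eq fun t => ?_
  rw [← map_smul, ← map_smul, ← θ_expG, ← θ_expG, S.θ_involutive]

theorem dθ_Ad (a : S.G) (η : 𝔤) : S.dθ (S.Ad a η) = S.Ad (S.θ a) (S.dθ η) := by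
  refine S.lie_eq_of_exp_eq fun t => ?_
  rw [← map_smul, ← map_smul, ← map_smul, ← map_smul, ← θ_expG, expG_Ad, expG_Ad, map_mul, map_mul,
    map_inv, θ_expG]

theorem dθ_br (ξ η : 𝔤) : S.dθ (S.br ξ η) = S.br (S.dθ ξ) (S.dθ η) := by
  have h1 := S.dθ.toContinuousLinearMap.hasFDerivAt.comp_hasDerivAt (0 : ℝ)
    (S.hasDerivAt_Ad_expG_br ξ η)
  refine h1.unique ((S.hasDerivAt_Ad_expG_br (S.dθ ξ) (S.dθ η)).congr_of_eventuallyEq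
    (Eventually.of_forall fun t => ?_))
  simp [dθ_Ad, θ_expG]

theorem inner_dθ (ξ η : 𝔤) : ⟪S.dθ ξ, S.dθ η⟫ = ⟪ξ, η⟫ := S.dθ.inner_map_map ξ η

/-! ### The isotropy algebras and the tangent spaces of `G/K` -/

theorem continuous_expG_smul (ξ : 𝔤) : Continuous fun t : ℝ => S.expG (t • ξ) := by
  have := FiniteDimensional.complete ℝ 𝔸
  rw [S.isEmbedding_val.continuous_iff]
  refine (continuous_exp_smul_real (S.lie ξ)).congr fun t => ?_
  simp [val_expG]

theorem θ_eq_of_mem_K {k : S.G} (hk : k ∈ S.K) : S.θ k = k := by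
  have : k ∈ (S.K : Set S.G) := hk
  rw [S.K_eq] at this
  exact connectedComponentIn_subset {g : S.G | S.θ g = g} _ this

theorem forall_expG_mem_K_iff (ζ : 𝔤) : (∀ t : ℝ, S.expG (t • ζ) ∈ S.K) ↔ S.dθ ζ = ζ := by
  constructor
  · intro h
    refine S.lie_eq_of_exp_eq fun t => ?_
    rw [← map_smul, ← θ_expG, S.θ_eq_of_mem_K (h t)]
  · intro h t
    change _ ∈ (S.K : Set S.G)
    rw [S.K_eq]
    have hpre : IsPreconnected (range fun t : ℝ => S.expG (t • ζ)) :=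
      isPreconnected_range (S.continuous_expG_smul ζ)
    refine hpre.subset_connectedComponentIn ⟨0, by simp [expG_zero]⟩ ?_ ⟨t, rfl⟩
    rintro _ ⟨s, rfl⟩
    change S.θ _ = _
    rw [θ_expG, map_smul, h]

theorem mem_isotropy_proj (g : S.G) (ζ : 𝔤) :
    ζ ∈ S.isotropy (S.proj g) ↔ S.dθ (S.Ad g⁻¹ ζ) = S.Ad g⁻¹ ζ := by
  let F : Submodule ℝ 𝔤 :=
    LinearMap.eqLocus (S.dθ.toLinearMap ∘ₗ S.Ad g⁻¹) (S.Ad g⁻¹)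
  have hF : {ζ : 𝔤 | ∀ t : ℝ, S.expG (t • ζ) • S.proj g = S.proj g} = (F : Set 𝔤) := by
    ext ζ
    change (∀ t : ℝ, S.expG (t • ζ) • S.proj g = S.proj g) ↔ S.dθ (S.Ad g⁻¹ ζ) = S.Ad g⁻¹ ζ
    rw [← forall_expG_mem_K_iff]
    refine forall_congr' fun t => ?_
    rw [← map_smul, expG_Ad, inv_inv, eq_comm]
    change (QuotientGroup.mk g = QuotientGroup.mk (S.expG (t • ζ) * g)) ↔ _
    rw [QuotientGroup.eq, mul_assoc]
  rw [isotropy, hF, Submodule.span_eq]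
  rfl

theorem mem_tangent_proj (g : S.G) (ξ : 𝔤) :
    ξ ∈ S.tangent (S.proj g) ↔ S.dθ (S.Ad g⁻¹ ξ) = -S.Ad g⁻¹ ξ := by
  rw [tangent, Submodule.mem_orthogonal]
  constructor
  · intro h
    set w := S.Ad g⁻¹ ξ
    have h1 := h (S.Ad g (w + S.dθ w)) ((S.mem_isotropy_proj g _).2 (by
      rw [Ad_inv_Ad, map_add, dθ_dθ, add_comm]))
    have h2 : ⟪w + S.dθ w, w⟫ = 0 := by
      rw [← h1, ← S.inner_Ad g]
      simp [w]
    have h3 : ⟪w + S.dθ w, S.dθ w⟫ = 0 := by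
      rw [← S.inner_dθ, map_add, dθ_dθ, add_comm]; exact h2
    have h4 : ⟪w + S.dθ w, w + S.dθ w⟫ = 0 := by rw [inner_add_right, h2, h3, add_zero]
    exact eq_neg_of_add_eq_zero_right (inner_self_eq_zero.1 h4)
  · intro h ζ hζ
    rw [mem_isotropy_proj] at hζ
    have h1 := S.inner_dθ (S.Ad g⁻¹ ζ) (S.Ad g⁻¹ ξ)
    rw [h, hζ, inner_neg_right, inner_Ad] at h1
    linarith

theorem proj_surjective : Function.Surjective S.proj := QuotientGroup.mk_surjective

variable {S}

theorem br_mem_isotropy {x : S.Q} {ξ η : 𝔤} (hξ : ξ ∈ S.tangent x) (hη : η ∈ S.tangent x) :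
    S.br ξ η ∈ S.isotropy x := by
  obtain ⟨g, rfl⟩ := S.proj_surjective x
  rw [mem_tangent_proj] at *
  rw [mem_isotropy_proj, Ad_br, dθ_br, hξ, hη]
  simp

theorem br_isotropy_mem_tangent {x : S.Q} {ξ η : 𝔤} (hξ : ξ ∈ S.isotropy x)
    (hη : η ∈ S.tangent x) : S.br ξ η ∈ S.tangent x := by
  obtain ⟨g, rfl⟩ := S.proj_surjective x
  rw [mem_tangent_proj] at *
  rw [mem_isotropy_proj] at hξ
  rw [Ad_br, dθ_br, hξ, hη]
  simp

theorem br_isotropy_mem_isotropy {x : S.Q} {ξ η : 𝔤} (hξ : ξ ∈ S.isotropy x)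
    (hη : η ∈ S.isotropy x) : S.br ξ η ∈ S.isotropy x := by
  obtain ⟨g, rfl⟩ := S.proj_surjective x
  rw [mem_isotropy_proj] at *
  rw [Ad_br, dθ_br, hξ, hη]

theorem inner_isotropy_tangent {x : S.Q} {ζ ξ : 𝔤} (hζ : ζ ∈ S.isotropy x)
    (hξ : ξ ∈ S.tangent x) : ⟪ζ, ξ⟫ = 0 := Submodule.inner_right_of_mem_orthogonal hζ hξ

theorem inner_tangent_isotropy {x : S.Q} {ζ ξ : 𝔤} (hζ : ζ ∈ S.isotropy x)
    (hξ : ξ ∈ S.tangent x) : ⟪ξ, ζ⟫ = 0 := Submodule.inner_left_of_mem_orthogonal hζ hξ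

theorem eq_zero_of_mem_tangent_of_mem_isotropy {x : S.Q} {ξ : 𝔤} (h : ξ ∈ S.tangent x)
    (h' : ξ ∈ S.isotropy x) : ξ = 0 := inner_self_eq_zero.1 (inner_isotropy_tangent h' h)

variable (S)

/-- The orthogonal projection of `𝔤` to the tangent space of `G/K` at `gK`. -/
def tanProj (g : S.G) : 𝔤 →ₗ[ℝ] 𝔤 :=
  S.Ad g ∘ₗ ((1 / 2 : ℝ) • (LinearMap.id - S.dθ.toLinearMap)) ∘ₗ S.Ad g⁻¹

theorem tanProj_apply (g : S.G) (ξ : 𝔤) :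
    S.tanProj g ξ = S.Ad g ((1 / 2 : ℝ) • (S.Ad g⁻¹ ξ - S.dθ (S.Ad g⁻¹ ξ))) := rfl

theorem tanProj_mem (g : S.G) (ξ : 𝔤) : S.tanProj g ξ ∈ S.tangent (S.proj g) := by
  rw [mem_tangent_proj, tanProj_apply, Ad_inv_Ad, map_smul, map_sub, dθ_dθ, ← smul_neg, neg_sub]

theorem sub_tanProj_mem (g : S.G) (ξ : 𝔤) : ξ - S.tanProj g ξ ∈ S.isotropy (S.proj g) := by
  rw [mem_isotropy_proj, map_sub, tanProj_apply, Ad_inv_Ad, map_sub, map_smul, map_sub, dθ_dθ]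
  module

end CompactSymmetricSpace
end

noncomputable section

/-! ### Curves through a point of a manifold -/

section ChartCurve

variable {F : Type*} [NormedAddCommGroup F] [NormedSpace ℝ F]
  {P : Type*} [TopologicalSpace P] [ChartedSpace F P]

/-- The curve through `p` that is the straight line with velocity `X` in the chart at `p`. -/
def chartCurve (p : P) (X : F) (t : ℝ) : P := (chartAt F p).symm (chartAt F p p + t • X)

theorem chartCurve_zero (p : P) (X : F) : chartCurve p X 0 = p := by
  simp [chartCurve]

theorem tendsto_chartCurve (p : P) (X : F) : Tendsto (chartCurve p X) (𝓝 0) (𝓝 p) := by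
  have h1 : ContinuousAt (chartAt F p).symm (chartAt F p p + (0 : ℝ) • X) := by
    rw [zero_smul, add_zero]
    exact (chartAt F p).continuousAt_symm (mem_chart_target F p)
  have h2 : ContinuousAt (fun t : ℝ => chartAt F p p + t • X) 0 := by fun_prop
  have h3 : ContinuousAt (chartCurve p X) 0 :=
    ContinuousAt.comp (f := fun t : ℝ => chartAt F p p + t • X) h1 h2
  have := h3.tendsto
  rwa [chartCurve_zero] at this

theorem HasMFDerivAt.hasDerivAt_chartCurve {V : Type*} [NormedAddCommGroup V] [NormedSpace ℝ V]
    {f : P → V} {p : P} {f' : TangentSpace 𝓘(ℝ, F) p →L[ℝ] V}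
    (h : HasMFDerivAt 𝓘(ℝ, F) 𝓘(ℝ, V) f p f') (X : F) :
    HasDerivAt (fun t => f (chartCurve p X t)) (f' X) 0 := by
  have h1 := h.2
  rw [ModelWithCorners.range_eq_univ] at h1
  let g : F →L[ℝ] V := f'
  have h1' : HasFDerivAt (fun y => f ((chartAt F p).symm y)) g (chartAt F p p) :=
    hasFDerivWithinAt_univ.1 h1
  have h2 : HasDerivAt (fun t : ℝ => chartAt F p p + t • X) X 0 := by
    simpa using ((hasDerivAt_id (0 : ℝ)).smul_const X).const_add (chartAt F p p)
  have h3 := HasFDerivAt.comp_hasDerivAt (x := (0 : ℝ)) (f := fun t : ℝ => chartAt F p p + t • X)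
    (l := fun y => f ((chartAt F p).symm y)) (l' := g) (by simpa using h1') h2
  exact h3

end ChartCurve

namespace CompactSymmetricSpace

variable {𝔸 𝔤 : Type*} [NormedRing 𝔸] [NormedAlgebra ℝ 𝔸] [FiniteDimensional ℝ 𝔸]
  [NormedAddCommGroup 𝔤] [InnerProductSpace ℝ 𝔤] [FiniteDimensional ℝ 𝔤]

variable {S : CompactSymmetricSpace 𝔸 𝔤}

/-! ### Differentials of maps to `G/K` -/

theorem hasDerivAt_val_inv {h : ℝ → S.G} {w : 𝔤} {t : ℝ}
    (hh : HasDerivAt (fun t => S.val (h t)) (S.lie w * S.val (h t)) t) :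
    HasDerivAt (fun t => S.val (h t)⁻¹) (-(S.val (h t)⁻¹ * S.lie w)) t := by
  have := FiniteDimensional.complete ℝ 𝔸
  have h1 := (hasFDerivAt_ringInverse (𝕜 := ℝ) (h t : 𝔸ˣ)).comp_hasDerivAt t hh
  have e : (Ring.inverse ∘ fun t => S.val (h t)) = fun t => S.val (h t)⁻¹ := by
    ext s
    exact S.ringInverse_val (h s)
  rw [e] at h1
  have e' : -(S.val (h t)⁻¹ * (S.lie w * S.val (h t)) * S.val (h t)⁻¹)
      = -(S.val (h t)⁻¹ * S.lie w) := by
    rw [mul_assoc, mul_assoc, val_mul_inv, mul_one]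
  rw [← e']
  exact h1

/-- Two curves in `G` over the same curve in `G/K` have velocities that differ by an element of the
isotropy algebra. -/
theorem velocity_sub_mem_isotropy {h₁ h₂ : ℝ → S.G} {w₁ w₂ : 𝔤}
    (e : ∀ᶠ t in 𝓝 (0 : ℝ), S.proj (h₁ t) = S.proj (h₂ t))
    (d₁ : HasDerivAt (fun t => S.val (h₁ t)) (S.lie w₁ * S.val (h₁ 0)) 0)
    (d₂ : HasDerivAt (fun t => S.val (h₂ t)) (S.lie w₂ * S.val (h₂ 0)) 0) :
    w₂ - w₁ ∈ S.isotropy (S.proj (h₁ 0)) := by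
  have := FiniteDimensional.complete ℝ 𝔸
  obtain ⟨C, -, hC⟩ := S.exists_norm_val_le
  rw [mem_isotropy_proj]
  set κ := S.Ad (h₁ 0)⁻¹ (w₂ - w₁) with hκ
  let k : ℝ → S.G := fun t => (h₁ t)⁻¹ * h₂ t * ((h₁ 0)⁻¹ * h₂ 0)⁻¹
  have hk : HasDerivAt (fun t => S.val (k t)) (S.lie κ) 0 := by
    have h1 := ((hasDerivAt_val_inv d₁).fun_mul d₂).mul_const (S.val ((h₁ 0)⁻¹ * h₂ 0)⁻¹)
    simp only [k, val_mul]
    convert h1 using 1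
    rw [hκ, lie_Ad, map_sub, mul_inv_rev, inv_inv, val_mul]
    have h3 := S.val_mul_inv (h₂ 0)
    calc S.val (h₁ 0)⁻¹ * (S.lie w₂ - S.lie w₁) * S.val (h₁ 0)
        = (-(S.val (h₁ 0)⁻¹ * S.lie w₁) + S.val (h₁ 0)⁻¹ * S.lie w₂) * 1 * S.val (h₁ 0) := by
          noncomm_ring
      _ = _ := by rw [← h3]; noncomm_ring
  have hk0 : k 0 = 1 := by simp [k]
  have hkK : ∀ᶠ t in 𝓝 (0 : ℝ), k t ∈ S.K := by
    filter_upwards [e] with t ht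
    have h0 := e.self_of_nhds
    exact S.K.mul_mem (QuotientGroup.eq.1 ht) (S.K.inv_mem (QuotientGroup.eq.1 h0))
  rw [← forall_expG_mem_K_iff] 
  have hfix : ∀ s : ℝ, S.θ (S.expG (s • κ)) = S.expG (s • κ) := by
    intro s
    have hlim := tendsto_pow_exp hk (by rw [hk0, val_one])
      (fun t j => by rw [← val_pow]; exact hC _) s
    have hlim' : Tendsto (fun n : ℕ => k (s / n) ^ n) atTop (𝓝 (S.expG (s • κ))) := by
      rw [S.isEmbedding_val.tendsto_nhds_iff, val_expG, map_smul]
      simpa [Function.comp_def, val_pow] using hlim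
    have hθ := (S.continuous_θ.tendsto _).comp hlim'
    refine tendsto_nhds_unique hθ (hlim'.congr' ?_)
    filter_upwards [(tendsto_const_div_atTop_nhds_zero_nat s).eventually hkK] with n hn
    simp [S.θ_eq_of_mem_K hn]
  rw [forall_expG_mem_K_iff]
  refine S.lie_eq_of_exp_eq fun t => ?_
  rw [← map_smul, ← θ_expG, hfix]

section

variable {F : Type*} [NormedAddCommGroup F] [NormedSpace ℝ F]
  {P : Type*} [TopologicalSpace P] [ChartedSpace F P]

theorem IsDifferentialAt.unique {f : P → S.Q} {p : P} {L L' : TangentSpace 𝓘(ℝ, F) p →L[ℝ] 𝔤}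
    (h : S.IsDifferentialAt 𝓘(ℝ, F) f p L) (h' : S.IsDifferentialAt 𝓘(ℝ, F) f p L') : L = L' := by
  obtain ⟨a, a', ha, hda, hL⟩ := h
  obtain ⟨b, b', hb, hdb, hL'⟩ := h'
  refine ContinuousLinearMap.ext fun (X : F) => ?_
  obtain ⟨hLX, ζ, hζ, e⟩ := hL X
  obtain ⟨hLX', ζ', hζ', e'⟩ := hL' X
  have da := hda.hasDerivAt_chartCurve X
  have db := hdb.hasDerivAt_chartCurve X
  have ev : ∀ᶠ t in 𝓝 (0 : ℝ), S.proj (a (chartCurve p X t)) = S.proj (b (chartCurve p X t)) :=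
    (tendsto_chartCurve p X).eventually (p := fun q => S.proj (a q) = S.proj (b q))
      (by filter_upwards [ha, hb] with q h1 h2; rw [h1, h2])
  rw [e] at da
  rw [e'] at db
  have key := velocity_sub_mem_isotropy (h₁ := fun t => a (chartCurve p X t))
    (h₂ := fun t => b (chartCurve p X t)) (w₁ := L X + ζ) (w₂ := L' X + ζ') ev
    (by simpa [chartCurve_zero] using da) (by simpa [chartCurve_zero] using db)
  simp only [chartCurve_zero, ha.self_of_nhds] at key
  have h0 : L X - L' X = 0 := by
    refine eq_zero_of_mem_tangent_of_mem_isotropy (Submodule.sub_mem _ hLX hLX') ?_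
    have := Submodule.sub_mem _ (Submodule.sub_mem _ hζ' hζ) key
    convert this using 1
    abel
  exact sub_eq_zero.1 h0

theorem IsDifferentialAt.diff_eq {f : P → S.Q} {p : P} {L : TangentSpace 𝓘(ℝ, F) p →L[ℝ] 𝔤}
    (h : S.IsDifferentialAt 𝓘(ℝ, F) f p L) : S.diff 𝓘(ℝ, F) f p = L := by
  have hex : ∃ L, S.IsDifferentialAt 𝓘(ℝ, F) f p L := ⟨L, h⟩
  rw [diff, dif_pos hex]
  exact hex.choose_spec.unique h

variable (S) in
/-- The differential of `π ∘ h` in terms of the derivative of `h : P → G ⊆ 𝔸`. -/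
def diffOfLift (a : S.G) (h' : F →L[ℝ] 𝔸) : F →L[ℝ] 𝔤 :=
  (LinearMap.toContinuousLinearMap (S.tanProj a)) ∘L S.lieInv ∘L
    ((ContinuousLinearMap.mul ℝ 𝔸).flip (S.val a⁻¹)) ∘L h'

theorem diffOfLift_apply (a : S.G) (h' : F →L[ℝ] 𝔸) (X : F) :
    S.diffOfLift a h' X = S.tanProj a (S.lieInv (h' X * S.val a⁻¹)) := rfl

theorem exists_lie_of_hasMFDerivAt {h : P → S.G} {p : P} {h' : TangentSpace 𝓘(ℝ, F) p →L[ℝ] 𝔸}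
    (hh : HasMFDerivAt 𝓘(ℝ, F) 𝓘(ℝ, 𝔸) (fun q => S.val (h q)) p h') (X : TangentSpace 𝓘(ℝ, F) p) :
    h' X = S.lie (S.lieInv (h' X * S.val (h p)⁻¹)) * S.val (h p) := by
  let Y : F := X
  obtain ⟨ξ, hξ⟩ := S.exists_velocity (g := fun t => h (chartCurve p Y t))
    (hh.hasDerivAt_chartCurve Y)
  rw [chartCurve_zero] at hξ
  have hξ' : h' X = S.lie ξ * S.val (h p) := hξ
  rw [hξ', mul_assoc, val_mul_inv, mul_one, lieInv_lie]

theorem isDifferentialAt_of_lift {f : P → S.Q} {h : P → S.G} {p : P}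
    {h' : TangentSpace 𝓘(ℝ, F) p →L[ℝ] 𝔸}
    (hh : HasMFDerivAt 𝓘(ℝ, F) 𝓘(ℝ, 𝔸) (fun q => S.val (h q)) p h')
    (hf : ∀ᶠ q in 𝓝 p, S.proj (h q) = f q) :
    S.IsDifferentialAt 𝓘(ℝ, F) f p (S.diffOfLift (F := F) (h p) h') := by
  refine ⟨h, h', hf, hh, fun X => ⟨?_,
    S.lieInv (h' X * S.val (h p)⁻¹) - S.tanProj (h p) (S.lieInv (h' X * S.val (h p)⁻¹)), ?_, ?_⟩⟩
  · rw [← hf.self_of_nhds]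
    exact S.tanProj_mem _ _
  · rw [← hf.self_of_nhds]
    exact S.sub_tanProj_mem _ _
  · refine (exists_lie_of_hasMFDerivAt hh X).trans ?_
    congr 2
    exact (add_sub_cancel _ _).symm

theorem IsSmoothOn.isDifferentialAt {f : P → S.Q} {U : Set P} (hf : S.IsSmoothOn 𝓘(ℝ, F) f U)
    {p : P} (hp : p ∈ U) : S.IsDifferentialAt 𝓘(ℝ, F) f p (S.diff 𝓘(ℝ, F) f p) := by
  obtain ⟨V, hV, hpV, h, hh, hproj⟩ := hf p hp
  have h1 : MDifferentiableAt 𝓘(ℝ, F) 𝓘(ℝ, 𝔸) (fun q => S.val (h q)) p :=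
    ((hh p hpV).contMDiffAt (hV.mem_nhds hpV)).mdifferentiableAt (by simp)
  have h2 := isDifferentialAt_of_lift h1.hasMFDerivAt
    (f := f) (by filter_upwards [hV.mem_nhds hpV] with q hq using hproj q hq)
  rw [h2.diff_eq]
  exact h2

theorem IsDifferentialAt.mem_tangent {f : P → S.Q} {p : P} {L : TangentSpace 𝓘(ℝ, F) p →L[ℝ] 𝔤}
    (h : S.IsDifferentialAt 𝓘(ℝ, F) f p L) (X) : L X ∈ S.tangent (f p) := by
  obtain ⟨a, a', ha, hda, hL⟩ := h
  exact (hL X).1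

theorem IsDifferentialAt.comp_curve {f : P → S.Q} {c : ℝ → P} {L : TangentSpace 𝓘(ℝ, F) (c 0) →L[ℝ] 𝔤}
    (h : S.IsDifferentialAt 𝓘(ℝ, F) f (c 0) L)
    {c' : TangentSpace 𝓘(ℝ, ℝ) (0 : ℝ) →L[ℝ] TangentSpace 𝓘(ℝ, F) (c 0)}
    (hc : HasMFDerivAt 𝓘(ℝ, ℝ) 𝓘(ℝ, F) c 0 c') :
    S.IsDifferentialAt 𝓘(ℝ, ℝ) (fun t => f (c t)) 0 (L ∘L c') := by
  obtain ⟨a, a', ha, hda, hL⟩ := h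
  exact ⟨fun t => a (c t), a' ∘L c', hc.continuousAt.eventually ha,
    HasMFDerivAt.comp (g := fun q => S.val (a q)) (0 : ℝ) hda hc, fun X => hL (c' X)⟩

end

theorem hasDerivAt_Ad_inv {h : ℝ → S.G} {w : 𝔤} {ξ : ℝ → 𝔤} {ξ' : 𝔤}
    (hh : HasDerivAt (fun t => S.val (h t)) (S.lie w * S.val (h 0)) 0) (hξ : HasDerivAt ξ ξ' 0) :
    HasDerivAt (fun t => S.Ad (h t)⁻¹ (ξ t)) (S.Ad (h 0)⁻¹ (ξ' - S.br w (ξ 0))) 0 := by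
  have h1 : HasDerivAt (fun t => S.lie (ξ t)) (S.lie ξ') 0 :=
    S.lieL.hasFDerivAt.comp_hasDerivAt (0 : ℝ) hξ
  have h2 := S.lieInv.hasFDerivAt.comp_hasDerivAt (0 : ℝ) (((hasDerivAt_val_inv hh).fun_mul h1).fun_mul hh)
  have e : (fun t => S.Ad (h t)⁻¹ (ξ t)) =
      S.lieInv ∘ fun t => S.val (h t)⁻¹ * S.lie (ξ t) * S.val (h t) := by
    ext t
    simp [Ad_apply]
  rw [e]
  convert h2 using 1
  rw [Ad_apply, inv_inv, map_sub, lie_br]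
  congr 1
  noncomm_ring

theorem IsDifferentialAt.exists_hasDerivAt {c : ℝ → S.Q} {c' : ℝ →L[ℝ] 𝔤}
    (hc : S.IsDifferentialAt 𝓘(ℝ, ℝ) c 0 c') :
    ∃ (a : ℝ → S.G) (ζ : 𝔤), (∀ᶠ t in 𝓝 (0 : ℝ), S.proj (a t) = c t) ∧ ζ ∈ S.isotropy (c 0) ∧
      HasDerivAt (fun t => S.val (a t)) (S.lie (c' 1 + ζ) * S.val (a 0)) 0 := by
  obtain ⟨a, a', ha, hda, hL⟩ := hc
  obtain ⟨-, ζ, hζ, e⟩ := hL (1 : ℝ)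
  let b : ℝ →L[ℝ] 𝔸 := a'
  have hda' : HasFDerivAt (fun t => S.val (a t)) b 0 := hasMFDerivAt_iff_hasFDerivAt.1 hda
  have e' : b 1 = S.lie (c' 1 + ζ) * S.val (a 0) := e
  refine ⟨a, ζ, ha, hζ, ?_⟩
  rw [← e']
  exact hda'.hasDerivAt

/-- The covariant derivative of a vector field of `G/K` along a curve. -/
theorem deriv_sub_br_mem_tangent {c : ℝ → S.Q} {c' : ℝ →L[ℝ] 𝔤}
    (hc : S.IsDifferentialAt 𝓘(ℝ, ℝ) c 0 c') {ξ : ℝ → 𝔤} {ξ' : 𝔤}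
    (hξ : ∀ᶠ t in 𝓝 (0 : ℝ), ξ t ∈ S.tangent (c t)) (hd : HasDerivAt ξ ξ' 0) :
    ξ' - S.br (c' 1) (ξ 0) ∈ S.tangent (c 0) := by
  obtain ⟨a, ζ, ha, hζ, hda'⟩ := hc.exists_hasDerivAt
  have hz := hasDerivAt_Ad_inv hda' hd
  have hz1 : HasDerivAt (fun t => S.dθ (S.Ad (a t)⁻¹ (ξ t)))
      (S.dθ (S.Ad (a 0)⁻¹ (ξ' - S.br (c' 1 + ζ) (ξ 0)))) 0 :=
    S.dθ.toContinuousLinearMap.hasFDerivAt.comp_hasDerivAt (0 : ℝ) hz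
  have hz2 : S.dθ (S.Ad (a 0)⁻¹ (ξ' - S.br (c' 1 + ζ) (ξ 0)))
      = -S.Ad (a 0)⁻¹ (ξ' - S.br (c' 1 + ζ) (ξ 0)) := by
    refine hz1.unique (hz.fun_neg.congr_of_eventuallyEq ?_)
    filter_upwards [ha, hξ] with t h1 h2
    rw [← h1, mem_tangent_proj] at h2
    exact h2
  rw [← mem_tangent_proj, ha.self_of_nhds] at hz2
  have := Submodule.add_mem _ hz2 (br_isotropy_mem_tangent hζ hξ.self_of_nhds)
  convert this using 1
  rw [map_add, add_apply]
  abel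

theorem deriv_sub_br_mem_isotropy {c : ℝ → S.Q} {c' : ℝ →L[ℝ] 𝔤}
    (hc : S.IsDifferentialAt 𝓘(ℝ, ℝ) c 0 c') {ξ : ℝ → 𝔤} {ξ' : 𝔤}
    (hξ : ∀ᶠ t in 𝓝 (0 : ℝ), ξ t ∈ S.isotropy (c t)) (hd : HasDerivAt ξ ξ' 0) :
    ξ' - S.br (c' 1) (ξ 0) ∈ S.isotropy (c 0) := by
  obtain ⟨a, ζ, ha, hζ, hda'⟩ := hc.exists_hasDerivAt
  have hz := hasDerivAt_Ad_inv hda' hd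
  have hz1 : HasDerivAt (fun t => S.dθ (S.Ad (a t)⁻¹ (ξ t)))
      (S.dθ (S.Ad (a 0)⁻¹ (ξ' - S.br (c' 1 + ζ) (ξ 0)))) 0 :=
    S.dθ.toContinuousLinearMap.hasFDerivAt.comp_hasDerivAt (0 : ℝ) hz
  have hz2 : S.dθ (S.Ad (a 0)⁻¹ (ξ' - S.br (c' 1 + ζ) (ξ 0)))
      = S.Ad (a 0)⁻¹ (ξ' - S.br (c' 1 + ζ) (ξ 0)) := by
    refine hz1.unique (hz.congr_of_eventuallyEq ?_)
    filter_upwards [ha, hξ] with t h1 h2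
    rw [← h1, mem_isotropy_proj] at h2
    exact h2
  rw [← mem_isotropy_proj, ha.self_of_nhds] at hz2
  have := Submodule.add_mem _ hz2 (br_isotropy_mem_isotropy hζ hξ.self_of_nhds)
  convert this using 1
  rw [map_add, add_apply]
  abel

end CompactSymmetricSpace
end

noncomputable section

namespace CompactSymmetricSpace

variable {𝔸 𝔤 : Type*} [NormedRing 𝔸] [NormedAlgebra ℝ 𝔸] [FiniteDimensional ℝ 𝔸]
  [NormedAddCommGroup 𝔤] [InnerProductSpace ℝ 𝔤] [FiniteDimensional ℝ 𝔤]

variable {S : CompactSymmetricSpace 𝔸 𝔤}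

/-! ### Smooth maps from a vector space to `G/K` -/

section VectorSpace

variable {F : Type*} [NormedAddCommGroup F] [NormedSpace ℝ F]

variable (S) in
/-- The differential of a map from a vector space to `G/K`. -/
def vdiff (ψ : F → S.Q) (x : F) : F →L[ℝ] 𝔤 := S.diff 𝓘(ℝ, F) ψ x

variable {ψ : F → S.Q} {U : Set F}

theorem isDifferentialAt_line (hψ : S.IsSmoothOn 𝓘(ℝ, F) ψ U) {x : F} (hx : x ∈ U) (a : F) :
    ∃ c' : ℝ →L[ℝ] 𝔤, c' 1 = S.vdiff ψ x a ∧
      S.IsDifferentialAt 𝓘(ℝ, ℝ) (fun t : ℝ => ψ (x + t • a)) 0 c' := by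
  have h0 : x + (0 : ℝ) • a = x := by simp
  have h1 := hψ.isDifferentialAt (p := x + (0 : ℝ) • a) (by rwa [h0])
  have h2 : HasFDerivAt (fun t : ℝ => x + t • a) (ContinuousLinearMap.toSpanSingleton ℝ a) 0 := by
    simpa using (((hasDerivAt_id (0 : ℝ)).smul_const a).const_add x).hasFDerivAt
  have h3 := IsDifferentialAt.comp_curve (c := fun t : ℝ => x + t • a) h1
    (hasMFDerivAt_iff_hasFDerivAt.2 h2)
  refine ⟨_, ?_, h3⟩
  change S.vdiff ψ (x + (0 : ℝ) • a) ((1 : ℝ) • a) = _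
  rw [h0, one_smul]

theorem vdiff_mem_tangent (hψ : S.IsSmoothOn 𝓘(ℝ, F) ψ U) {x : F} (hx : x ∈ U) (a : F) :
    S.vdiff ψ x a ∈ S.tangent (ψ x) := (hψ.isDifferentialAt hx).mem_tangent a

theorem HasFDerivAt.hasDerivAt_line {V : Type*} [NormedAddCommGroup V] [NormedSpace ℝ V]
    {f : F → V} {f' : F →L[ℝ] V} {x : F} (h : HasFDerivAt f f' x) (a : F) :
    HasDerivAt (fun t : ℝ => f (x + t • a)) (f' a) 0 := by
  have h2 : HasDerivAt (fun t : ℝ => x + t • a) a 0 := by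
    simpa using ((hasDerivAt_id (0 : ℝ)).smul_const a).const_add x
  exact HasFDerivAt.comp_hasDerivAt (x := (0 : ℝ)) (f := fun t : ℝ => x + t • a) (l := f) (l' := f')
    (by simpa using h) h2

theorem tendsto_line (x a : F) : Tendsto (fun t : ℝ => x + t • a) (𝓝 0) (𝓝 x) := by
  have : ContinuousAt (fun t : ℝ => x + t • a) 0 := by fun_prop
  simpa [ContinuousAt] using this

theorem fderiv_sub_br_mem_tangent (hψ : S.IsSmoothOn 𝓘(ℝ, F) ψ U) {x : F} (hx : x ∈ U)
    {Ξ : F → 𝔤} {Ξ' : F →L[ℝ] 𝔤} (hd : HasFDerivAt Ξ Ξ' x)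
    (hΞ : ∀ᶠ y in 𝓝 x, Ξ y ∈ S.tangent (ψ y)) (a : F) :
    Ξ' a - S.br (S.vdiff ψ x a) (Ξ x) ∈ S.tangent (ψ x) := by
  obtain ⟨c', hc1, hc⟩ := isDifferentialAt_line hψ hx a
  have := deriv_sub_br_mem_tangent hc (ξ := fun t => Ξ (x + t • a))
    ((tendsto_line x a).eventually hΞ) (HasFDerivAt.hasDerivAt_line hd a)
  simpa [hc1] using this

theorem fderiv_sub_br_mem_isotropy (hψ : S.IsSmoothOn 𝓘(ℝ, F) ψ U) {x : F} (hx : x ∈ U)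
    {Ξ : F → 𝔤} {Ξ' : F →L[ℝ] 𝔤} (hd : HasFDerivAt Ξ Ξ' x)
    (hΞ : ∀ᶠ y in 𝓝 x, Ξ y ∈ S.isotropy (ψ y)) (a : F) :
    Ξ' a - S.br (S.vdiff ψ x a) (Ξ x) ∈ S.isotropy (ψ x) := by
  obtain ⟨c', hc1, hc⟩ := isDifferentialAt_line hψ hx a
  have := deriv_sub_br_mem_isotropy hc (ξ := fun t => Ξ (x + t • a))
    ((tendsto_line x a).eventually hΞ) (HasFDerivAt.hasDerivAt_line hd a)
  simpa [hc1] using this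

/-- The differential of a map to `G/K` in terms of a lift to `G`. -/
theorem vdiff_eq_of_lift {V : Set F} (hV : IsOpen V) {h : F → S.G}
    (hh : ContDiffOn ℝ ∞ (fun q => S.val (h q)) V) (hp : ∀ q ∈ V, S.proj (h q) = ψ q)
    {q : F} (hq : q ∈ V) :
    S.vdiff ψ q = S.diffOfLift (h q) (fderiv ℝ (fun q => S.val (h q)) q) ∧
    ∀ b, fderiv ℝ (fun q => S.val (h q)) q b
      = S.lie (S.lieInv (fderiv ℝ (fun q => S.val (h q)) q b * S.val (h q)⁻¹)) * S.val (h q) := by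
  have h1 : HasFDerivAt (fun q => S.val (h q)) (fderiv ℝ (fun q => S.val (h q)) q) q :=
    (((hh q hq).contDiffAt (hV.mem_nhds hq)).differentiableAt (by simp)).hasFDerivAt
  have h2 := hasMFDerivAt_iff_hasFDerivAt.2 h1
  exact ⟨(isDifferentialAt_of_lift h2 (by
    filter_upwards [hV.mem_nhds hq] with y hy using hp y hy)).diff_eq,
    fun b => exists_lie_of_hasMFDerivAt h2 b⟩

theorem contDiffAt_val_inv {n : WithTop ℕ∞} {h : F → S.G} {x : F}
    (hh : ContDiffAt ℝ n (fun q => S.val (h q)) x) : ContDiffAt ℝ n (fun q => S.val (h q)⁻¹) x := by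
  have := FiniteDimensional.complete ℝ 𝔸
  have h1 := (contDiffAt_ringInverse ℝ (n := n) (h x : 𝔸ˣ)).comp x
    (f := fun q => S.val (h q)) hh
  refine h1.congr_of_eventuallyEq (Eventually.of_forall fun q => ?_)
  exact (S.ringInverse_val (h q)).symm

theorem contDiffOn_vdiff [FiniteDimensional ℝ F] (hψ : S.IsSmoothOn 𝓘(ℝ, F) ψ U) :
    ContDiffOn ℝ ∞ (S.vdiff ψ) U := by
  rw [contDiffOn_clm_apply]
  intro b x hx
  obtain ⟨V, hV, hxV, h, hh, hp⟩ := hψ x hx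
  rw [contMDiffOn_iff_contDiffOn] at hh
  have h1 : ContDiffAt ℝ ∞ (fun q => S.val (h q)) x := (hh x hxV).contDiffAt (hV.mem_nhds hxV)
  have h2 := contDiffAt_val_inv h1
  have h3 : ContDiffAt ℝ ∞ (fun q => fderiv ℝ (fun q => S.val (h q)) q b) x :=
    (h1.fderiv_right (m := ∞) (by simp)).clm_apply contDiffAt_const
  refine ContDiffAt.contDiffWithinAt ?_
  have hl : ∀ {f : F → 𝔸}, ContDiffAt ℝ ∞ f x → ContDiffAt ℝ ∞ (fun q => S.lieInv (f q)) x :=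
    fun hf => S.lieInv.contDiff.contDiffAt.comp x hf
  have hL : ∀ {f : F → 𝔤}, ContDiffAt ℝ ∞ f x → ContDiffAt ℝ ∞ (fun q => S.lie (f q)) x :=
    fun hf => S.lieL.contDiff.contDiffAt.comp x hf
  have hT : ∀ {f : F → 𝔤}, ContDiffAt ℝ ∞ f x → ContDiffAt ℝ ∞ (fun q => S.dθ (f q)) x :=
    fun hf => S.dθ.toContinuousLinearMap.contDiff.contDiffAt.comp x hf
  have hz : ContDiffAt ℝ ∞ (fun q => S.Ad (h q)⁻¹
      (S.lieInv (fderiv ℝ (fun q => S.val (h q)) q b * S.val (h q)⁻¹))) x := by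
    simp only [Ad_apply, inv_inv]
    exact hl ((h2.mul (hL (hl (h3.mul h2)))).mul h1)
  have hw : ContDiffAt ℝ ∞ (fun q => S.diffOfLift (h q) (fderiv ℝ (fun q => S.val (h q)) q) b) x := by
    simp only [diffOfLift_apply, tanProj_apply]
    simp only [S.Ad_apply (h _) ((1 / 2 : ℝ) • _)]
    exact hl ((h1.mul (hL ((hz.sub (hT hz)).const_smul (1 / 2 : ℝ)))).mul h2)
  refine hw.congr_of_eventuallyEq ?_
  filter_upwards [hV.mem_nhds hxV] with q hq
  rw [(vdiff_eq_of_lift hV hh hp hq).1]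

/-- The Maurer-Cartan equation for the differential of a map to `G/K`. -/
theorem fderiv_vdiff_antisymm [FiniteDimensional ℝ F] (hU : IsOpen U)
    (hψ : S.IsSmoothOn 𝓘(ℝ, F) ψ U) {x : F} (hx : x ∈ U) (a b : F) :
    fderiv ℝ (S.vdiff ψ) x a b - fderiv ℝ (S.vdiff ψ) x b a
      = (2 : ℝ) • S.br (S.vdiff ψ x a) (S.vdiff ψ x b) := by
  obtain ⟨V, hV, hxV, h, hh, hp⟩ := hψ x hx
  rw [contMDiffOn_iff_contDiffOn] at hh
  set H : F → 𝔸 := fun q => S.val (h q) with hH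
  have h1 : ContDiffAt ℝ ∞ H x := (hh x hxV).contDiffAt (hV.mem_nhds hxV)
  have h2 := contDiffAt_val_inv h1
  have h3 : ContDiffAt ℝ ∞ (fderiv ℝ H) x := h1.fderiv_right (m := ∞) (by simp)
  have hE : ContDiffAt ℝ ∞ (S.vdiff ψ) x := (contDiffOn_vdiff hψ).contDiffAt (hU.mem_nhds hx)
  have hE' := (hE.differentiableAt (by simp)).hasFDerivAt
  -- the Maurer-Cartan form of the lift
  let w : F → F → 𝔤 := fun c q => S.lieInv (fderiv ℝ H q c * S.val (h q)⁻¹)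
  have hdw : ∀ c, DifferentiableAt ℝ (w c) x := fun c =>
    (S.lieInv.contDiff.contDiffAt.comp x
      ((h3.clm_apply contDiffAt_const).mul h2)).differentiableAt (by simp : (∞ : WithTop ℕ∞) ≠ 0)
  have hw : ∀ c, ∀ q ∈ V, fderiv ℝ H q c = S.lie (w c q) * H q := fun c q hq =>
    (vdiff_eq_of_lift hV hh hp hq).2 c
  have hEw : ∀ c, ∀ q ∈ V, S.vdiff ψ q c = S.tanProj (h q) (w c q) := fun c q hq => by
    rw [(vdiff_eq_of_lift hV hh hp hq).1]; rfl
  have hHd : HasFDerivAt H (fderiv ℝ H x) x := (h1.differentiableAt (by simp)).hasFDerivAt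
  have hsnd : ∀ c d, fderiv ℝ (fderiv ℝ H) x d c
      = S.lie (fderiv ℝ (w c) x d) * H x + S.lie (w c x) * (S.lie (w d x) * H x) := by
    intro c d
    have e1 : HasFDerivAt (fun q => fderiv ℝ H q c) ((fderiv ℝ (fderiv ℝ H) x).flip c) x := by
      have := (h3.differentiableAt (by simp)).hasFDerivAt.clm_apply (hasFDerivAt_const c x)
      simpa using this
    have e2 : HasFDerivAt (fun q => S.lie (w c q)) (S.lieL ∘L fderiv ℝ (w c) x) x :=
      S.lieL.hasFDerivAt.comp x (hdw c).hasFDerivAt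
    have e3 := (e2.mul' hHd).congr_of_eventuallyEq (f₁ := fun q => fderiv ℝ H q c) (by
      filter_upwards [hV.mem_nhds hxV] with q hq using hw c q hq)
    have e4 := congrArg (fun T => T d) (e1.unique e3)
    simp only [ContinuousLinearMap.flip_apply] at e4
    rw [e4]
    simp [hw d x hxV, add_comm]
  have hMC : fderiv ℝ (w b) x a - fderiv ℝ (w a) x b = S.br (w a x) (w b x) := by
    have hs : fderiv ℝ (fderiv ℝ H) x a b = fderiv ℝ (fderiv ℝ H) x b a :=
      (h1.isSymmSndFDerivAt (by
        rw [minSmoothness_of_isRCLikeNormedField]; exact ENat.LEInfty.out)) a b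
    rw [hsnd, hsnd] at hs
    apply S.lie_injective
    rw [map_sub, lie_br]
    have hs' := congrArg (fun y => y * S.val (h x)⁻¹) hs
    simp only [add_mul, mul_assoc, hH, val_mul_inv, mul_one] at hs'
    rw [sub_eq_sub_iff_add_eq_add, hs', add_comm]
  -- the isotropy part of the Maurer-Cartan form
  have hEd : ∀ c, HasFDerivAt (fun q => S.vdiff ψ q c) ((fderiv ℝ (S.vdiff ψ) x).flip c) x := by
    intro c
    have := hE'.clm_apply (hasFDerivAt_const c x)
    simpa using this
  have hp1 : ∀ c d, fderiv ℝ (S.vdiff ψ) x d c - S.br (S.vdiff ψ x d) (S.vdiff ψ x c)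
      ∈ S.tangent (ψ x) := fun c d => fderiv_sub_br_mem_tangent hψ hx (hEd c) (by
        filter_upwards [hU.mem_nhds hx] with y hy using vdiff_mem_tangent hψ hy c) d
  have hκ : ∀ c, ∀ q ∈ V, w c q - S.vdiff ψ q c ∈ S.isotropy (ψ q) := fun c q hq => by
    rw [hEw c q hq, ← hp q hq]
    exact S.sub_tanProj_mem _ _
  have hk1 : ∀ c d, (fderiv ℝ (w c) x d - fderiv ℝ (S.vdiff ψ) x d c)
      - S.br (S.vdiff ψ x d) (w c x - S.vdiff ψ x c) ∈ S.isotropy (ψ x) := fun c d =>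
    fderiv_sub_br_mem_isotropy hψ hx ((hdw c).hasFDerivAt.sub (hEd c)) (by
      filter_upwards [hV.mem_nhds hxV] with y hy using hκ c y hy) d
  refine sub_eq_zero.1 (eq_zero_of_mem_tangent_of_mem_isotropy (x := ψ x) ?_ ?_)
  · have := Submodule.sub_mem _ (hp1 b a) (hp1 a b)
    convert this using 1
    rw [S.br_swap (S.vdiff ψ x b)]
    module
  · have i1 := Submodule.sub_mem _ (hk1 b a) (hk1 a b)
    have i2 := br_isotropy_mem_isotropy (hκ a x hxV) (hκ b x hxV)
    have i3 := br_mem_isotropy (vdiff_mem_tangent hψ hx a) (vdiff_mem_tangent hψ hx b)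
    have := Submodule.sub_mem _ (Submodule.sub_mem _ i2 i1) i3
    convert this using 1
    rw [sub_eq_iff_eq_add.1 hMC]
    simp only [map_sub, sub_apply]
    rw [S.br_swap (S.vdiff ψ x b) (w a x), S.br_swap (S.vdiff ψ x b) (S.vdiff ψ x a)]
    module

end VectorSpace

/-! ### Totally geodesic submanifolds -/

namespace Submfd

variable {N : S.Submfd} {F : Type*} [NormedAddCommGroup F] [NormedSpace ℝ F]
  {ψ : F → S.Q} {U : Set F}

/-- `ψ : U → N` parametrizes an open part of the submanifold `N` of `G/K`. -/
structure IsParam (N : S.Submfd) (U : Set F) (ψ : F → S.Q) : Prop where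
  isOpen : IsOpen U
  smooth : S.IsSmoothOn 𝓘(ℝ, F) ψ U
  mem : ∀ x ∈ U, ψ x ∈ N.carrier
  inj : ∀ x ∈ U, Function.Injective (S.vdiff ψ x)
  range_eq : ∀ x ∈ U, LinearMap.range (S.vdiff ψ x).toLinearMap = N.tangent (ψ x)

theorem IsParam.vdiff_mem (h : N.IsParam U ψ) {x : F} (hx : x ∈ U) (a : F) :
    S.vdiff ψ x a ∈ N.tangent (ψ x) := by
  rw [← h.range_eq x hx]
  exact ⟨a, rfl⟩

theorem IsParam.tangent_le (h : N.IsParam U ψ) {x : F} (hx : x ∈ U) :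
    N.tangent (ψ x) ≤ S.tangent (ψ x) := by
  rw [← h.range_eq x hx]
  rintro _ ⟨a, rfl⟩
  exact vdiff_mem_tangent h.smooth hx a

theorem exists_isParam (N : S.Submfd) {y : S.Q} (hy : y ∈ N.carrier) :
    ∃ (U : Set (EuclideanSpace ℝ (Fin N.dim))) (ψ : EuclideanSpace ℝ (Fin N.dim) → S.Q),
      N.IsParam U ψ ∧ 0 ∈ U ∧ ψ 0 = y ∧ ContinuousOn ψ U := by
  obtain ⟨U, O, ψ, hU, h0, hψ0, hO, him, hemb, hs, hd⟩ := N.exists_param y hy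
  refine ⟨U, ψ, ⟨hU, hs, fun x hx => ?_, fun x hx => (hd x hx).1, fun x hx => (hd x hx).2⟩, h0, hψ0, ?_⟩
  · have : ψ x ∈ N.carrier ∩ O := him ▸ mem_image_of_mem ψ hx
    exact this.1
  · exact continuousOn_iff_continuous_domRestrict.2 hemb.continuous

theorem IsParam.fderiv_sub_br_mem (h : N.IsParam U ψ) (hN : N.IsTotallyGeodesic) {x : F}
    (hx : x ∈ U) {Ξ : F → 𝔤} {Ξ' : F →L[ℝ] 𝔤} (hd : HasFDerivAt Ξ Ξ' x)
    (hΞ : ∀ y ∈ U, Ξ y ∈ N.tangent (ψ y)) (a : F) :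
    Ξ' a - S.br (S.vdiff ψ x a) (Ξ x) ∈ N.tangent (ψ x) := by
  obtain ⟨c', -, hc⟩ := isDifferentialAt_line h.smooth hx a
  have hev : ∀ᶠ t in 𝓝 (0 : ℝ), x + t • a ∈ U := (tendsto_line x a).eventually (h.isOpen.mem_nhds hx)
  have h0 : x + (0 : ℝ) • a = x := by simp
  have := hN (fun t => ψ (x + t • a)) c' (fun t => Ξ (x + t • a))
    (Ξ' a - S.br (S.vdiff ψ x a) (Ξ x)) (S.br (S.vdiff ψ x a) (Ξ x))
    (by filter_upwards [hev] with t ht using ⟨h.mem _ ht, hΞ _ ht⟩) hc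
    (by
      simp only [h0]
      exact fderiv_sub_br_mem_tangent h.smooth hx hd (by
        filter_upwards [h.isOpen.mem_nhds hx] with y hy using h.tangent_le hy (hΞ y hy)) a)
    (by
      simp only [h0]
      exact br_mem_isotropy (vdiff_mem_tangent h.smooth hx a) (h.tangent_le hx (hΞ x hx)))
    (by
      rw [sub_add_cancel]
      exact HasFDerivAt.hasDerivAt_line hd a)
  simpa only [h0] using this

variable [FiniteDimensional ℝ F]

theorem IsParam.contDiffAt_vdiff (h : N.IsParam U ψ) {x : F} (hx : x ∈ U) :
    ContDiffAt ℝ ∞ (S.vdiff ψ) x := (contDiffOn_vdiff h.smooth).contDiffAt (h.isOpen.mem_nhds hx)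

theorem IsParam.hasFDerivAt_vdiff (h : N.IsParam U ψ) {x : F} (hx : x ∈ U) (c : F) :
    HasFDerivAt (fun q => S.vdiff ψ q c) ((fderiv ℝ (S.vdiff ψ) x).flip c) x := by
  simpa using ((h.contDiffAt_vdiff hx).differentiableAt (by simp)).hasFDerivAt.clm_apply
    (hasFDerivAt_const c x)

theorem IsParam.covDeriv_mem (h : N.IsParam U ψ) (hN : N.IsTotallyGeodesic) {x : F}
    (hx : x ∈ U) (b c : F) :
    fderiv ℝ (S.vdiff ψ) x b c - S.br (S.vdiff ψ x b) (S.vdiff ψ x c) ∈ N.tangent (ψ x) :=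
  h.fderiv_sub_br_mem hN hx (h.hasFDerivAt_vdiff hx c) (fun _ hy => h.vdiff_mem hy c) b

/-- The tangent spaces of a totally geodesic submanifold are Lie triple systems. -/
theorem IsParam.br_br_vdiff_mem (h : N.IsParam U ψ) (hN : N.IsTotallyGeodesic) {x : F}
    (hx : x ∈ U) (a b c : F) :
    S.br (S.br (S.vdiff ψ x a) (S.vdiff ψ x b)) (S.vdiff ψ x c) ∈ N.tangent (ψ x) := by
  set e := S.vdiff ψ with he
  have hD2 : HasFDerivAt (fderiv ℝ e) (fderiv ℝ (fderiv ℝ e) x) x :=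
    (((h.contDiffAt_vdiff hx).fderiv_right (m := ∞) (by simp)).differentiableAt
      (by simp)).hasFDerivAt
  have hsymm : ∀ a b, fderiv ℝ (fderiv ℝ e) x a b = fderiv ℝ (fderiv ℝ e) x b a := fun a b =>
    ((h.contDiffAt_vdiff hx).isSymmSndFDerivAt (by
        rw [minSmoothness_of_isRCLikeNormedField]; exact ENat.LEInfty.out)) a b
  have key : ∀ a b, fderiv ℝ (fderiv ℝ e) x a b c
      - (S.br (fderiv ℝ e x a b) (e x c) + S.br (e x b) (fderiv ℝ e x a c))
      - S.br (e x a) (fderiv ℝ e x b c - S.br (e x b) (e x c)) ∈ N.tangent (ψ x) := by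
    intro a b
    have d1 : HasFDerivAt (fun q => fderiv ℝ e q b c)
        (((fderiv ℝ (fderiv ℝ e) x).flip b).flip c) x := by
      have i1 := hD2.clm_apply (hasFDerivAt_const b x)
      have i2 := i1.clm_apply (hasFDerivAt_const c x)
      simpa using i2
    have d2 := (S.br.hasFDerivAt.comp x (h.hasFDerivAt_vdiff hx b)).clm_apply
      (h.hasFDerivAt_vdiff hx c)
    have := h.fderiv_sub_br_mem hN hx (d1.sub d2)
      (fun y hy => h.covDeriv_mem hN hy b c) a
    convert this using 1
    simp [he, add_comm]
  have hanti := fderiv_vdiff_antisymm h.isOpen h.smooth hx a b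
  rw [← he] at hanti
  have := Submodule.sub_mem _ (key b a) (key a b)
  convert this using 1
  rw [hsymm b a, sub_eq_iff_eq_add.1 hanti]
  simp only [map_sub, map_add, map_smul, add_apply, smul_apply]
  rw [S.br_jacobi (e x a) (e x b)]
  module

theorem br_br_mem (hN : N.IsTotallyGeodesic) {y : S.Q} (hy : y ∈ N.carrier) {u v w : 𝔤}
    (hu : u ∈ N.tangent y) (hv : v ∈ N.tangent y) (hw : w ∈ N.tangent y) :
    S.br (S.br u v) w ∈ N.tangent y := by
  obtain ⟨U, ψ, h, h0, rfl, -⟩ := N.exists_isParam hy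
  rw [← h.range_eq 0 h0] at hu hv hw
  obtain ⟨a, rfl⟩ := hu
  obtain ⟨b, rfl⟩ := hv
  obtain ⟨c, rfl⟩ := hw
  exact h.br_br_vdiff_mem hN h0 a b c

end Submfd

end CompactSymmetricSpace
end

noncomputable section

/-! ### Holonomy of small loops -/

section SmallLoop

variable {F V : Type*} [NormedAddCommGroup F] [NormedSpace ℝ F]
  [NormedAddCommGroup V] [NormedSpace ℝ V]

theorem exists_linear_ode_solution [CompleteSpace F] {C : ℝ → F →L[ℝ] F}
    (hC : ContinuousOn C (Icc 0 1)) (hb : ∀ t ∈ Icc (0 : ℝ) 1, ‖C t‖ ≤ 1 / 2) (y₀ : F) :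
    ∃ y : ℝ → F, y 0 = y₀ ∧
      ∀ t ∈ Icc (0 : ℝ) 1, HasDerivWithinAt y (C t (y t)) (Icc 0 1) t := by
  have hPL : IsPicardLindelof (fun t x => C t x) (tmin := 0) (tmax := 1)
      (⟨0, by simp⟩ : Icc (0 : ℝ) 1) y₀ ‖y₀‖₊ 0 ‖y₀‖₊ 1 := by
    refine ⟨fun t ht => ?_, fun x _ => hC.clm_apply continuousOn_const, fun t ht x hx => ?_, ?_⟩
    · refine ((C t).lipschitz.weaken ?_).lipschitzOnWith
      have := hb t ht
      rw [← NNReal.coe_le_coe, coe_nnnorm, NNReal.coe_one]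
      linarith
    · have h1 : ‖x‖ ≤ 2 * ‖y₀‖ := by
        have := norm_le_of_mem_closedBall hx
        rw [coe_nnnorm] at this
        linarith
      calc ‖C t x‖ ≤ ‖C t‖ * ‖x‖ := (C t).le_opNorm x
        _ ≤ 1 / 2 * (2 * ‖y₀‖) := by gcongr; exact hb t ht
        _ = _ := by simp
    · simp
  obtain ⟨y, h0, hy⟩ := hPL.exists_eq_forall_mem_Icc_hasDerivWithinAt₀
  exact ⟨y, h0, hy⟩

/-- A circle through the origin in the plane spanned by `a` and `b`. -/
def circleLoop (a b : F) (t : ℝ) : F :=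
  (Real.cos (2 * Real.pi * t) - 1) • a + Real.sin (2 * Real.pi * t) • b

/-- The velocity of `circleLoop`. -/
def circleLoopDeriv (a b : F) (t : ℝ) : F :=
  (-(2 * Real.pi * Real.sin (2 * Real.pi * t))) • a + (2 * Real.pi * Real.cos (2 * Real.pi * t)) • b

theorem hasDerivAt_cos_two_pi (t : ℝ) : HasDerivAt (fun t => Real.cos (2 * Real.pi * t))
    (-(2 * Real.pi * Real.sin (2 * Real.pi * t))) t := by
  have := ((hasDerivAt_id t).const_mul (2 * Real.pi)).cos
  simp only [id] at this
  convert this using 1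
  ring

theorem hasDerivAt_sin_two_pi (t : ℝ) : HasDerivAt (fun t => Real.sin (2 * Real.pi * t))
    (2 * Real.pi * Real.cos (2 * Real.pi * t)) t := by
  have := ((hasDerivAt_id t).const_mul (2 * Real.pi)).sin
  simp only [id] at this
  convert this using 1
  ring

theorem hasDerivAt_circleLoop (a b : F) (t : ℝ) :
    HasDerivAt (circleLoop a b) (circleLoopDeriv a b t) t :=
  (((hasDerivAt_cos_two_pi t).sub_const 1).smul_const a).add ((hasDerivAt_sin_two_pi t).smul_const b)

theorem circleLoop_zero (a b : F) : circleLoop a b 0 = 0 := by simp [circleLoop]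

theorem circleLoop_one (a b : F) : circleLoop a b 1 = 0 := by simp [circleLoop]

theorem contDiff_circleLoop (a b : F) : ContDiff ℝ ∞ (circleLoop a b) := by
  unfold circleLoop
  fun_prop

theorem continuous_circleLoopDeriv (a b : F) : Continuous (circleLoopDeriv a b) := by
  unfold circleLoopDeriv
  fun_prop

theorem exists_norm_circleLoop_le (a b : F) :
    ∃ R, 0 < R ∧ ∀ t, ‖circleLoop a b t‖ ≤ R ∧ ‖circleLoopDeriv a b t‖ ≤ R := by
  refine ⟨2 * Real.pi * (‖a‖ + ‖b‖) + 1, by positivity, fun t => ⟨?_, ?_⟩⟩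
  · have h1 : |Real.cos (2 * Real.pi * t) - 1| ≤ 2 * Real.pi := by
      have := Real.cos_le_one (2 * Real.pi * t)
      have := Real.neg_one_le_cos (2 * Real.pi * t)
      have := Real.pi_gt_three
      rw [abs_le]; constructor <;> linarith
    have h2 : |Real.sin (2 * Real.pi * t)| ≤ 2 * Real.pi :=
      (Real.abs_sin_le_one _).trans (by linarith [Real.pi_gt_three])
    calc ‖circleLoop a b t‖ ≤ _ := norm_add_le _ _
      _ ≤ 2 * Real.pi * ‖a‖ + 2 * Real.pi * ‖b‖ := by
        rw [norm_smul, norm_smul, Real.norm_eq_abs, Real.norm_eq_abs]; gcongr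
      _ ≤ _ := by linarith
  · have h1 : |-(2 * Real.pi * Real.sin (2 * Real.pi * t))| ≤ 2 * Real.pi := by
      rw [abs_neg, abs_mul, abs_of_pos (by positivity)]
      exact mul_le_of_le_one_right (by positivity) (Real.abs_sin_le_one _)
    have h2 : |2 * Real.pi * Real.cos (2 * Real.pi * t)| ≤ 2 * Real.pi := by
      rw [abs_mul, abs_of_pos (by positivity)]
      exact mul_le_of_le_one_right (by positivity) (Real.abs_cos_le_one _)
    calc ‖circleLoopDeriv a b t‖ ≤ _ := norm_add_le _ _
      _ ≤ 2 * Real.pi * ‖a‖ + 2 * Real.pi * ‖b‖ := by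
        rw [norm_smul, norm_smul, Real.norm_eq_abs, Real.norm_eq_abs]; gcongr
      _ ≤ _ := by linarith

/-- The integral of a bilinear map along `circleLoop`. -/
theorem exists_primitive_circleLoop (β : F →L[ℝ] F →L[ℝ] V) (a b : F) :
    ∃ Q : ℝ → V, Q 0 = 0 ∧ Q 1 = Real.pi • (β a b - β b a) ∧
      ∀ t, HasDerivAt Q (β (circleLoop a b t) (circleLoopDeriv a b t)) t := by
  let c : ℝ → ℝ := fun t => Real.cos (2 * Real.pi * t)
  let s : ℝ → ℝ := fun t => Real.sin (2 * Real.pi * t)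
  refine ⟨fun t => ((c t - 1) * (c t - 1) / 2) • β a a
    + (Real.pi * t + s t * c t / 2 - s t) • β a b + (-(Real.pi * t) + s t * c t / 2) • β b a
    + (s t * s t / 2) • β b b, by simp [c, s], by simp [c, s]; module, fun t => ?_⟩
  have hc := hasDerivAt_cos_two_pi t
  have hs := hasDerivAt_sin_two_pi t
  have hp : HasDerivAt (fun t : ℝ => Real.pi * t) Real.pi t := by
    simpa using (hasDerivAt_id t).const_mul Real.pi
  have h1 := (((hc.sub_const 1).fun_mul (hc.sub_const 1)).div_const 2).smul_const (β a a)
  have h2 := ((hp.fun_add ((hs.fun_mul hc).div_const 2)).fun_sub hs).smul_const (β a b)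
  have h3 := (hp.fun_neg.fun_add ((hs.fun_mul hc).div_const 2)).smul_const (β b a)
  have h4 := ((hs.fun_mul hs).div_const 2).smul_const (β b b)
  have := ((h1.fun_add h2).fun_add h3).fun_add h4
  convert this using 1
  simp only [circleLoop, circleLoopDeriv, map_add, map_smul, add_apply, smul_apply]
  have hcs := Real.sin_sq_add_cos_sq (2 * Real.pi * t)
  generalize Real.cos (2 * Real.pi * t) = x at *
  generalize Real.sin (2 * Real.pi * t) = y at *
  have hx : Real.pi = Real.pi * (y ^ 2 + x ^ 2) := by rw [hcs, mul_one]
  have e1 : Real.pi + (2 * Real.pi * x * x + y * -(2 * Real.pi * y)) / 2 - 2 * Real.pi * x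
      = (x - 1) * (2 * Real.pi * x) := by linear_combination hx
  have e2 : -Real.pi + (2 * Real.pi * x * x + y * -(2 * Real.pi * y)) / 2
      = y * -(2 * Real.pi * y) := by linear_combination -hx
  rw [e1, e2]
  module

/-- The holonomy of the connection `d - [e, ·]` around small circles is to second order the
curvature. -/
theorem mem_of_holonomy_small_loops [FiniteDimensional ℝ V] (br : V →L[ℝ] V →L[ℝ] V)
    {e : F → F →L[ℝ] V} {e' : F →L[ℝ] F →L[ℝ] V} (he : HasFDerivAt e e' 0) (a b : F)
    (W : Submodule ℝ V) {ξ₀ : V} (h₀ : ξ₀ ∈ W) {ε₀ : ℝ} (hε₀ : 0 < ε₀)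
    (H : ∀ ε, 0 < ε → ε ≤ ε₀ → ∃ ξ : ℝ → V, ξ 0 = ξ₀ ∧ ξ 1 ∈ W ∧
      (∀ t ∈ Icc (0 : ℝ) 1, ‖ξ t‖ ≤ ‖ξ₀‖) ∧
      ∀ t ∈ Icc (0 : ℝ) 1, HasDerivWithinAt ξ
        (br (e (ε • circleLoop a b t) (ε • circleLoopDeriv a b t)) (ξ t)) (Icc 0 1) t) :
    br (e' a b - e' b a) ξ₀ - (br (e 0 a) (br (e 0 b) ξ₀) - br (e 0 b) (br (e 0 a) ξ₀)) ∈ W := by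
  obtain ⟨R, hR, hγ⟩ := exists_norm_circleLoop_le a b
  let β : F →L[ℝ] F →L[ℝ] V :=
    (ContinuousLinearMap.compL ℝ F V V (br.flip ξ₀)) ∘L e' -
      ((ContinuousLinearMap.compL ℝ F V V).flip (br.flip ξ₀ ∘L e 0)) ∘L br ∘L e 0
  have hβ : ∀ u v, β u v = br (e' u v) ξ₀ - br (e 0 u) (br (e 0 v) ξ₀) := fun u v => rfl
  obtain ⟨Q, hQ0, hQ1, hQ⟩ := exists_primitive_circleLoop β a b
  set B := ‖br‖ with hB
  set M := ‖ξ₀‖ with hM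
  set A := ‖e 0‖ with hA
  set A' := ‖e'‖ with hA'
  let c₁ : ℝ := B * R ^ 2 * M
  let c₂ : ℝ := B * A' * R ^ 2 * (B * (A + (A' + 1) * R) * R * M) +
    B * (A * R) * (B * ((A' + 1) * R * R) * M + B * (A * R) * (B * (A + (A' + 1) * R) * R * M))
  have hc₁ : 0 ≤ c₁ := by positivity
  have hc₂ : 0 ≤ c₂ := by positivity
  have key : ∀ η, 0 < η → η ≤ 1 → ∃ ε₁, 0 < ε₁ ∧ ∀ ε, 0 < ε → ε ≤ ε₁ →
      ∃ w ∈ W, ‖w - Q 1‖ ≤ c₁ * η + c₂ * ε := by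
    intro η hη hη1
    have hlo := (hasFDerivAt_iff_isLittleO_nhds_zero.1 he).def hη
    obtain ⟨r, hr, hball⟩ := Metric.eventually_nhds_iff.1 hlo
    refine ⟨min (min ε₀ 1) (r / (2 * R)), by positivity, fun ε hε hεle => ?_⟩
    have hεε₀ : ε ≤ ε₀ := hεle.trans ((min_le_left _ _).trans (min_le_left _ _))
    have hε1 : ε ≤ 1 := hεle.trans ((min_le_left _ _).trans (min_le_right _ _))
    have hεR : ε * R < r := by
      have h1 : ε ≤ r / (2 * R) := hεle.trans (min_le_right _ _)
      have h2 : ε * (2 * R) ≤ r := (le_div_iff₀ (by positivity)).1 h1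
      nlinarith [mul_pos hε hR]
    obtain ⟨ξ, hξ0, hξ1, hξM, hξ⟩ := H ε hε hεε₀
    have hx : ∀ t, ‖ε • circleLoop a b t‖ ≤ ε * R := fun t => by
      rw [norm_smul, Real.norm_eq_abs, abs_of_pos hε]
      gcongr
      exact (hγ t).1
    have hv : ∀ t, ‖ε • circleLoopDeriv a b t‖ ≤ ε * R := fun t => by
      rw [norm_smul, Real.norm_eq_abs, abs_of_pos hε]
      gcongr
      exact (hγ t).2
    have hrem : ∀ t, ‖e (ε • circleLoop a b t) - e 0 - e' (ε • circleLoop a b t)‖ ≤ η * (ε * R) := by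
      intro t
      have := hball (y := ε • circleLoop a b t) (by rw [dist_zero_right]; exact (hx t).trans_lt hεR)
      rw [zero_add] at this
      exact this.trans (by gcongr; exact hx t)
    have hdiff : ∀ t, ‖e (ε • circleLoop a b t) - e 0‖ ≤ (A' + 1) * R * ε := by
      intro t
      have h1 : ‖e' (ε • circleLoop a b t)‖ ≤ A' * (ε * R) :=
        (e'.le_opNorm _).trans (by gcongr; exact hx t)
      calc ‖e (ε • circleLoop a b t) - e 0‖
          = ‖(e (ε • circleLoop a b t) - e 0 - e' (ε • circleLoop a b t))
            + e' (ε • circleLoop a b t)‖ := by rw [sub_add_cancel]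
        _ ≤ η * (ε * R) + A' * (ε * R) := (norm_add_le _ _).trans (add_le_add (hrem t) h1)
        _ ≤ 1 * (ε * R) + A' * (ε * R) := by gcongr
        _ = _ := by ring
    have hnorm : ∀ t, ‖e (ε • circleLoop a b t)‖ ≤ A + (A' + 1) * R := by
      intro t
      calc ‖e (ε • circleLoop a b t)‖ = ‖e 0 + (e (ε • circleLoop a b t) - e 0)‖ := by
            rw [add_sub_cancel]
        _ ≤ A + (A' + 1) * R * ε := (norm_add_le _ _).trans (add_le_add le_rfl (hdiff t))
        _ ≤ A + (A' + 1) * R * 1 := by gcongr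
        _ = _ := by ring
    have hbr : ∀ {u v : V} {p q : ℝ}, ‖u‖ ≤ p → ‖v‖ ≤ q → ‖br u v‖ ≤ B * p * q := by
      intro u v p q hp hq
      have : 0 ≤ p := (norm_nonneg _).trans hp
      exact (br.le_opNorm₂ u v).trans (by gcongr)
    have happ : ∀ {T : F →L[ℝ] V} {x : F} {p q : ℝ}, ‖T‖ ≤ p → ‖x‖ ≤ q → ‖T x‖ ≤ p * q := by
      intro T x p q hp hq
      have : 0 ≤ p := (norm_nonneg _).trans hp
      exact (T.le_opNorm x).trans (by gcongr)
    have hclose : ∀ t ∈ Icc (0 : ℝ) 1, ‖ξ t - ξ₀‖ ≤ B * (A + (A' + 1) * R) * R * M * ε := by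
      intro t ht
      have h1 := norm_image_sub_le_of_norm_deriv_le_segment' hξ
        (C := B * (A + (A' + 1) * R) * R * M * ε) (fun s hs => by
          have h2 := hbr (happ (hnorm s) (hv s)) (hξM s (Ico_subset_Icc_self hs))
          refine h2.trans (le_of_eq (by ring))) t ht
      rw [hξ0, sub_zero] at h1
      exact h1.trans (mul_le_of_le_one_right (by positivity) ht.2)
    let ζ : ℝ → V := fun t => ξ t - br (e 0 (ε • circleLoop a b t)) (ξ t) - ε ^ 2 • Q t
    have hζ : ∀ t ∈ Icc (0 : ℝ) 1, HasDerivWithinAt ζ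
        (br (e (ε • circleLoop a b t) (ε • circleLoopDeriv a b t)) (ξ t)
          - (br (e 0 (ε • circleLoopDeriv a b t)) (ξ t) + br (e 0 (ε • circleLoop a b t))
            (br (e (ε • circleLoop a b t) (ε • circleLoopDeriv a b t)) (ξ t)))
          - ε ^ 2 • β (circleLoop a b t) (circleLoopDeriv a b t)) (Icc 0 1) t := by
      intro t ht
      have d1 : HasDerivAt (fun t => br (e 0 (ε • circleLoop a b t)))
          (br (e 0 (ε • circleLoopDeriv a b t))) t :=
        (br ∘L e 0).hasFDerivAt.comp_hasDerivAt t ((hasDerivAt_circleLoop a b t).const_smul ε)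
      exact ((hξ t ht).sub (d1.hasDerivWithinAt.clm_apply (hξ t ht))).sub
        ((hQ t).hasDerivWithinAt.const_smul (ε ^ 2))
    have hbound : ∀ t ∈ Ico (0 : ℝ) 1,
        ‖br (e (ε • circleLoop a b t) (ε • circleLoopDeriv a b t)) (ξ t)
          - (br (e 0 (ε • circleLoopDeriv a b t)) (ξ t) + br (e 0 (ε • circleLoop a b t))
            (br (e (ε • circleLoop a b t) (ε • circleLoopDeriv a b t)) (ξ t)))
          - ε ^ 2 • β (circleLoop a b t) (circleLoopDeriv a b t)‖
          ≤ ε ^ 2 * (c₁ * η + c₂ * ε) := by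
      intro t ht
      have ht' := Ico_subset_Icc_self ht
      obtain ⟨hγ1, hγ2⟩ := hγ t
      have hr' := hrem t
      have hd' := hdiff t
      set x := circleLoop a b t
      set v := circleLoopDeriv a b t
      have e1 : br (e (ε • x) (ε • v)) (ξ t)
          - (br (e 0 (ε • v)) (ξ t) + br (e 0 (ε • x)) (br (e (ε • x) (ε • v)) (ξ t)))
          - ε ^ 2 • β x v
          = ε • br ((e (ε • x) - e 0 - e' (ε • x)) v) (ξ t)
            + ε ^ 2 • (br (e' x v) (ξ t - ξ₀))
            - ε ^ 2 • br (e 0 x) (br ((e (ε • x) - e 0) v) (ξ t) + br (e 0 v) (ξ t - ξ₀)) := by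
        rw [hβ]
        simp only [map_smul, map_sub, map_add, smul_apply, sub_apply, add_apply]
        module
      rw [e1]
      have n1 := hbr (happ hr' hγ2) (hξM t ht')
      have n2 := hbr (happ (T := e' x) (e'.le_opNorm x |>.trans (by gcongr : _ ≤ A' * R)) hγ2)
        (hclose t ht')
      have n3 := hbr (happ (le_refl A) hγ1) ((norm_add_le _ _).trans (add_le_add
        (hbr (happ hd' hγ2) (hξM t ht')) (hbr (happ (le_refl A) hγ2) (hclose t ht'))))
      calc _ ≤ ‖ε • br ((e (ε • x) - e 0 - e' (ε • x)) v) (ξ t)‖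
            + ‖ε ^ 2 • (br (e' x v) (ξ t - ξ₀))‖
            + ‖ε ^ 2 • br (e 0 x) (br ((e (ε • x) - e 0) v) (ξ t) + br (e 0 v) (ξ t - ξ₀))‖ :=
            (norm_sub_le _ _).trans (add_le_add (norm_add_le _ _) le_rfl)
        _ ≤ ε * (B * (η * (ε * R) * R) * M)
            + ε ^ 2 * (B * (A' * R * R) * (B * (A + (A' + 1) * R) * R * M * ε))
            + ε ^ 2 * (B * (A * R) * (B * ((A' + 1) * R * ε * R) * M
              + B * (A * R) * (B * (A + (A' + 1) * R) * R * M * ε))) := by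
            simp only [norm_smul, norm_pow, Real.norm_eq_abs, abs_of_pos hε]
            gcongr
        _ = _ := by ring
    have hfin := norm_image_sub_le_of_norm_deriv_le_segment_01' hζ hbound
    have hζ1 : ζ 1 - ζ 0 = ξ 1 - ξ₀ - ε ^ 2 • Q 1 := by
      simp [ζ, circleLoop_zero, circleLoop_one, hξ0, hQ0]
      abel
    rw [hζ1] at hfin
    refine ⟨(ε ^ 2)⁻¹ • (ξ 1 - ξ₀), W.smul_mem _ (W.sub_mem hξ1 h₀), ?_⟩
    have e2 : (ε ^ 2)⁻¹ • (ξ 1 - ξ₀) - Q 1 = (ε ^ 2)⁻¹ • (ξ 1 - ξ₀ - ε ^ 2 • Q 1) := by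
      rw [smul_sub _ (ξ 1 - ξ₀), smul_smul, inv_mul_cancel₀ (by positivity), one_smul]
    rw [e2, norm_smul, norm_inv, Real.norm_of_nonneg (by positivity), inv_mul_le_iff₀ (by positivity)]
    exact hfin
  have hcl : Q 1 ∈ closure (W : Set V) := by
    refine Metric.mem_closure_iff.2 fun τ hτ => ?_
    obtain ⟨ε₁, hε₁, h1⟩ := key (min 1 (τ / (4 * (c₁ + 1)))) (by positivity) (min_le_left _ _)
    obtain ⟨w, hw, h2⟩ := h1 (min ε₁ (τ / (4 * (c₂ + 1)))) (by positivity) (min_le_left _ _)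
    refine ⟨w, hw, ?_⟩
    rw [dist_comm, dist_eq_norm]
    refine h2.trans_lt ?_
    have i1 : c₁ * min 1 (τ / (4 * (c₁ + 1))) ≤ τ / 4 := by
      calc c₁ * min 1 (τ / (4 * (c₁ + 1))) ≤ (c₁ + 1) * (τ / (4 * (c₁ + 1))) := by
            gcongr
            · linarith
            · exact min_le_right _ _
        _ = τ / 4 := by field_simp
    have i2 : c₂ * min ε₁ (τ / (4 * (c₂ + 1))) ≤ τ / 4 := by
      calc c₂ * min ε₁ (τ / (4 * (c₂ + 1))) ≤ (c₂ + 1) * (τ / (4 * (c₂ + 1))) := by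
            gcongr
            · linarith
            · exact min_le_right _ _
        _ = τ / 4 := by field_simp
    linarith
  rw [(Submodule.closed_of_finiteDimensional W).closure_eq] at hcl
  have hres := W.smul_mem (Real.pi)⁻¹ hcl
  rw [hQ1, smul_smul, inv_mul_cancel₀ Real.pi_ne_zero, one_smul, hβ, hβ] at hres
  convert hres using 1
  simp only [map_sub, sub_apply]
  abel

end SmallLoop

namespace CompactSymmetricSpace

variable {𝔸 𝔤 : Type*} [NormedRing 𝔸] [NormedAlgebra ℝ 𝔸] [FiniteDimensional ℝ 𝔸]
  [NormedAddCommGroup 𝔤] [InnerProductSpace ℝ 𝔤] [FiniteDimensional ℝ 𝔤]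

variable {S : CompactSymmetricSpace 𝔸 𝔤}

namespace Submfd

variable {N : S.Submfd} {F : Type*} [NormedAddCommGroup F] [NormedSpace ℝ F]
  {ψ : F → S.Q} {U : Set F}

theorem IsParam.isNullLoop (h : N.IsParam U ψ) (hc : ContinuousOn ψ U) {r : ℝ}
    (hr : Metric.closedBall 0 r ⊆ U) {x : ℝ → F} (hx : ContDiff ℝ ∞ x) (h0 : x 0 = 0)
    (h1 : x 1 = 0) (hxr : ∀ t, ‖x t‖ ≤ r) : N.IsNullLoop (ψ 0) (fun t => ψ (x t)) := by
  have hxU : ∀ t, x t ∈ U := fun t => hr (by simpa using hxr t)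
  have hr0 : 0 ≤ r := (norm_nonneg _).trans (hxr 0)
  refine ⟨fun t _ => ?_, ?_⟩
  · obtain ⟨V, hV, hxV, g, hg, hp⟩ := h.smooth (x t) (hxU t)
    refine ⟨x ⁻¹' V, hV.preimage hx.continuous, hxV, fun s => g (x s), ?_, fun s hs => hp _ hs⟩
    rw [contMDiffOn_iff_contDiffOn] at hg ⊢
    exact hg.comp hx.contDiffOn fun s hs => hs
  · let D := Metric.closedBall (0 : F) r
    have hDc : Convex ℝ D := convex_closedBall _ _
    have hne : D.Nonempty := ⟨0, by simpa [D] using hr0⟩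
    have : ContractibleSpace D := hDc.contractibleSpace hne
    let f : C(D, N.carrier) := ⟨fun z => ⟨ψ z, h.mem _ (hr z.2)⟩,
      (hc.comp_continuous continuous_subtype_val fun z => hr z.2).subtype_mk
        fun z => h.mem _ (hr z.2)⟩
    let o : D := ⟨0, by simpa [D] using hr0⟩
    have hxD : ∀ t, x t ∈ D := fun t => by simpa [D] using hxr t
    let q : Path o o :=
      { toFun := fun t => ⟨x t, hxD t⟩
        continuous_toFun := (hx.continuous.comp continuous_subtype_val).subtype_mk fun t => hxD t
        source' := Subtype.ext (by simpa [o] using h0)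
        target' := Subtype.ext (by simpa [o] using h1) }
    refine ⟨h.mem _ (hr o.2), q.map f.continuous, fun t => rfl, ?_⟩
    have hq : q.Homotopic (Path.refl o) := SimplyConnectedSpace.paths_homotopic _ _
    exact hq.map f

variable [FiniteDimensional ℝ F]

/-- Parallel transport along a small loop in a totally geodesic submanifold. -/
theorem IsParam.exists_parallel (h : N.IsParam U ψ) (hN : N.IsTotallyGeodesic) (h0 : 0 ∈ U) :
    ∃ r > 0, ∃ δ > 0, Metric.closedBall 0 r ⊆ U ∧ ∀ (x x' : ℝ → F), (∀ t, HasDerivAt x (x' t) t) →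
      Continuous x' → (∀ t, ‖x t‖ ≤ r) → (∀ t, ‖x' t‖ ≤ δ) → ∀ y₀ : F, ∃ ξ : ℝ → 𝔤,
        ξ 0 = S.vdiff ψ (x 0) y₀ ∧ (∀ t ∈ Icc (0 : ℝ) 1, ξ t ∈ N.tangent (ψ (x t))) ∧
        ∀ t ∈ Icc (0 : ℝ) 1, HasDerivWithinAt ξ (S.br (S.vdiff ψ (x t) (x' t)) (ξ t)) (Icc 0 1) t := by
  have := FiniteDimensional.complete ℝ F
  have := FiniteDimensional.proper ℝ F
  obtain ⟨A₁, hA₁⟩ := (S.vdiff ψ 0).toLinearMap.exists_leftInverse_of_injective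
    (LinearMap.ker_eq_bot.2 (h.inj 0 h0))
  let A : 𝔤 →L[ℝ] F := LinearMap.toContinuousLinearMap A₁
  have hA : A ∘L S.vdiff ψ 0 = 1 := by
    ext z
    exact LinearMap.congr_fun hA₁ z
  have hcont : ContinuousOn (S.vdiff ψ) U := (contDiffOn_vdiff h.smooth).continuousOn
  have hcont' : ContinuousOn (fderiv ℝ (S.vdiff ψ)) U := fun z hz =>
    ((h.contDiffAt_vdiff hz).fderiv_right (m := ∞) (by simp)).continuousAt.continuousWithinAt
  have hunit : ∀ᶠ z in 𝓝 (0 : F), IsUnit (A ∘L S.vdiff ψ z) := by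
    have hc : ContinuousAt (fun z => A ∘L S.vdiff ψ z) 0 :=
      continuousAt_const.clm_comp (hcont.continuousAt (h.isOpen.mem_nhds h0))
    refine hc.eventually (p := fun T => IsUnit T) ?_
    change ∀ᶠ T in 𝓝 (A ∘L S.vdiff ψ 0), IsUnit T
    rw [hA]
    exact Units.isOpen.mem_nhds isUnit_one
  obtain ⟨r, hr, hrsub⟩ := Metric.nhds_basis_closedBall.mem_iff.1
    (Filter.inter_mem hunit (h.isOpen.mem_nhds h0))
  let ρ : F → 𝔤 →L[ℝ] F := fun z => Ring.inverse (A ∘L S.vdiff ψ z) ∘L A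
  have hρ : ∀ z ∈ Metric.closedBall (0 : F) r, ∀ v, ρ z (S.vdiff ψ z v) = v := by
    intro z hz v
    have := Ring.inverse_mul_cancel _ (hrsub hz).1
    exact congrArg (fun T : F →L[ℝ] F => T v) this
  have hρc : ContinuousOn ρ (Metric.closedBall 0 r) := by
    intro z hz
    have h1 : ContinuousAt (Ring.inverse (M₀ := F →L[ℝ] F)) (A ∘L S.vdiff ψ z) := by
      obtain ⟨u, hu⟩ := (hrsub hz).1
      rw [← hu]
      exact NormedRing.inverse_continuousAt u
    have h2 : ContinuousWithinAt (fun z => A ∘L S.vdiff ψ z) (Metric.closedBall 0 r) z :=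
      continuousWithinAt_const.clm_comp ((hcont z (hrsub hz).2).mono fun y hy => (hrsub hy).2)
    exact (ContinuousAt.comp_continuousWithinAt (f := fun z => A ∘L S.vdiff ψ z) h1 h2).clm_comp
      continuousWithinAt_const
  have hcpt : IsCompact (Metric.closedBall (0 : F) r) := isCompact_closedBall _ _
  obtain ⟨K₁, hK₁⟩ := hcpt.exists_bound_of_continuousOn hρc
  obtain ⟨K₂, hK₂⟩ := hcpt.exists_bound_of_continuousOn (hcont.mono fun y hy => (hrsub hy).2)
  obtain ⟨K₃, hK₃⟩ := hcpt.exists_bound_of_continuousOn (E := F →L[ℝ] F →L[ℝ] 𝔤)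
    (f := fderiv ℝ (S.vdiff ψ)) (hcont'.mono fun y hy => (hrsub hy).2)
  have h0r : (0 : F) ∈ Metric.closedBall (0 : F) r := by simpa using hr.le
  have hK₁0 : 0 ≤ K₁ := (norm_nonneg _).trans (hK₁ 0 h0r)
  have hK₂0 : 0 ≤ K₂ := (norm_nonneg _).trans (hK₂ 0 h0r)
  have hK₃0 : 0 ≤ K₃ := (norm_nonneg _).trans (hK₃ 0 h0r)
  let K := K₁ * (K₃ + ‖S.br‖ * K₂ * K₂) + 1
  have hK : 0 < K := by positivity
  refine ⟨r, hr, 1 / (2 * K), by positivity, fun y hy => (hrsub hy).2, ?_⟩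
  intro x x' hx hx' hxr hxδ y₀
  have hxb : ∀ t, x t ∈ Metric.closedBall (0 : F) r := fun t => by simpa using hxr t
  have hxU : ∀ t, x t ∈ U := fun t => (hrsub (hxb t)).2
  have hxc : Continuous x := continuous_iff_continuousAt.2 fun t => (hx t).continuousAt
  let E : ℝ → F →L[ℝ] 𝔤 := fun t => S.vdiff ψ (x t)
  let m : ℝ → F →L[ℝ] 𝔤 := fun t => fderiv ℝ (S.vdiff ψ) (x t) (x' t) - S.br (E t (x' t)) ∘L E t
  let C : ℝ → F →L[ℝ] F := fun t => -(ρ (x t) ∘L m t)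
  have hEc : Continuous E := hcont.comp_continuous hxc hxU
  have hCc : Continuous C :=
    ((hρc.comp_continuous hxc hxb).clm_comp
      (((hcont'.comp_continuous hxc hxU).clm_apply hx').sub
        ((S.br.continuous.comp (hEc.clm_apply hx')).clm_comp hEc))).neg
  have hCb : ∀ t, ‖C t‖ ≤ 1 / 2 := by
    intro t
    have i1 : ‖m t‖ ≤ (K₃ + ‖S.br‖ * K₂ * K₂) * ‖x' t‖ := by
      have j1 : ‖fderiv ℝ (S.vdiff ψ) (x t) (x' t)‖ ≤ K₃ * ‖x' t‖ :=
        (ContinuousLinearMap.le_opNorm _ _).trans (by gcongr; exact hK₃ _ (hxb t))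
      have j2 : ‖E t‖ ≤ K₂ := hK₂ _ (hxb t)
      have j3 : ‖S.br (E t (x' t)) ∘L E t‖ ≤ ‖S.br‖ * (K₂ * ‖x' t‖) * K₂ := by
        refine (ContinuousLinearMap.opNorm_comp_le _ _).trans ?_
        gcongr
        refine (S.br.le_opNorm _).trans ?_
        gcongr
        exact ((E t).le_opNorm _).trans (by gcongr)
      calc ‖m t‖ ≤ K₃ * ‖x' t‖ + ‖S.br‖ * (K₂ * ‖x' t‖) * K₂ :=
            (norm_sub_le _ _).trans (add_le_add j1 j3)
        _ = _ := by ring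
    calc ‖C t‖ = ‖ρ (x t) ∘L m t‖ := norm_neg _
      _ ≤ K₁ * ((K₃ + ‖S.br‖ * K₂ * K₂) * ‖x' t‖) :=
        (ContinuousLinearMap.opNorm_comp_le _ _).trans (by gcongr; exact hK₁ _ (hxb t))
      _ = K₁ * (K₃ + ‖S.br‖ * K₂ * K₂) * ‖x' t‖ := by ring
      _ ≤ K * (1 / (2 * K)) := by
        gcongr
        · simp [K]
        · exact hxδ t
      _ = 1 / 2 := by field_simp
  obtain ⟨y, hy0, hy⟩ := exists_linear_ode_solution hCc.continuousOn (fun t _ => hCb t) y₀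
  refine ⟨fun t => E t (y t), by simp [E, hy0], fun t _ => h.vdiff_mem (hxU t) _, fun t ht => ?_⟩
  have hE : HasDerivAt E (fderiv ℝ (S.vdiff ψ) (x t) (x' t)) t :=
    ((h.contDiffAt_vdiff (hxU t)).differentiableAt (by simp)).hasFDerivAt.comp_hasDerivAt t (hx t)
  have hd := hE.hasDerivWithinAt.clm_apply (hy t ht)
  convert hd using 1
  have hm : m t (y t) ∈ N.tangent (ψ (x t)) := h.covDeriv_mem hN (hxU t) (x' t) (y t)
  rw [← h.range_eq _ (hxU t)] at hm
  obtain ⟨z, hz⟩ := hm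
  have hz' : E t z = m t (y t) := hz
  have hEC : E t (C t (y t)) = -m t (y t) := by
    have : C t (y t) = -ρ (x t) (m t (y t)) := rfl
    rw [this, ← hz', map_neg, hρ _ (hxb t)]
  rw [hEC]
  simp [m, E]

theorem IsParam.br_br_mem_of_isHolonomyInvariant (h : N.IsParam U ψ) (hc : ContinuousOn ψ U)
    (hN : N.IsTotallyGeodesic) (h0 : 0 ∈ U) {W : Submodule ℝ 𝔤}
    (hW : N.IsHolonomyInvariant (ψ 0) W) (a b y₀ : F) (hy₀ : S.vdiff ψ 0 y₀ ∈ W) :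
    S.br (S.br (S.vdiff ψ 0 a) (S.vdiff ψ 0 b)) (S.vdiff ψ 0 y₀) ∈ W := by
  obtain ⟨r, hr, δ, hδ, hrU, hpar⟩ := h.exists_parallel hN h0
  obtain ⟨R, hR, hγ⟩ := exists_norm_circleLoop_le a b
  have hd := ((h.contDiffAt_vdiff h0).differentiableAt (by simp)).hasFDerivAt
  have key := mem_of_holonomy_small_loops S.br hd a b W hy₀ (ε₀ := min r δ / R) (by positivity)
    (fun ε hε hεle => ?_)
  · rw [fderiv_vdiff_antisymm h.isOpen h.smooth h0] at key
    convert key using 1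
    rw [S.br_jacobi (S.vdiff ψ 0 a), map_smul, smul_apply]
    module
  · have hεR : ε * R ≤ min r δ := (le_div_iff₀ hR).1 hεle
    have hx : ∀ t, HasDerivAt (fun t => ε • circleLoop a b t) (ε • circleLoopDeriv a b t) t :=
      fun t => (hasDerivAt_circleLoop a b t).const_smul ε
    have hxr : ∀ t, ‖ε • circleLoop a b t‖ ≤ r := fun t => by
      rw [norm_smul, Real.norm_eq_abs, abs_of_pos hε]
      exact (mul_le_mul_of_nonneg_left (hγ t).1 hε.le).trans (hεR.trans (min_le_left _ _))
    have hxδ : ∀ t, ‖ε • circleLoopDeriv a b t‖ ≤ δ := fun t => by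
      rw [norm_smul, Real.norm_eq_abs, abs_of_pos hε]
      exact (mul_le_mul_of_nonneg_left (hγ t).2 hε.le).trans (hεR.trans (min_le_right _ _))
    obtain ⟨ξ, hξ0, hξN, hξ⟩ := hpar _ _ hx ((continuous_circleLoopDeriv a b).const_smul ε) hxr hxδ y₀
    have hxU : ∀ t, ε • circleLoop a b t ∈ U := fun t => hrU (by simpa using hxr t)
    rw [circleLoop_zero, smul_zero] at hξ0
    refine ⟨ξ, hξ0, ?_, fun t ht => ?_, hξ⟩
    · refine hW (fun t => ψ (ε • circleLoop a b t)) ξ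
        (h.isNullLoop hc hrU ((contDiff_circleLoop a b).const_smul ε) (by simp [circleLoop_zero])
          (by simp [circleLoop_one]) hxr)
        (fun t ht => ⟨hξN t ht, _, hξ t ht, fun w hw => ?_⟩) (hξ0 ▸ hy₀)
      exact inner_isotropy_tangent (br_mem_isotropy (vdiff_mem_tangent h.smooth (hxU t) _)
        (h.tangent_le (hxU t) (hξN t ht))) (h.tangent_le (hxU t) hw)
    · have hn : ∀ s ∈ Icc (0 : ℝ) 1, HasDerivWithinAt (fun s => ⟪ξ s, ξ s⟫) 0 (Icc 0 1) s := by
        intro s hs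
        have := (hξ s hs).inner ℝ (hξ s hs)
        rw [S.inner_br_left, add_neg_cancel] at this
        exact this
      have := norm_image_sub_le_of_norm_deriv_le_segment' hn (C := 0) (fun _ _ => by simp) t ht
      rw [zero_mul, norm_le_zero_iff, sub_eq_zero, real_inner_self_eq_norm_sq,
        real_inner_self_eq_norm_sq, hξ0] at this
      exact (abs_le_of_sq_le_sq' this.le (norm_nonneg _)).2

/-- Complementary subspaces of the tangent space of a totally geodesic submanifold that are
invariant under the restricted holonomy group commute. -/
theorem br_eq_zero_of_isHolonomyInvariant (hN : N.IsTotallyGeodesic) {y : S.Q}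
    (hy : y ∈ N.carrier) {W W' : Submodule ℝ 𝔤} (hW : W ≤ N.tangent y) (hW' : W' ≤ N.tangent y)
    (hperp : W ⟂ W') (hinv : N.IsHolonomyInvariant y W') {w w' : 𝔤} (hw : w ∈ W) (hw' : w' ∈ W') :
    S.br w w' = 0 := by
  obtain ⟨U, ψ, h, h0, rfl, hc⟩ := N.exists_isParam hy
  have h1 := hW hw
  have h2 := hW' hw'
  rw [← h.range_eq 0 h0] at h1 h2
  obtain ⟨a, rfl⟩ := h1
  obtain ⟨b, rfl⟩ := h2
  have key := h.br_br_mem_of_isHolonomyInvariant hc hN h0 hinv a b b hw'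
  have := Submodule.isOrtho_iff_inner_eq.1 hperp _ hw _ key
  rw [← inner_self_eq_zero (𝕜 := ℝ)]
  change ⟪S.br (S.vdiff ψ 0 a) (S.vdiff ψ 0 b), S.br (S.vdiff ψ 0 a) (S.vdiff ψ 0 b)⟫ = 0
  change ⟪S.vdiff ψ 0 a, S.br (S.br (S.vdiff ψ 0 a) (S.vdiff ψ 0 b)) (S.vdiff ψ 0 b)⟫ = 0 at this
  set p := S.vdiff ψ 0 a
  set q := S.vdiff ψ 0 b
  rw [S.br_swap (S.br p q) q, inner_neg_right] at this
  have e := S.inner_br_left q p (S.br p q)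
  rw [S.br_swap q p, inner_neg_left] at e
  linarith

end Submfd

end CompactSymmetricSpace

end

noncomputable section

/-! ### Functions with vanishing derivative on a connected manifold -/

section Constancy

variable {E : Type*} [NormedAddCommGroup E] [NormedSpace ℝ E]
  {M : Type*} [TopologicalSpace M] [ChartedSpace E M]

theorem eq_of_forall_hasDerivAt_chartCurve_zero [PreconnectedSpace M] [IsManifold 𝓘(ℝ, E) ∞ M]
    {g : M → ℝ} (hg : MDifferentiable 𝓘(ℝ, E) 𝓘(ℝ, ℝ) g)
    (h : ∀ m (X : E), HasDerivAt (fun t => g (chartCurve m X t)) 0 0) (m m' : M) : g m = g m' := by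
  have hz : ∀ m, mfderiv 𝓘(ℝ, E) 𝓘(ℝ, ℝ) g m = 0 := by
    intro m
    refine ContinuousLinearMap.ext fun (X : E) => ?_
    exact ((hg m).hasMFDerivAt.hasDerivAt_chartCurve X).unique (h m X)
  suffices hl : IsLocallyConstant g from hl.apply_eq_of_preconnectedSpace m m'
  rw [IsLocallyConstant.iff_eventually_eq]
  intro p
  let e := chartAt E p
  have hd : ∀ z ∈ e.target, HasFDerivAt (fun z => g (e.symm z)) (0 : E →L[ℝ] ℝ) z := by
    intro z hz'
    have h1 : MDifferentiableAt 𝓘(ℝ, E) 𝓘(ℝ, E) e.symm z :=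
      ((contMDiffOn_chart_symm (I := 𝓘(ℝ, E)) (n := ∞) (x := p)).contMDiffAt
        (e.open_target.mem_nhds hz')).mdifferentiableAt (by simp)
    have h2 := HasMFDerivAt.comp z (hg (e.symm z)).hasMFDerivAt h1.hasMFDerivAt
    rw [hz, ContinuousLinearMap.zero_comp] at h2
    exact hasMFDerivAt_iff_hasFDerivAt.1 h2
  obtain ⟨r, hr, hball⟩ := Metric.isOpen_iff.1 e.open_target (e p) (mem_chart_target E p)
  have hev : ∀ᶠ q in 𝓝 p, q ∈ e.source ∧ e q ∈ Metric.ball (e p) r := by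
    exact Filter.Eventually.and (e.open_source.mem_nhds (mem_chart_source E p))
      ((e.continuousAt (mem_chart_source E p)).eventually (Metric.ball_mem_nhds _ hr))
  filter_upwards [hev] with q hq
  have := (convex_ball (e p) r).is_const_of_fderivWithin_eq_zero (𝕜 := ℝ) (f := fun z => g (e.symm z))
    (fun z hz' => (hd z (hball hz')).differentiableAt.differentiableWithinAt)
    (fun z hz' => by
      rw [fderivWithin_of_isOpen Metric.isOpen_ball hz', (hd z (hball hz')).fderiv])
    hq.2 (Metric.mem_ball_self hr)
  simpa [e.left_inv hq.1, e.left_inv (mem_chart_source E p)] using this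

end Constancy

namespace CompactSymmetricSpace

variable {𝔸 𝔤 : Type*} [NormedRing 𝔸] [NormedAlgebra ℝ 𝔸] [FiniteDimensional ℝ 𝔸]
  [NormedAddCommGroup 𝔤] [InnerProductSpace ℝ 𝔤] [FiniteDimensional ℝ 𝔤]

variable {S : CompactSymmetricSpace 𝔸 𝔤} {E : Type*} [NormedAddCommGroup E] [NormedSpace ℝ E]
  {M : Type*} [TopologicalSpace M] [ChartedSpace E M] {f : M → S.Q}

/-! ### Parallel normal fields -/

theorem IsImmersion.isDifferentialAt (hf : S.IsImmersion E f) (m : M) :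
    S.IsDifferentialAt 𝓘(ℝ, E) f m (S.diff 𝓘(ℝ, E) f m) := hf.1.isDifferentialAt (mem_univ m)

theorem IsImmersion.tangentOf_le (hf : S.IsImmersion E f) (m : M) :
    S.tangentOf E f m ≤ S.tangent (f m) := by
  rintro _ ⟨X, rfl⟩
  exact (hf.isDifferentialAt m).mem_tangent X

theorem mem_tangentOf_of_forall_inner [FiniteDimensional ℝ E] (hf : S.IsImmersion E f) {m : M}
    {ξ : 𝔤} (hξ : ξ ∈ S.tangent (f m)) (h : ∀ w ∈ S.normalOf E f m, ⟪ξ, w⟫ = 0) :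
    ξ ∈ S.tangentOf E f m := by
  rw [← Submodule.orthogonal_orthogonal (S.tangentOf E f m)]
  obtain ⟨u, hu, v, hv, e⟩ := (S.tangentOf E f m).exists_add_mem_mem_orthogonal ξ
  have hvn : v ∈ S.normalOf E f m := by
    refine ⟨?_, hv⟩
    have : v = ξ - u := by rw [e]; abel
    rw [this]
    exact Submodule.sub_mem _ hξ (hf.tangentOf_le m hu)
  have h1 := h v hvn
  rw [e, inner_add_left, Submodule.inner_right_of_mem_orthogonal hu hv, zero_add] at h1
  rw [inner_self_eq_zero.1 h1, add_zero] at e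
  rw [Submodule.orthogonal_orthogonal, e]
  exact hu

namespace IsParallelNormal

variable {ν ν₁ ν₂ : M → 𝔤}

theorem mem_normalOf (h : S.IsParallelNormal E f ν) (m : M) : ν m ∈ S.normalOf E f m := h.2.1 m

theorem hasMFDerivAt (h : S.IsParallelNormal E f ν) (m : M) :
    HasMFDerivAt 𝓘(ℝ, E) 𝓘(ℝ, 𝔤) ν m (mfderiv 𝓘(ℝ, E) 𝓘(ℝ, 𝔤) ν m) :=
  ((h.1 m).mdifferentiableAt (by simp)).hasMFDerivAt

theorem hasDerivAt_chartCurve (h : S.IsParallelNormal E f ν) (m : M) (X : E) :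
    ∃ ν' : 𝔤, HasDerivAt (fun t => ν (chartCurve m X t)) ν' 0 ∧
      ∀ w ∈ S.normalOf E f m, ⟪ν', w⟫ = 0 :=
  ⟨_, (h.hasMFDerivAt m).hasDerivAt_chartCurve X, h.2.2 m X⟩

theorem of_hasDerivAt (hs : ContMDiff 𝓘(ℝ, E) 𝓘(ℝ, 𝔤) ∞ ν) (hn : ∀ m, ν m ∈ S.normalOf E f m)
    (h : ∀ m (X : E), ∃ ν' : 𝔤, HasDerivAt (fun t => ν (chartCurve m X t)) ν' 0 ∧
      ∀ w ∈ S.normalOf E f m, ⟪ν', w⟫ = 0) : S.IsParallelNormal E f ν := by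
  refine ⟨hs, hn, fun m X w hw => ?_⟩
  let Y : E := X
  obtain ⟨ν', h1, h2⟩ := h m Y
  have h3 := (((hs m).mdifferentiableAt (by simp)).hasMFDerivAt.hasDerivAt_chartCurve Y).unique h1
  exact (congrArg (fun z : 𝔤 => ⟪z, w⟫) h3).trans (h2 w hw)

theorem zero : S.IsParallelNormal E f (fun _ => (0 : 𝔤)) :=
  of_hasDerivAt contMDiff_const (fun _ => Submodule.zero_mem _) fun _ _ =>
    ⟨0, hasDerivAt_const _ _, fun w _ => inner_zero_left w⟩

theorem add (h₁ : S.IsParallelNormal E f ν₁) (h₂ : S.IsParallelNormal E f ν₂) :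
    S.IsParallelNormal E f (fun m => ν₁ m + ν₂ m) := by
  refine of_hasDerivAt (h₁.1.add h₂.1) (fun m => Submodule.add_mem _ (h₁.2.1 m) (h₂.2.1 m))
    fun m X => ?_
  obtain ⟨a, ha, ha'⟩ := h₁.hasDerivAt_chartCurve m X
  obtain ⟨b, hb, hb'⟩ := h₂.hasDerivAt_chartCurve m X
  exact ⟨a + b, ha.fun_add hb, fun w hw => by rw [inner_add_left, ha' w hw, hb' w hw, add_zero]⟩

theorem const_smul (h : S.IsParallelNormal E f ν) (r : ℝ) :
    S.IsParallelNormal E f (fun m => r • ν m) := by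
  refine of_hasDerivAt ((contDiff_const_smul (𝕜 := ℝ) (n := ∞) r).contMDiff.comp h.1)
    (fun m => Submodule.smul_mem _ r (h.2.1 m)) fun m X => ?_
  obtain ⟨a, ha, ha'⟩ := h.hasDerivAt_chartCurve m X
  exact ⟨r • a, ha.fun_const_smul r, fun w hw => by rw [real_inner_smul_left, ha' w hw, mul_zero]⟩

theorem sub (h₁ : S.IsParallelNormal E f ν₁) (h₂ : S.IsParallelNormal E f ν₂) :
    S.IsParallelNormal E f (fun m => ν₁ m - ν₂ m) := by
  simpa [sub_eq_add_neg] using h₁.add (h₂.const_smul (-1))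

variable [IsManifold 𝓘(ℝ, E) ∞ M]

theorem inner_const [PreconnectedSpace M] (h₁ : S.IsParallelNormal E f ν₁)
    (h₂ : S.IsParallelNormal E f ν₂) (m m' : M) : ⟪ν₁ m, ν₂ m⟫ = ⟪ν₁ m', ν₂ m'⟫ := by
  refine eq_of_forall_hasDerivAt_chartCurve_zero (E := E) (g := fun m => ⟪ν₁ m, ν₂ m⟫) ?_ ?_ m m'
  · exact ((contDiff_inner (𝕜 := ℝ) (n := ∞)).contMDiff.comp
      (h₁.1.prodMk_space h₂.1)).mdifferentiable (by simp)
  · intro m X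
    obtain ⟨a, ha, ha'⟩ := h₁.hasDerivAt_chartCurve m X
    obtain ⟨b, hb, hb'⟩ := h₂.hasDerivAt_chartCurve m X
    have := ha.inner ℝ hb
    rw [chartCurve_zero, ha' _ (h₂.mem_normalOf m), real_inner_comm, hb' _ (h₁.mem_normalOf m),
      add_zero] at this
    exact this

theorem eq_of_eq [PreconnectedSpace M] (h₁ : S.IsParallelNormal E f ν₁)
    (h₂ : S.IsParallelNormal E f ν₂) {m : M} (h : ν₁ m = ν₂ m) : ν₁ = ν₂ := by
  funext m'
  have := (h₁.sub h₂).inner_const (h₁.sub h₂) m' m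
  rw [h, sub_self, inner_zero_left] at this
  exact sub_eq_zero.1 (inner_self_eq_zero.1 this)

/-- If the normal spaces are Lie triple systems, the brackets of parallel normal fields have
constant length. -/
theorem norm_br_const [PreconnectedSpace M]
    (htriple : ∀ m, ∀ u ∈ S.normalOf E f m, ∀ v ∈ S.normalOf E f m, ∀ w ∈ S.normalOf E f m,
      S.br (S.br u v) w ∈ S.normalOf E f m)
    (h₁ : S.IsParallelNormal E f ν₁) (h₂ : S.IsParallelNormal E f ν₂) (m m' : M) :
    ⟪S.br (ν₁ m) (ν₂ m), S.br (ν₁ m) (ν₂ m)⟫ = ⟪S.br (ν₁ m') (ν₂ m'), S.br (ν₁ m') (ν₂ m')⟫ := by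
  refine eq_of_forall_hasDerivAt_chartCurve_zero (E := E)
    (g := fun m => ⟪S.br (ν₁ m) (ν₂ m), S.br (ν₁ m) (ν₂ m)⟫) ?_ ?_ m m'
  · have hb : ContDiff ℝ ∞ fun p : 𝔤 × 𝔤 => ⟪S.br p.1 p.2, S.br p.1 p.2⟫ := by
      have : ContDiff ℝ ∞ fun p : 𝔤 × 𝔤 => S.br p.1 p.2 := S.br.isBoundedBilinearMap.contDiff
      exact this.inner ℝ this
    exact (hb.contMDiff.comp (h₁.1.prodMk_space h₂.1)).mdifferentiable (by simp)
  · intro m X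
    obtain ⟨a, ha, ha'⟩ := h₁.hasDerivAt_chartCurve m X
    obtain ⟨b, hb, hb'⟩ := h₂.hasDerivAt_chartCurve m X
    have hd := (S.br.hasFDerivAt.comp_hasDerivAt (0 : ℝ) ha).clm_apply hb
    have := hd.inner ℝ hd
    simp only [Function.comp_def, chartCurve_zero] at this
    refine this.congr_deriv ?_
    set u := ν₁ m with hu
    set v := ν₂ m with hv
    have hun := h₁.mem_normalOf m
    have hvn := h₂.mem_normalOf m
    rw [← hu] at hun
    rw [← hv] at hvn
    have t1 := htriple m u hun v hvn v hvn
    have t2 := htriple m u hun v hvn u hun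
    have a0 : ⟪a, S.br (S.br u v) v⟫ = 0 := ha' _ t1
    have b0 : ⟪b, S.br (S.br u v) u⟫ = 0 := hb' _ t2
    have e1 : ⟪S.br a v, S.br u v⟫ = -⟪a, S.br (S.br u v) v⟫ := by
      rw [S.br_swap a v, inner_neg_left, S.inner_br_left, S.br_swap (S.br u v) v, inner_neg_right]
    have e2 : ⟪S.br u b, S.br u v⟫ = ⟪b, S.br (S.br u v) u⟫ := by
      rw [S.inner_br_left, S.br_swap (S.br u v) u, inner_neg_right]
    have e3 : ⟪S.br a v + S.br u b, S.br u v⟫ = 0 := by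
      rw [inner_add_left, e1, e2, a0, b0, neg_zero, add_zero]
    rw [real_inner_comm, e3, add_zero]

end IsParallelNormal

/-! ### The normal spaces of an equifocal submanifold -/

theorem endPoint_zero (f : M → S.Q) : S.endPoint f (fun _ => 0) = f := by
  funext m
  simp [endPoint, Exp, expG_zero]

theorem IsSection.tangent_eq (hf : S.IsImmersion E f) {m : M} {N : S.Submfd}
    (h : S.IsSection E f m N) : N.tangent (f m) = S.normalOf E f m := by
  obtain ⟨hm, -, -, -, hdim, hperp⟩ := h
  obtain ⟨U, ψ, hψ, h0, hψ0, -⟩ := N.exists_isParam hm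
  have h1 := (hperp _ IsParallelNormal.zero (by rwa [endPoint_zero])).2 m (by rwa [endPoint_zero])
  rw [endPoint_zero] at h1
  refine Submodule.eq_of_le_of_finrank_eq (fun v hv => ⟨?_, ?_⟩) ?_
  · rw [← hψ0] at hv ⊢
    exact hψ.tangent_le h0 hv
  · exact h1 hv
  · rw [← hdim, ← hψ0, ← hψ.range_eq 0 h0, LinearMap.finrank_range_of_inj (hψ.inj 0 h0)]
    simp

theorem IsEquifocal.br_br_mem (hf : S.IsEquifocal E f) (m : M) :
    ∀ u ∈ S.normalOf E f m, ∀ v ∈ S.normalOf E f m, ∀ w ∈ S.normalOf E f m,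
      S.br (S.br u v) w ∈ S.normalOf E f m := by
  obtain ⟨N, hN⟩ := hf.sections m
  rw [← hN.tangent_eq hf.immersion]
  intro u hu v hv w hw
  exact Submfd.br_br_mem hN.2.2.2.1 hN.1 hu hv hw

theorem mem_parallelSubbundle_iff {x₀ m : M} {W : Submodule ℝ 𝔤} {v : 𝔤} :
    v ∈ S.parallelSubbundle E f x₀ W m ↔ ∃ ν, S.IsParallelNormal E f ν ∧ ν x₀ ∈ W ∧ ν m = v := by
  refine ⟨fun h => ?_, fun h => Submodule.subset_span h⟩
  induction h using Submodule.span_induction with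
  | mem x h => exact h
  | zero => exact ⟨_, IsParallelNormal.zero, W.zero_mem, rfl⟩
  | add x y _ _ hx hy =>
    obtain ⟨a, ha, ha', rfl⟩ := hx
    obtain ⟨b, hb, hb', rfl⟩ := hy
    exact ⟨_, ha.add hb, W.add_mem ha' hb', rfl⟩
  | smul r x _ hx =>
    obtain ⟨a, ha, ha', rfl⟩ := hx
    exact ⟨_, ha.const_smul r, W.smul_mem r ha', rfl⟩

section Splitting

variable [IsManifold 𝓘(ℝ, E) ∞ M] [PreconnectedSpace M] {x₀ : M} {N : S.Submfd}
  {W : Fin 2 → Submodule ℝ 𝔤} {ν μ : M → 𝔤}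

theorem IsParallelNormal.mem_parallelSubbundle {m₁ : M} {V : Submodule ℝ 𝔤}
    (hν : S.IsParallelNormal E f ν) (h : ν m₁ ∈ S.parallelSubbundle E f x₀ V m₁) (m : M) :
    ν m ∈ S.parallelSubbundle E f x₀ V m := by
  obtain ⟨μ, hμ, hμV, e⟩ := mem_parallelSubbundle_iff.1 h
  rw [← hμ.eq_of_eq hν e]
  exact mem_parallelSubbundle_iff.2 ⟨μ, hμ, hμV, rfl⟩

theorem IsSectionSplitting.isOrtho (hW : S.IsSectionSplitting E f x₀ N W) {i j : Fin 2}
    (hij : j ≠ i) : W i ⟂ W j := by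
  fin_cases i <;> fin_cases j <;> first | exact absurd rfl hij | skip
  · exact hW.orthogonal
  · exact hW.orthogonal.symm

theorem IsSectionSplitting.le_tangent (hW : S.IsSectionSplitting E f x₀ N W) (i : Fin 2) :
    W i ≤ N.tangent (f x₀) := by
  rw [← hW.sup_eq]
  fin_cases i
  · exact le_sup_left
  · exact le_sup_right

theorem IsSectionSplitting.br_eq_zero (hf : S.IsEquifocal E f)
    (hW : S.IsSectionSplitting E f x₀ N W) {i j : Fin 2} (hij : j ≠ i) {m : M} {u w : 𝔤}
    (hu : u ∈ S.parallelSubbundle E f x₀ (W i) m) (hw : w ∈ S.parallelSubbundle E f x₀ (W j) m) :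
    S.br u w = 0 := by
  obtain ⟨ν, hν, hνW, rfl⟩ := mem_parallelSubbundle_iff.1 hu
  obtain ⟨μ, hμ, hμW, rfl⟩ := mem_parallelSubbundle_iff.1 hw
  have h0 : S.br (ν x₀) (μ x₀) = 0 :=
    Submfd.br_eq_zero_of_isHolonomyInvariant hW.isSection.2.2.2.1 hW.isSection.1 (hW.le_tangent i)
      (hW.le_tangent j) (hW.isOrtho hij) (hW.invariant j) hνW hμW
  have := IsParallelNormal.norm_br_const hf.br_br_mem hν hμ m x₀
  rw [h0, inner_zero_left] at this
  exact inner_self_eq_zero.1 this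

/-- A normal vector orthogonal to one of the summands of the normal bundle is in the other one. -/
theorem IsSectionSplitting.mem_parallelSubbundle_of_inner (hf : S.IsEquifocal E f)
    (hW : S.IsSectionSplitting E f x₀ N W) (i : Fin 2) {m : M} {w : 𝔤}
    (hw : w ∈ S.normalOf E f m)
    (h : ∀ j, j ≠ i → ∀ u ∈ S.parallelSubbundle E f x₀ (W j) m, ⟪w, u⟫ = 0) :
    w ∈ S.parallelSubbundle E f x₀ (W i) m := by
  obtain ⟨ν, hν, rfl⟩ := hf.trivialNormalHolonomy m w hw
  obtain ⟨j, hij⟩ := exists_ne i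
  have hsup : W i ⊔ W j = N.tangent (f x₀) := by
    rw [← hW.sup_eq]
    fin_cases i <;> fin_cases j <;> first | exact absurd rfl hij | skip
    · rfl
    · exact sup_comm _ _
  have hmem : ν x₀ ∈ W i ⊔ W j := by
    rw [hsup, hW.isSection.tangent_eq hf.immersion]
    exact hν.mem_normalOf x₀
  obtain ⟨a, ha, b, hb, e⟩ := Submodule.mem_sup.1 hmem
  have hbn : b ∈ S.normalOf E f x₀ := by
    rw [← hW.isSection.tangent_eq hf.immersion]
    exact hW.le_tangent j hb
  obtain ⟨μ, hμ, rfl⟩ := hf.trivialNormalHolonomy x₀ b hbn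
  have h1 := h j hij (μ m) (mem_parallelSubbundle_iff.2 ⟨μ, hμ, hb, rfl⟩)
  rw [hν.inner_const hμ m x₀, ← e, inner_add_left,
    Submodule.isOrtho_iff_inner_eq.1 (hW.isOrtho hij) a ha _ hb, zero_add] at h1
  have h2 := inner_self_eq_zero.1 h1
  rw [h2, add_zero] at e
  exact mem_parallelSubbundle_iff.2 ⟨ν, hν, e ▸ ha, rfl⟩

end Splitting

end CompactSymmetricSpace
end

noncomputable section

open BoundedContinuousFunction

/-! ### Volterra operators on bounded continuous paths -/

/-- Lebesgue measure of the unit interval, as a measure on `ℝ`. -/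
abbrev unitMeasure : Measure ℝ := volume.restrict (Icc (0 : ℝ) 1)

theorem integral_unitMeasure_eq {V : Type*} [NormedAddCommGroup V] [NormedSpace ℝ V]
    (f : ℝ → V) {t : ℝ} (ht : t ∈ Icc (0 : ℝ) 1) :
    ∫ s in (0 : ℝ)..t, f s ∂unitMeasure = ∫ s in (0 : ℝ)..t, f s := by
  rw [intervalIntegral.integral_of_le ht.1, intervalIntegral.integral_of_le ht.1, unitMeasure,
    Measure.restrict_restrict_of_subset]
  exact fun s hs => ⟨hs.1.le, hs.2.trans ht.2⟩

theorem integral_unitMeasure_projIcc {V : Type*} [NormedAddCommGroup V] [NormedSpace ℝ V]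
    (f : ℝ → V) (t : ℝ) :
    ∫ s in (0 : ℝ)..t, f s ∂unitMeasure =
      ∫ s in (0 : ℝ)..(projIcc (0 : ℝ) 1 zero_le_one t : ℝ), f s ∂unitMeasure := by
  rcases le_total t 0 with h0 | h0
  · rw [projIcc_of_le_left _ h0, intervalIntegral.integral_same,
      intervalIntegral.integral_of_ge h0, unitMeasure, Measure.restrict_restrict measurableSet_Ioc]
    have : (volume : Measure ℝ) (Ioc t 0 ∩ Icc 0 1) = 0 := by
      refine measure_mono_null (t := {0}) (fun s hs => ?_) (by simp)
      exact le_antisymm hs.1.2 hs.2.1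
    rw [Measure.restrict_eq_zero.2 this]
    simp
  rcases le_total t 1 with h1 | h1
  · rw [projIcc_of_mem _ ⟨h0, h1⟩]
  · rw [projIcc_of_right_le _ h1, intervalIntegral.integral_of_le h0,
      intervalIntegral.integral_of_le zero_le_one, unitMeasure,
      Measure.restrict_restrict measurableSet_Ioc, Measure.restrict_restrict measurableSet_Ioc]
    congr 2
    ext s
    simp only [mem_inter_iff, mem_Ioc, mem_Icc]
    constructor <;> rintro ⟨⟨a, b⟩, c, d⟩ <;> refine ⟨⟨a, ?_⟩, c, d⟩ <;> linarith

section Volterra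

variable {𝔸 : Type*} [NormedRing 𝔸] [NormedAlgebra ℝ 𝔸]

theorem integrable_mul_Lp (g : ℝ →ᵇ 𝔸) (X : Lp 𝔸 2 unitMeasure) :
    Integrable (fun s => g s * X s) unitMeasure := by
  have hX : Integrable X unitMeasure := (Lp.memLp X).integrable (by norm_num)
  exact hX.bdd_mul g.continuous.aestronglyMeasurable (ae_of_all _ g.norm_coe_le_norm)

theorem norm_sq_Lp_two {V : Type*} [NormedAddCommGroup V] (X : Lp V 2 unitMeasure) :
    ‖X‖ ^ 2 = ∫ s, ‖X s‖ ^ 2 ∂unitMeasure := by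
  have h := (Lp.memLp X).eLpNorm_eq_integral_rpow_norm (by norm_num) (by norm_num)
  have h0 : 0 ≤ ∫ s, ‖X s‖ ^ 2 ∂unitMeasure := integral_nonneg fun s => by positivity
  rw [Lp.norm_def, h, ENNReal.toReal_ofReal (by positivity)]
  simp only [ENNReal.toReal_ofNat, Real.rpow_ofNat]
  rw [← Real.rpow_natCast, ← Real.rpow_mul h0]
  norm_num

theorem norm_integral_mul_sq_le (g : ℝ →ᵇ 𝔸) (X : Lp 𝔸 2 unitMeasure) {t : ℝ}
    (ht : t ∈ Icc (0 : ℝ) 1) :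
    ‖∫ s in (0 : ℝ)..t, g s * X s ∂unitMeasure‖ ^ 2 ≤
      (∫ s in (0 : ℝ)..t, ‖g s‖ ^ 2) * ‖X‖ ^ 2 := by
  rw [← integral_unitMeasure_eq (fun s => ‖g s‖ ^ 2) ht, norm_sq_Lp_two,
    intervalIntegral.integral_of_le ht.1, intervalIntegral.integral_of_le ht.1]
  set μ' := unitMeasure.restrict (Ioc 0 t)
  have hXm : MemLp X 2 μ' := (Lp.memLp X).restrict _
  have hgm : MemLp g 2 μ' :=
    MemLp.of_bound g.continuous.aestronglyMeasurable ‖g‖ (ae_of_all _ g.norm_coe_le_norm)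
  have hX2 : Integrable (fun s => ‖X s‖ ^ 2) unitMeasure := (Lp.memLp X).integrable_norm_pow (by norm_num)
  have h1 : ‖∫ s, g s * X s ∂μ'‖ ≤ ∫ s, ‖g s‖ * ‖X s‖ ∂μ' := by
    refine (norm_integral_le_integral_norm _).trans ?_
    refine integral_mono_ae ((integrable_mul_Lp g X).restrict.norm) ?_
      (ae_of_all _ fun s => norm_mul_le _ _)
    exact hgm.norm.integrable_mul hXm.norm
  have h2 := integral_mul_le_Lp_mul_Lq_of_nonneg (μ := μ') Real.HolderConjugate.two_two
    (ae_of_all _ fun s => norm_nonneg (g s)) (ae_of_all _ fun s => norm_nonneg (X s))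
    (by simpa using hgm.norm) (by simpa using hXm.norm)
  have h3 : ∫ s, ‖X s‖ ^ 2 ∂μ' ≤ ∫ s, ‖X s‖ ^ 2 ∂unitMeasure :=
    setIntegral_le_integral hX2 (ae_of_all _ fun s => by positivity)
  have hg0 : 0 ≤ ∫ s, ‖g s‖ ^ 2 ∂μ' := integral_nonneg fun s => by positivity
  have hX0 : 0 ≤ ∫ s, ‖X s‖ ^ 2 ∂μ' := integral_nonneg fun s => by positivity
  simp only [Real.rpow_ofNat, ← Real.sqrt_eq_rpow] at h2
  calc ‖∫ s, g s * X s ∂μ'‖ ^ 2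
      ≤ (√(∫ s, ‖g s‖ ^ 2 ∂μ') * √(∫ s, ‖X s‖ ^ 2 ∂μ')) ^ 2 :=
        pow_le_pow_left₀ (norm_nonneg _) (h1.trans h2) 2
    _ = (∫ s, ‖g s‖ ^ 2 ∂μ') * ∫ s, ‖X s‖ ^ 2 ∂μ' := by
        rw [mul_pow, Real.sq_sqrt hg0, Real.sq_sqrt hX0]
    _ ≤ _ := mul_le_mul_of_nonneg_left h3 hg0

theorem norm_integral_mul_le (g : ℝ →ᵇ 𝔸) (X : Lp 𝔸 2 unitMeasure) (t : ℝ) :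
    ‖∫ s in (0 : ℝ)..t, g s * X s ∂unitMeasure‖ ≤ ‖g‖ * ‖X‖ := by
  rw [integral_unitMeasure_projIcc]
  obtain ⟨r, hr⟩ := projIcc (0 : ℝ) 1 zero_le_one t
  refine le_of_sq_le_sq ?_ (by positivity)
  refine (norm_integral_mul_sq_le g X hr).trans ?_
  rw [mul_pow]
  refine mul_le_mul_of_nonneg_right ?_ (by positivity)
  have hc : Continuous fun s => ‖g s‖ ^ 2 := g.continuous.norm.pow 2
  calc ∫ s in (0 : ℝ)..r, ‖g s‖ ^ 2 ≤ ∫ s in (0 : ℝ)..r, ‖g‖ ^ 2 :=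
        intervalIntegral.integral_mono_on hr.1 (hc.intervalIntegrable _ _)
          (continuous_const.intervalIntegrable _ _)
          fun s _ => pow_le_pow_left₀ (norm_nonneg _) (g.norm_coe_le_norm s) 2
    _ = r * ‖g‖ ^ 2 := by simp
    _ ≤ ‖g‖ ^ 2 := mul_le_of_le_one_left (by positivity) hr.2

/-- The bilinear map sending `g` and `X` to the primitive of `g X` on `[0, 1]`. -/
def volterra : (ℝ →ᵇ 𝔸) →L[ℝ] Lp 𝔸 2 unitMeasure →L[ℝ] (ℝ →ᵇ 𝔸) :=
  LinearMap.mkContinuous₂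
    (LinearMap.mk₂ ℝ
      (fun g X => BoundedContinuousFunction.ofNormedAddCommGroup
        (fun t => ∫ s in (0 : ℝ)..t, g s * X s ∂unitMeasure)
        (intervalIntegral.continuous_primitive
          (fun _ _ => (integrable_mul_Lp g X).intervalIntegrable) 0)
        (‖g‖ * ‖X‖) (norm_integral_mul_le g X))
      (fun g h X => by
        ext t
        simp only [coe_ofNormedAddCommGroup, BoundedContinuousFunction.add_apply, add_mul]
        exact intervalIntegral.integral_add (integrable_mul_Lp g X).intervalIntegrable
          (integrable_mul_Lp h X).intervalIntegrable)
      (fun a g X => by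
        ext t
        simp only [coe_ofNormedAddCommGroup, BoundedContinuousFunction.smul_apply, smul_mul_assoc]
        exact intervalIntegral.integral_smul _ _)
      (fun g X Y => by
        ext t
        simp only [coe_ofNormedAddCommGroup, BoundedContinuousFunction.add_apply]
        rw [← intervalIntegral.integral_add (integrable_mul_Lp g X).intervalIntegrable
          (integrable_mul_Lp g Y).intervalIntegrable]
        refine intervalIntegral.integral_congr_ae ?_
        filter_upwards [Lp.coeFn_add X Y] with s hs _
        rw [hs, Pi.add_apply, mul_add])
      (fun a g X => by
        ext t
        simp only [coe_ofNormedAddCommGroup, BoundedContinuousFunction.smul_apply]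
        rw [← intervalIntegral.integral_smul]
        refine intervalIntegral.integral_congr_ae ?_
        filter_upwards [Lp.coeFn_smul a X] with s hs _
        rw [hs, Pi.smul_apply, mul_smul_comm]))
    1 (fun g X => by
      rw [one_mul]
      exact BoundedContinuousFunction.norm_ofNormedAddCommGroup_le _ (by positivity)
        (norm_integral_mul_le g X))

theorem volterra_apply (g : ℝ →ᵇ 𝔸) (X : Lp 𝔸 2 unitMeasure) (t : ℝ) :
    volterra g X t = ∫ s in (0 : ℝ)..t, g s * X s ∂unitMeasure := rfl

theorem volterra_apply_zero (g : ℝ →ᵇ 𝔸) (X : Lp 𝔸 2 unitMeasure) : volterra g X 0 = 0 := by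
  simp [volterra_apply]

theorem volterra_apply_projIcc (g : ℝ →ᵇ 𝔸) (X : Lp 𝔸 2 unitMeasure) (t : ℝ) :
    volterra g X t = volterra g X (projIcc (0 : ℝ) 1 zero_le_one t : ℝ) :=
  integral_unitMeasure_projIcc _ _

theorem norm_volterra_pow_sq_le (u : Lp 𝔸 2 unitMeasure) (n : ℕ) (g : ℝ →ᵇ 𝔸) {t : ℝ}
    (ht : t ∈ Icc (0 : ℝ) 1) :
    ‖((volterra.flip u) ^ n) g t‖ ^ 2 ≤ (‖u‖ ^ 2) ^ n * ‖g‖ ^ 2 * (t ^ n / n.factorial) := by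
  induction n generalizing t with
  | zero => simpa using pow_le_pow_left₀ (norm_nonneg _) (g.norm_coe_le_norm t) 2
  | succ n ih =>
    set h := ((volterra.flip u) ^ n) g
    have e : ((volterra.flip u) ^ (n + 1)) g t = ∫ s in (0 : ℝ)..t, h s * u s ∂unitMeasure := by
      rw [pow_succ']
      rfl
    rw [e]
    refine (norm_integral_mul_sq_le h u ht).trans ?_
    have hc : Continuous fun s => ‖h s‖ ^ 2 := h.continuous.norm.pow 2
    have h1 : ∫ s in (0 : ℝ)..t, ‖h s‖ ^ 2 ≤
        ∫ s in (0 : ℝ)..t, (‖u‖ ^ 2) ^ n * ‖g‖ ^ 2 * (s ^ n / n.factorial) := by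
      refine intervalIntegral.integral_mono_on ht.1 (hc.intervalIntegrable _ _)
        (Continuous.intervalIntegrable (by fun_prop) _ _) fun s hs => ?_
      exact ih ⟨hs.1, hs.2.trans ht.2⟩
    have h2 : ∫ s in (0 : ℝ)..t, (‖u‖ ^ 2) ^ n * ‖g‖ ^ 2 * (s ^ n / n.factorial) =
        (‖u‖ ^ 2) ^ n * ‖g‖ ^ 2 * (t ^ (n + 1) / (n + 1).factorial) := by
      rw [intervalIntegral.integral_const_mul, intervalIntegral.integral_div, integral_pow,
        Nat.factorial_succ]
      push_cast
      have : (n.factorial : ℝ) ≠ 0 := by positivity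
      have : (n + 1 : ℝ) ≠ 0 := by positivity
      field_simp
      ring
    rw [h2] at h1
    refine (mul_le_mul_of_nonneg_right h1 (sq_nonneg _)).trans (le_of_eq ?_)
    ring

theorem exists_norm_volterra_pow_lt_one (u : Lp 𝔸 2 unitMeasure) :
    ∃ n, 0 < n ∧ ‖(volterra.flip u : (ℝ →ᵇ 𝔸) →L[ℝ] (ℝ →ᵇ 𝔸)) ^ n‖ < 1 := by
  have hlim := FloorSemiring.tendsto_pow_div_factorial_atTop (‖u‖ ^ 2)
  obtain ⟨n, hn, hn0⟩ := ((hlim.eventually (gt_mem_nhds (show (0 : ℝ) < 1 / 4 by norm_num))).and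
    (eventually_gt_atTop 0)).exists
  refine ⟨n, hn0, lt_of_le_of_lt (ContinuousLinearMap.opNorm_le_bound _ (show (0 : ℝ) ≤ 1 / 2 by
    norm_num) fun g => ?_) (by norm_num : (1 / 2 : ℝ) < 1)⟩
  refine (BoundedContinuousFunction.norm_le (by positivity)).2 fun t => ?_
  obtain ⟨k, rfl⟩ : ∃ k, n = k + 1 := ⟨n - 1, by omega⟩
  have e : ∀ r, ((volterra.flip u) ^ (k + 1)) g r = volterra (((volterra.flip u) ^ k) g) u r := by
    intro r
    rw [pow_succ']
    rfl
  rw [e, volterra_apply_projIcc, ← e]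
  obtain ⟨r, hr⟩ := projIcc (0 : ℝ) 1 zero_le_one t
  refine le_of_sq_le_sq ((norm_volterra_pow_sq_le u (k + 1) g hr).trans ?_) (by positivity)
  have h1 : r ^ (k + 1) ≤ 1 := pow_le_one₀ hr.1 hr.2
  calc (‖u‖ ^ 2) ^ (k + 1) * ‖g‖ ^ 2 * (r ^ (k + 1) / (k + 1).factorial)
      = ((‖u‖ ^ 2) ^ (k + 1) / (k + 1).factorial) * ‖g‖ ^ 2 * r ^ (k + 1) := by ring
    _ ≤ (1 / 4) * ‖g‖ ^ 2 * 1 := by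
        refine mul_le_mul (mul_le_mul_of_nonneg_right hn.le (by positivity)) h1
          (pow_nonneg hr.1 _) (by positivity)
    _ = (1 / 2 * ‖g‖) ^ 2 := by ring

variable [CompleteSpace 𝔸]

theorem isUnit_one_sub_volterra (u : Lp 𝔸 2 unitMeasure) :
    IsUnit (1 - (volterra.flip u : (ℝ →ᵇ 𝔸) →L[ℝ] (ℝ →ᵇ 𝔸))) := by
  obtain ⟨n, -, hn⟩ := exists_norm_volterra_pow_lt_one u
  set V : (ℝ →ᵇ 𝔸) →L[ℝ] (ℝ →ᵇ 𝔸) := volterra.flip u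
  have h1 : IsUnit (1 - V ^ n) := isUnit_one_sub_of_norm_lt_one hn
  rw [← mul_neg_geom_sum V n] at h1
  exact ((Commute.sub_left (Commute.one_left _) (Commute.sum_right _ _ _ fun i _ =>
    (Commute.refl V).pow_right i)).isUnit_mul_iff.1 h1).1

/-- The solution in `𝔸` of `g' = g u`, `g(0) = 1`, as a bounded continuous path that is constant
outside `[0, 1]`. -/
def transport (u : Lp 𝔸 2 unitMeasure) : ℝ →ᵇ 𝔸 := Ring.inverse (1 - volterra.flip u) 1

theorem transport_eq (u : Lp 𝔸 2 unitMeasure) : transport u = 1 + volterra (transport u) u := by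
  have h := Ring.mul_inverse_cancel _ (isUnit_one_sub_volterra u)
  have h2 := congrArg (fun T : (ℝ →ᵇ 𝔸) →L[ℝ] (ℝ →ᵇ 𝔸) => T 1) h
  change transport u - volterra (transport u) u = 1 at h2
  rw [← h2]
  abel

theorem eq_of_sub_volterra_eq {u : Lp 𝔸 2 unitMeasure} {g h : ℝ →ᵇ 𝔸}
    (e : g - volterra g u = h - volterra h u) : g = h := by
  have h1 := Ring.inverse_mul_cancel _ (isUnit_one_sub_volterra u)
  have h2 : ∀ k : ℝ →ᵇ 𝔸, Ring.inverse (1 - volterra.flip u) (k - volterra k u) = k := fun k =>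
    congrArg (fun T : (ℝ →ᵇ 𝔸) →L[ℝ] (ℝ →ᵇ 𝔸) => T k) h1
  rw [← h2 g, e, h2 h]

theorem eq_transport {u : Lp 𝔸 2 unitMeasure} {g : ℝ →ᵇ 𝔸} (h : g = 1 + volterra g u) :
    g = transport u := by
  refine eq_of_sub_volterra_eq (u := u) ?_
  rw [sub_eq_iff_eq_add.2 h, sub_eq_iff_eq_add.2 (transport_eq u)]

theorem contDiff_transport : ContDiff ℝ ∞ (transport : Lp 𝔸 2 unitMeasure → ℝ →ᵇ 𝔸) := by
  rw [contDiff_iff_contDiffAt]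
  intro u
  obtain ⟨x, hx⟩ := isUnit_one_sub_volterra u
  have h1 : ContDiffAt ℝ ∞ (fun u : Lp 𝔸 2 unitMeasure =>
      1 - (volterra.flip u : (ℝ →ᵇ 𝔸) →L[ℝ] (ℝ →ᵇ 𝔸))) u :=
    contDiffAt_const.sub (ContinuousLinearMap.contDiff _).contDiffAt
  have h2 := (contDiffAt_ringInverse ℝ (n := ∞) x)
  rw [hx] at h2
  exact (h2.comp u h1).clm_apply contDiffAt_const

theorem transport_apply_zero (u : Lp 𝔸 2 unitMeasure) : transport u 0 = 1 := by
  rw [transport_eq]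
  simp [volterra_apply_zero]

/-- The derivative of `transport` at `u`. -/
def transportDeriv (u : Lp 𝔸 2 unitMeasure) : Lp 𝔸 2 unitMeasure →L[ℝ] (ℝ →ᵇ 𝔸) :=
  fderiv ℝ transport u

theorem hasFDerivAt_transport (u : Lp 𝔸 2 unitMeasure) :
    HasFDerivAt transport (transportDeriv u) u :=
  (contDiff_transport.differentiable (by simp) u).hasFDerivAt

theorem continuous_transportDeriv :
    Continuous fun p : Lp 𝔸 2 unitMeasure × Lp 𝔸 2 unitMeasure => transportDeriv p.1 p.2 :=
  (contDiff_transport.continuous_fderiv_apply (by simp))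

attribute [irreducible] volterra transport transportDeriv

theorem HasFDerivAt.apply_eq_of_eq_add_bilinear {E F : Type*} [NormedAddCommGroup E]
    [NormedSpace ℝ E] [NormedAddCommGroup F] [NormedSpace ℝ F] (B : F →L[ℝ] E →L[ℝ] F) {c : F}
    {T : E → F} {T' : E →L[ℝ] F} {u : E} (h : HasFDerivAt T T' u) (e : ∀ v, T v = c + B (T v) v)
    (X : E) : T' X = B (T' X) u + B (T u) X := by
  have h2 := ((B.hasFDerivAt.comp u h).clm_apply (hasFDerivAt_id u)).const_add c
  have h3 : HasFDerivAt T _ u := h2.congr_of_eventuallyEq (Eventually.of_forall e)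
  have h4 := DFunLike.congr_fun (h.unique h3) X
  rw [add_comm]
  exact h4

theorem transportDeriv_eq (u X : Lp 𝔸 2 unitMeasure) :
    transportDeriv u X = volterra (transportDeriv u X) u + volterra (transport u) X :=
  (hasFDerivAt_transport u).apply_eq_of_eq_add_bilinear volterra transport_eq X

theorem transportDeriv_apply_zero (u X : Lp 𝔸 2 unitMeasure) : transportDeriv u X 0 = 0 := by
  rw [transportDeriv_eq]
  simp [volterra_apply_zero]

section Continuous

variable (f h : ℝ →ᵇ 𝔸)

theorem hasDerivAt_volterra_toLp (g : ℝ →ᵇ 𝔸) {t : ℝ} (ht : t ∈ Icc (0 : ℝ) 1) :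
    HasDerivWithinAt (volterra g (BoundedContinuousFunction.toLp 2 unitMeasure ℝ f)) (g t * f t)
      (Icc 0 1) t := by
  have h1 : HasDerivAt (fun r => ∫ s in (0 : ℝ)..r, g s * f s) (g t * f t) t :=
    intervalIntegral.integral_hasDerivAt_right
      (Continuous.intervalIntegrable (by fun_prop) _ _)
      (Continuous.stronglyMeasurableAtFilter (by fun_prop) _ _)
      (Continuous.continuousAt (by fun_prop))
  refine h1.hasDerivWithinAt.congr_of_mem (fun r hr => ?_) ht
  rw [volterra_apply, ← integral_unitMeasure_eq _ hr]
  refine intervalIntegral.integral_congr_ae ?_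
  filter_upwards [BoundedContinuousFunction.coeFn_toLp 2 unitMeasure ℝ f] with s hs _
  rw [hs]

theorem hasDerivWithinAt_transport {t : ℝ} (ht : t ∈ Icc (0 : ℝ) 1) :
    HasDerivWithinAt (transport (BoundedContinuousFunction.toLp 2 unitMeasure ℝ f))
      (transport (BoundedContinuousFunction.toLp 2 unitMeasure ℝ f) t * f t) (Icc 0 1) t := by
  have h1 := (hasDerivAt_volterra_toLp f
    (transport (BoundedContinuousFunction.toLp 2 unitMeasure ℝ f)) ht).const_add 1
  refine h1.congr_of_mem (fun r _ => ?_) ht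
  conv_lhs => rw [transport_eq]
  rfl

theorem hasDerivWithinAt_transportDeriv {t : ℝ} (ht : t ∈ Icc (0 : ℝ) 1) :
    HasDerivWithinAt (transportDeriv (BoundedContinuousFunction.toLp 2 unitMeasure ℝ f)
        (BoundedContinuousFunction.toLp 2 unitMeasure ℝ h))
      (transportDeriv (BoundedContinuousFunction.toLp 2 unitMeasure ℝ f)
        (BoundedContinuousFunction.toLp 2 unitMeasure ℝ h) t * f t +
        transport (BoundedContinuousFunction.toLp 2 unitMeasure ℝ f) t * h t) (Icc 0 1) t := by
  have h1 := (hasDerivAt_volterra_toLp f (transportDeriv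
    (BoundedContinuousFunction.toLp 2 unitMeasure ℝ f)
      (BoundedContinuousFunction.toLp 2 unitMeasure ℝ h)) ht).add
    (hasDerivAt_volterra_toLp h
      (transport (BoundedContinuousFunction.toLp 2 unitMeasure ℝ f)) ht)
  refine h1.congr_of_mem (fun r _ => ?_) ht
  conv_lhs => rw [transportDeriv_eq]
  rfl

end Continuous

end Volterra

end

noncomputable section

open BoundedContinuousFunction

theorem denseRange_toLp_unitMeasure (V : Type*) [NormedAddCommGroup V] [NormedSpace ℝ V] :
    DenseRange (BoundedContinuousFunction.toLp 2 unitMeasure ℝ :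
      (ℝ →ᵇ V) →L[ℝ] Lp V 2 unitMeasure) :=
  BoundedContinuousFunction.toLp_denseRange (p := 2) (E := V) unitMeasure ℝ (by norm_num)

namespace CompactSymmetricSpace

variable {𝔸 𝔤 : Type*} [NormedRing 𝔸] [NormedAlgebra ℝ 𝔸] [FiniteDimensional ℝ 𝔸]
  [NormedAddCommGroup 𝔤] [InnerProductSpace ℝ 𝔤] [FiniteDimensional ℝ 𝔤]

variable (S : CompactSymmetricSpace 𝔸 𝔤)

/-! ### The transport of `L²`-paths in `𝔤` -/

/-- The map `H⁰([0,1], 𝔤) → L²([0,1], 𝔸)` induced by `lie`. -/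
def lieLp : S.H0 →L[ℝ] Lp 𝔸 2 unitMeasure := S.lieL.compLpL 2 unitMeasure

theorem coeFn_lieLp (u : S.H0) : S.lieLp u =ᵐ[unitMeasure] fun s => S.lie (u s) :=
  S.lieL.coeFn_compLpL u

/-- The transport path of `u` as a bounded continuous path in `𝔸`, constant outside `[0, 1]`. -/
def tr (u : S.H0) : ℝ →ᵇ 𝔸 := transport (S.lieLp u)

/-- The derivative of the transport path. -/
def trD (u : S.H0) : S.H0 →L[ℝ] (ℝ →ᵇ 𝔸) := (transportDeriv (S.lieLp u)).comp S.lieLp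

theorem tr_eq (u : S.H0) : S.tr u = 1 + volterra (S.tr u) (S.lieLp u) :=
  have := FiniteDimensional.complete ℝ 𝔸
  transport_eq _

theorem hasFDerivAt_tr (u : S.H0) : HasFDerivAt S.tr (S.trD u) u :=
  have := FiniteDimensional.complete ℝ 𝔸
  (hasFDerivAt_transport (S.lieLp u)).comp u S.lieLp.hasFDerivAt

theorem continuous_tr : Continuous S.tr :=
  continuous_iff_continuousAt.2 fun u => (S.hasFDerivAt_tr u).continuousAt

theorem continuous_trD : Continuous fun p : S.H0 × S.H0 => S.trD p.1 p.2 :=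
  have := FiniteDimensional.complete ℝ 𝔸
  continuous_transportDeriv.comp
    ((S.lieLp.continuous.comp continuous_fst).prodMk (S.lieLp.continuous.comp continuous_snd))

theorem tr_apply_zero (u : S.H0) : S.tr u 0 = 1 :=
  have := FiniteDimensional.complete ℝ 𝔸
  transport_apply_zero _

theorem trD_apply_zero (u X : S.H0) : S.trD u X 0 = 0 :=
  have := FiniteDimensional.complete ℝ 𝔸
  transportDeriv_apply_zero _ _

theorem tr_apply_projIcc (u : S.H0) (t : ℝ) :
    S.tr u t = S.tr u (projIcc (0 : ℝ) 1 zero_le_one t : ℝ) := by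
  rw [tr_eq]
  change 1 + volterra (S.tr u) (S.lieLp u) t = 1 + volterra (S.tr u) (S.lieLp u) _
  rw [volterra_apply_projIcc]

theorem lieLp_toLp (f : ℝ →ᵇ 𝔤) :
    S.lieLp (BoundedContinuousFunction.toLp 2 unitMeasure ℝ f) =
      BoundedContinuousFunction.toLp 2 unitMeasure ℝ
        (S.lieL.compLeftContinuousBounded ℝ f) := by
  refine Lp.ext ?_
  filter_upwards [S.coeFn_lieLp (BoundedContinuousFunction.toLp 2 unitMeasure ℝ f),
    BoundedContinuousFunction.coeFn_toLp 2 unitMeasure ℝ f,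
    BoundedContinuousFunction.coeFn_toLp 2 unitMeasure ℝ (S.lieL.compLeftContinuousBounded ℝ f)]
    with s h1 h2 h3
  rw [h1, h2, h3]
  rfl

theorem hasDerivWithinAt_tr (f : ℝ →ᵇ 𝔤) {t : ℝ} (ht : t ∈ Icc (0 : ℝ) 1) :
    HasDerivWithinAt (S.tr (BoundedContinuousFunction.toLp 2 unitMeasure ℝ f))
      (S.tr (BoundedContinuousFunction.toLp 2 unitMeasure ℝ f) t * S.lie (f t)) (Icc 0 1) t := by
  have := FiniteDimensional.complete ℝ 𝔸
  have h := hasDerivWithinAt_transport (S.lieL.compLeftContinuousBounded ℝ f) ht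
  rw [← lieLp_toLp] at h
  exact h

theorem hasDerivWithinAt_trD (f k : ℝ →ᵇ 𝔤) {t : ℝ} (ht : t ∈ Icc (0 : ℝ) 1) :
    HasDerivWithinAt (S.trD (BoundedContinuousFunction.toLp 2 unitMeasure ℝ f)
        (BoundedContinuousFunction.toLp 2 unitMeasure ℝ k))
      (S.trD (BoundedContinuousFunction.toLp 2 unitMeasure ℝ f)
        (BoundedContinuousFunction.toLp 2 unitMeasure ℝ k) t * S.lie (f t) +
        S.tr (BoundedContinuousFunction.toLp 2 unitMeasure ℝ f) t * S.lie (k t)) (Icc 0 1) t := by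
  have := FiniteDimensional.complete ℝ 𝔸
  have h := hasDerivWithinAt_transportDeriv (S.lieL.compLeftContinuousBounded ℝ f)
    (S.lieL.compLeftContinuousBounded ℝ k) ht
  rw [← lieLp_toLp, ← lieLp_toLp] at h
  exact h

/-- A solution of `g' = g f` with `f` continuous in `𝔤` and `g(0) = 1` stays in `G`: its distance
to `G` satisfies a Gronwall inequality. -/
theorem tr_toLp_mem_range (f : ℝ →ᵇ 𝔤) {t : ℝ} (ht : t ∈ Icc (0 : ℝ) 1) :
    S.tr (BoundedContinuousFunction.toLp 2 unitMeasure ℝ f) t ∈ range S.val := by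
  have := FiniteDimensional.complete ℝ 𝔸
  set u : S.H0 := BoundedContinuousFunction.toLp 2 unitMeasure ℝ f
  have hne : (range S.val).Nonempty := ⟨_, 1, rfl⟩
  have hcl := S.isCompact_range_val.isClosed
  set d : ℝ → ℝ := fun r => Metric.infDist (S.tr u r) (range S.val)
  set C := ‖S.lieL‖ * ‖f‖
  have key := le_gronwallBound_of_liminf_deriv_right_le (f := d) (f' := fun x => C * d x)
    (δ := 0) (K := C) (ε := 0) (a := 0) (b := 1)
    ((Metric.continuous_infDist_pt _).comp (S.tr u).continuous).continuousOn
    (fun x hx r hr => ?_) ?_ (fun x _ => by simp) t ht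
  · rw [gronwallBound_ε0_δ0] at key
    rw [hcl.mem_iff_infDist_zero hne]
    exact le_antisymm key Metric.infDist_nonneg
  · obtain ⟨_, ⟨k, rfl⟩, hk⟩ := S.isCompact_range_val.exists_infDist_eq_dist hne (S.tr u x)
    set e : ℝ → 𝔸 := fun z => S.tr u z - S.val k * NormedSpace.exp ((z - x) • S.lie (f x))
    have he : HasDerivWithinAt e (S.tr u x * S.lie (f x) - S.val k * S.lie (f x)) (Ici x) x := by
      have h1 : HasDerivWithinAt (S.tr u) (S.tr u x * S.lie (f x)) (Ici x) x :=
        ((S.hasDerivWithinAt_tr f ⟨hx.1, hx.2.le⟩).mono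
          (Icc_subset_Icc_left hx.1)).mono_of_mem_nhdsWithin (Icc_mem_nhdsGE hx.2)
      have h2 : HasDerivAt (fun z => NormedSpace.exp ((z - x) • S.lie (f x))) (S.lie (f x)) x := by
        have h3 : HasDerivAt (fun r : ℝ => NormedSpace.exp (r • S.lie (f x))) (S.lie (f x)) (x - x) := by
          rw [sub_self]
          exact hasDerivAt_exp_smul_zero _
        exact h3.comp_sub_const x x
      exact h1.sub (h2.const_mul (S.val k)).hasDerivWithinAt
    have hex : e x = S.tr u x - S.val k := by simp [e]
    have hn : ‖S.tr u x * S.lie (f x) - S.val k * S.lie (f x)‖ < r := by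
      refine lt_of_le_of_lt ?_ hr
      rw [← sub_mul]
      refine (norm_mul_le _ _).trans ?_
      have h1 : d x = ‖S.tr u x - S.val k‖ := by rw [← dist_eq_norm]; exact hk
      rw [h1, mul_comm]
      refine mul_le_mul_of_nonneg_right ?_ (norm_nonneg _)
      exact (S.lieL.le_opNorm _).trans
        (mul_le_mul_of_nonneg_left (f.norm_coe_le_norm x) (norm_nonneg _))
    refine ((he.liminf_right_slope_norm_le hn).and_eventually self_mem_nhdsWithin).mono
      fun z hz => lt_of_le_of_lt ?_ hz.1
    have hz0 : 0 ≤ (z - x)⁻¹ := inv_nonneg.2 (sub_nonneg.2 (le_of_lt hz.2))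
    refine mul_le_mul_of_nonneg_left (sub_le_sub ?_ ?_) hz0
    · have hm : S.val k * NormedSpace.exp ((z - x) • S.lie (f x)) ∈ range S.val :=
        ⟨k * S.expG ((z - x) • f x), by rw [val_mul, val_expG, map_smul]⟩
      refine (Metric.infDist_le_dist_of_mem hm).trans ?_
      rw [dist_eq_norm]
    · rw [hex, ← dist_eq_norm, ← hk]
  · have h1 : S.tr u 0 ∈ range S.val := ⟨1, by rw [tr_apply_zero, val_one]⟩
    exact (Metric.infDist_zero_of_mem h1).le

theorem tr_mem_range (u : S.H0) (t : ℝ) : S.tr u t ∈ range S.val := by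
  rw [tr_apply_projIcc]
  obtain ⟨r, hr⟩ := projIcc (0 : ℝ) 1 zero_le_one t
  refine (denseRange_toLp_unitMeasure 𝔤).induction_on (p := fun u => S.tr u r ∈ range S.val) u ?_
    fun f => S.tr_toLp_mem_range f hr
  refine S.isCompact_range_val.isClosed.preimage ?_
  exact (BoundedContinuousFunction.evalCLM (β := 𝔸) ℝ r).continuous.comp S.continuous_tr

/-- The transport path of `u` in `G`. -/
def trG (u : S.H0) (t : ℝ) : S.G := (S.tr_mem_range u t).choose

theorem val_trG (u : S.H0) (t : ℝ) : S.val (S.trG u t) = S.tr u t :=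
  (S.tr_mem_range u t).choose_spec

theorem trG_zero (u : S.H0) : S.trG u 0 = 1 :=
  S.val_injective (by rw [val_trG, tr_apply_zero, val_one])

theorem continuous_trG (u : S.H0) : Continuous (S.trG u) := by
  rw [S.isEmbedding_val.continuous_iff]
  exact (S.tr u).continuous.congr fun t => (S.val_trG u t).symm

theorem integral_mul_lieLp (u : S.H0) (g : ℝ → 𝔸) {t : ℝ} (ht : t ∈ Icc (0 : ℝ) 1) :
    ∫ s in (0 : ℝ)..t, g s * S.lie (u s) =
      ∫ s in (0 : ℝ)..t, g s * S.lieLp u s ∂unitMeasure := by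
  rw [← integral_unitMeasure_eq _ ht]
  refine intervalIntegral.integral_congr_ae ?_
  filter_upwards [S.coeFn_lieLp u] with s hs _
  rw [hs]

theorem isTransport_trG (u : S.H0) : S.IsTransport u (S.trG u) := by
  refine ⟨(S.continuous_trG u).continuousOn, fun t ht => ?_⟩
  simp only [val_trG]
  rw [S.integral_mul_lieLp u _ ht, ← volterra_apply]
  conv_lhs => rw [tr_eq]
  rfl

theorem IsTransport.eq_trG {S : CompactSymmetricSpace 𝔸 𝔤} {u : S.H0} {g : ℝ → S.G}
    (h : S.IsTransport u g) {t : ℝ} (ht : t ∈ Icc (0 : ℝ) 1) : g t = S.trG u t := by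
  have := FiniteDimensional.complete ℝ 𝔸
  obtain ⟨C, -, hC⟩ := S.exists_norm_val_le
  have hc : Continuous fun r => S.val (g (projIcc (0 : ℝ) 1 zero_le_one r)) :=
    S.continuous_val.comp (h.1.comp_continuous (continuous_subtype_val.comp continuous_projIcc)
      fun r => Subtype.coe_prop _)
  set k : ℝ →ᵇ 𝔸 := BoundedContinuousFunction.ofNormedAddCommGroup _ hc C fun r => hC _
  have hk : ∀ r ∈ Icc (0 : ℝ) 1, k r = S.val (g r) := fun r hr => by
    change S.val (g (projIcc (0 : ℝ) 1 zero_le_one r)) = _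
    rw [projIcc_of_mem _ hr]
  have hk2 : ∀ r ∈ Icc (0 : ℝ) 1, k r = 1 + volterra k (S.lieLp u) r := by
    intro r hr
    rw [hk r hr, h.2 r hr, S.integral_mul_lieLp u _ hr, volterra_apply]
    congr 1
    rw [integral_unitMeasure_eq _ hr, integral_unitMeasure_eq _ hr]
    refine intervalIntegral.integral_congr fun s hs => ?_
    rw [uIcc_of_le hr.1] at hs
    simp only [hk s ⟨hs.1, hs.2.trans hr.2⟩]
  have he : k = S.tr u := by
    refine eq_transport ?_
    ext r
    change k r = 1 + volterra k (S.lieLp u) r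
    rw [volterra_apply_projIcc, ← hk2 _ (Subtype.coe_prop _)]
    change _ = S.val (g (projIcc (0 : ℝ) 1 zero_le_one (projIcc (0 : ℝ) 1 zero_le_one r : ℝ)))
    rw [projIcc_val]
    rfl
  refine S.val_injective ?_
  rw [val_trG, ← he, hk t ht]

theorem φ_eq (u : S.H0) : S.φ u = S.trG u 1 := by
  have h : ∃ g, S.IsTransport u g := ⟨_, S.isTransport_trG u⟩
  rw [φ, dif_pos h]
  exact h.choose_spec.eq_trG ⟨zero_le_one, le_rfl⟩

theorem πφ_eq (u : S.H0) : S.πφ u = S.proj (S.trG u 1) := by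
  rw [πφ, φ_eq]

theorem hasFDerivAt_tr_apply (u : S.H0) (t : ℝ) :
    HasFDerivAt (fun v => S.val (S.trG v t))
      ((BoundedContinuousFunction.evalCLM ℝ t).comp (S.trD u)) u := by
  have h := (BoundedContinuousFunction.evalCLM (β := 𝔸) ℝ t).hasFDerivAt.comp u (S.hasFDerivAt_tr u)
  refine h.congr_of_eventuallyEq (Eventually.of_forall fun v => ?_)
  exact S.val_trG v t

/-- The right-invariant velocity `(d/dr) g_{u + rX}(t) · g_u(t)⁻¹` of the transport paths. -/
def trV (u : S.H0) (t : ℝ) : S.H0 →ₗ[ℝ] 𝔤 where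
  toFun X := S.lieInv (S.trD u X t * S.val (S.trG u t)⁻¹)
  map_add' X Y := by simp [add_mul]
  map_smul' a X := by simp

theorem trV_apply (u : S.H0) (t : ℝ) (X : S.H0) :
    S.trV u t X = S.lieInv (S.trD u X t * S.val (S.trG u t)⁻¹) := rfl

theorem trD_eq (u : S.H0) (t : ℝ) (X : S.H0) :
    S.trD u X t = S.lie (S.trV u t X) * S.val (S.trG u t) := by
  have hc : HasDerivAt (fun r : ℝ => u + r • X) X 0 := by
    simpa using ((hasDerivAt_id (0 : ℝ)).smul_const X).const_add u
  have h0 : u + (0 : ℝ) • X = u := by simp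
  have h1 : HasFDerivAt (fun v => S.val (S.trG v t))
      ((BoundedContinuousFunction.evalCLM ℝ t).comp (S.trD u)) (u + (0 : ℝ) • X) := by
    rw [h0]; exact S.hasFDerivAt_tr_apply u t
  have h2 := h1.comp_hasDerivAt (0 : ℝ) hc
  obtain ⟨ξ, hξ⟩ := S.exists_velocity (g := fun r => S.trG (u + r • X) t) h2
  have h3 : S.trD u X t = S.lie ξ * S.val (S.trG u t) := by
    simpa [h0] using hξ
  rw [trV_apply, h3, mul_assoc, val_mul_inv, mul_one, lieInv_lie]

theorem trV_zero (u X : S.H0) : S.trV u 0 X = 0 := by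
  rw [trV_apply, trD_apply_zero, zero_mul, map_zero]

theorem dπφ_apply (u : S.H0) (X : S.H0) :
    S.dπφ u X = S.tanProj (S.trG u 1) (S.trV u 1 X) := by
  have h1 := (S.hasFDerivAt_tr_apply u 1).hasMFDerivAt
  have h2 := isDifferentialAt_of_lift (f := S.πφ) h1
    (Eventually.of_forall fun v => (S.πφ_eq v).symm)
  rw [dπφ, h2.diff_eq]
  exact diffOfLift_apply _ _ _

theorem exists_unit_tr (u : S.H0) :
    ∃ x : (ℝ →ᵇ 𝔸)ˣ, (x : ℝ →ᵇ 𝔸) = S.tr u ∧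
      ∀ t, ((x⁻¹ : (ℝ →ᵇ 𝔸)ˣ) : ℝ →ᵇ 𝔸) t = S.val (S.trG u t)⁻¹ := by
  obtain ⟨C, -, hC⟩ := S.exists_norm_val_le
  have hc : Continuous fun t => S.val (S.trG u t)⁻¹ :=
    S.continuous_val.comp (S.continuous_trG u).inv
  set k : ℝ →ᵇ 𝔸 := BoundedContinuousFunction.ofNormedAddCommGroup _ hc C fun r => hC _
  have h1 : S.tr u * k = 1 := by
    ext t
    change S.tr u t * S.val (S.trG u t)⁻¹ = 1
    rw [← val_trG, val_mul_inv]
  have h2 : k * S.tr u = 1 := by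
    ext t
    change S.val (S.trG u t)⁻¹ * S.tr u t = 1
    rw [← val_trG, val_inv_mul]
  exact ⟨⟨S.tr u, k, h1, h2⟩, rfl, fun t => rfl⟩

theorem ringInverse_tr_apply (u : S.H0) (t : ℝ) :
    Ring.inverse (S.tr u) t = S.val (S.trG u t)⁻¹ := by
  obtain ⟨x, hx, h⟩ := S.exists_unit_tr u
  rw [← hx, Ring.inverse_unit, h]

/-- The constant paths in `𝔸` with values in the image of `lie`. -/
def constLie : 𝔤 →L[ℝ] (ℝ →ᵇ 𝔸) :=
  LinearMap.toContinuousLinearMap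
    { toFun := fun v => BoundedContinuousFunction.const ℝ (S.lie v)
      map_add' := fun v w => by ext t; simp
      map_smul' := fun a v => by ext t; simp }

/-- The path `s ↦ Ad(g_u(s)⁻¹) v`. -/
def adInv (u : S.H0) (v : 𝔤) : ℝ →ᵇ 𝔤 :=
  S.lieInv.compLeftContinuousBounded ℝ (Ring.inverse (S.tr u) * S.constLie v * S.tr u)

theorem adInv_apply (u : S.H0) (v : 𝔤) (s : ℝ) : S.adInv u v s = S.Ad (S.trG u s)⁻¹ v := by
  rw [Ad_apply, inv_inv]
  change S.lieInv (Ring.inverse (S.tr u) s * S.lie v * S.tr u s) = _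
  rw [ringInverse_tr_apply, val_trG]

theorem differentiable_ringInverse_tr : Differentiable ℝ fun u : S.H0 => Ring.inverse (S.tr u) := by
  have := FiniteDimensional.complete ℝ 𝔸
  intro u
  obtain ⟨x, hx, -⟩ := S.exists_unit_tr u
  have h := (hasFDerivAt_ringInverse (𝕜 := ℝ) x).differentiableAt
  rw [hx] at h
  exact h.comp u (S.hasFDerivAt_tr u).differentiableAt

theorem differentiable_adInv : Differentiable ℝ fun p : S.H0 × 𝔤 => S.adInv p.1 p.2 := by
  have h1 : Differentiable ℝ fun p : S.H0 × 𝔤 => Ring.inverse (S.tr p.1) :=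
    S.differentiable_ringInverse_tr.comp differentiable_fst
  have h2 : Differentiable ℝ fun p : S.H0 × 𝔤 => S.constLie p.2 :=
    S.constLie.differentiable.comp differentiable_snd
  have h3 : Differentiable ℝ fun p : S.H0 × 𝔤 => S.tr p.1 :=
    fun p => (S.hasFDerivAt_tr p.1).differentiableAt.comp p differentiableAt_fst
  exact (S.lieInv.compLeftContinuousBounded ℝ).differentiable.comp ((h1.mul h2).mul h3)

/-- The element `s ↦ Ad(g_u(s)⁻¹) v` of `H⁰([0,1], 𝔤)`. -/
def hor (u : S.H0) : 𝔤 →ₗ[ℝ] S.H0 where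
  toFun v := BoundedContinuousFunction.toLp 2 unitMeasure ℝ (S.adInv u v)
  map_add' v w := by
    rw [← map_add]
    congr 1
    ext t
    simp [adInv_apply]
  map_smul' a v := by
    rw [RingHom.id_apply, ← map_smul]
    congr 1
    ext t
    simp [adInv_apply]

theorem hor_apply (u : S.H0) (v : 𝔤) :
    S.hor u v = BoundedContinuousFunction.toLp 2 unitMeasure ℝ (S.adInv u v) := rfl

theorem differentiable_hor : Differentiable ℝ fun p : S.H0 × 𝔤 => S.hor p.1 p.2 :=
  (BoundedContinuousFunction.toLp 2 unitMeasure ℝ :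
    (ℝ →ᵇ 𝔤) →L[ℝ] S.H0).differentiable.comp S.differentiable_adInv

theorem inner_toLp_toLp (a b : ℝ →ᵇ 𝔤) :
    ⟪(BoundedContinuousFunction.toLp 2 unitMeasure ℝ a : Lp 𝔤 2 unitMeasure),
      BoundedContinuousFunction.toLp 2 unitMeasure ℝ b⟫ = ∫ s in (0 : ℝ)..1, ⟪a s, b s⟫ := by
  rw [L2.inner_def, intervalIntegral.integral_of_le zero_le_one, ← integral_Icc_eq_integral_Ioc]
  refine integral_congr_ae ?_
  filter_upwards [BoundedContinuousFunction.coeFn_toLp 2 unitMeasure ℝ a,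
    BoundedContinuousFunction.coeFn_toLp 2 unitMeasure ℝ b] with s h1 h2
  rw [h1, h2]

theorem inner_Ad_inv_left (g : S.G) (v w : 𝔤) : ⟪S.Ad g⁻¹ v, w⟫ = ⟪v, S.Ad g w⟫ := by
  rw [← S.inner_Ad g, Ad_Ad_inv]

theorem inner_hor_toLp (f k : ℝ →ᵇ 𝔤) (v : 𝔤) :
    ⟪S.hor (BoundedContinuousFunction.toLp 2 unitMeasure ℝ f) v,
      BoundedContinuousFunction.toLp 2 unitMeasure ℝ k⟫ =
      ⟪v, S.trV (BoundedContinuousFunction.toLp 2 unitMeasure ℝ f) 1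
        (BoundedContinuousFunction.toLp 2 unitMeasure ℝ k)⟫ := by
  have := FiniteDimensional.complete ℝ 𝔸
  set u : S.H0 := BoundedContinuousFunction.toLp 2 unitMeasure ℝ f
  set X : S.H0 := BoundedContinuousFunction.toLp 2 unitMeasure ℝ k
  have hd : ∀ t ∈ Icc (0 : ℝ) 1, HasDerivWithinAt (fun t => ⟪v, S.trV u t X⟫)
      ⟪S.adInv u v t, k t⟫ (Icc 0 1) t := by
    intro t ht
    have h1 := S.hasDerivWithinAt_tr f ht
    have h2 : HasDerivWithinAt (fun t => S.val (S.trG u t)⁻¹)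
        (-(S.lie (f t) * S.val (S.trG u t)⁻¹)) (Icc 0 1) t := by
      have h3 := hasFDerivAt_ringInverse (𝕜 := ℝ) (S.trG u t : 𝔸ˣ)
      have e : ((S.trG u t : 𝔸ˣ) : 𝔸) = S.tr u t := S.val_trG u t
      rw [e] at h3
      have h4 := h3.comp_hasDerivWithinAt t h1
      refine (h4.congr_of_mem (fun r _ => ?_) ht).congr_deriv ?_
      · simp only [Function.comp, u]
        rw [← val_trG, ringInverse_val]
      · change -(S.val (S.trG u t)⁻¹ * (S.tr u t * S.lie (f t)) * S.val (S.trG u t)⁻¹) = _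
        rw [← mul_assoc, ← val_trG, val_inv_mul, one_mul]
    have h5 := (S.hasDerivWithinAt_trD f k ht).mul h2
    have h6 := (innerSL ℝ v).hasFDerivAt.comp_hasDerivWithinAt t
      (S.lieInv.hasFDerivAt.comp_hasDerivWithinAt t h5)
    refine h6.congr_deriv ?_
    rw [adInv_apply, inner_Ad_inv_left, Ad_apply]
    change ⟪v, S.lieInv _⟫ = _
    congr 2
    rw [← val_trG]
    simp only [add_mul, mul_neg, mul_assoc]
    simp only [u]
    abel
  have hc : Continuous fun t => ⟪S.adInv u v t, k t⟫ :=
    (S.adInv u v).continuous.inner k.continuous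
  rw [hor_apply, inner_toLp_toLp, intervalIntegral.integral_eq_sub_of_hasDerivAt_of_le zero_le_one
    (fun t ht => (hd t ht).continuousWithinAt)
    (fun t ht => (hd t ⟨ht.1.le, ht.2.le⟩).hasDerivAt (Icc_mem_nhds ht.1 ht.2))
    (hc.intervalIntegrable _ _), trV_zero, inner_zero_right, sub_zero]

attribute [irreducible] tr trD trV adInv hor

theorem inner_hor (u X : S.H0) (v : 𝔤) : ⟪S.hor u v, X⟫ = ⟪v, S.trV u 1 X⟫ := by
  refine (denseRange_toLp_unitMeasure 𝔤).induction_on₂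
    (p := fun u X : S.H0 => ⟪S.hor u v, X⟫ = ⟪v, S.trV u 1 X⟫) ?_
    (fun f k => S.inner_hor_toLp f k v) u X
  have h1 : Continuous fun p : S.H0 × S.H0 => S.hor p.1 v :=
    S.differentiable_hor.continuous.comp (continuous_fst.prodMk continuous_const)
  have hev := (BoundedContinuousFunction.evalCLM (β := 𝔸) ℝ (1 : ℝ)).continuous
  have h2 : Continuous fun p : S.H0 × S.H0 => S.trV p.1 1 p.2 := by
    have h3 : Continuous fun p : S.H0 × S.H0 => Ring.inverse (S.tr p.1) 1 :=
      hev.comp (S.differentiable_ringInverse_tr.continuous.comp continuous_fst)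
    have h4 := S.lieInv.continuous.comp ((hev.comp S.continuous_trD).mul h3)
    refine h4.congr fun p => ?_
    rw [trV_apply, ← ringInverse_tr_apply]
    rfl
  exact isClosed_eq (h1.inner continuous_snd) (continuous_const.inner h2)

theorem inner_hor_hor (u : S.H0) (v w : 𝔤) : ⟪S.hor u v, S.hor u w⟫ = ⟪v, w⟫ := by
  rw [hor_apply, hor_apply, inner_toLp_toLp]
  simp [adInv_apply, inner_Ad]

/-! ### The horizontal lift of tangent vectors -/

theorem dπφ_mem_tangent (u X : S.H0) : S.dπφ u X ∈ S.tangent (S.πφ u) := by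
  rw [dπφ_apply, πφ_eq]
  exact S.tanProj_mem _ _

theorem inner_dπφ (u X : S.H0) {v : 𝔤} (hv : v ∈ S.tangent (S.πφ u)) :
    ⟪v, S.dπφ u X⟫ = ⟪S.hor u v, X⟫ := by
  rw [inner_hor, dπφ_apply]
  rw [πφ_eq] at hv
  have h := inner_tangent_isotropy (S.sub_tanProj_mem (S.trG u 1) (S.trV u 1 X)) hv
  rw [inner_sub_right] at h
  linarith

theorem dπφ_hor (u : S.H0) {v : 𝔤} (hv : v ∈ S.tangent (S.πφ u)) : S.dπφ u (S.hor u v) = v := by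
  rw [← sub_eq_zero]
  set d := S.dπφ u (S.hor u v) - v
  have hd : d ∈ S.tangent (S.πφ u) := sub_mem (S.dπφ_mem_tangent u _) hv
  rw [← inner_self_eq_zero (𝕜 := ℝ)]
  change ⟪d, S.dπφ u (S.hor u v) - v⟫ = 0
  rw [inner_sub_right, S.inner_dπφ u _ hd, inner_hor_hor, sub_self]

theorem hlift_eq (u : S.H0) {v : 𝔤} (hv : v ∈ S.tangent (S.πφ u)) : S.hlift u v = S.hor u v := by
  have hk : S.hor u v ∈ (LinearMap.ker (S.dπφ u).toLinearMap)ᗮ := by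
    rw [Submodule.mem_orthogonal']
    intro X hX
    rw [← S.inner_dπφ u X hv]
    have : S.dπφ u X = 0 := hX
    rw [this, inner_zero_right]
  obtain ⟨h1, h2⟩ := Classical.epsilon_spec
    (p := fun n => n ∈ (LinearMap.ker (S.dπφ u).toLinearMap)ᗮ ∧ S.dπφ u n = v)
    ⟨S.hor u v, hk, S.dπφ_hor u hv⟩
  change S.hlift u v ∈ _ at h1
  change S.dπφ u (S.hlift u v) = v at h2
  rw [← sub_eq_zero, ← inner_self_eq_zero (𝕜 := ℝ)]
  refine (Submodule.mem_orthogonal _ _).1 (sub_mem h1 hk) _ ?_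
  change S.dπφ u (S.hlift u v - S.hor u v) = 0
  rw [map_sub, h2, S.dπφ_hor u hv, sub_self]

section Lift

variable {S} {E : Type*} [NormedAddCommGroup E] [NormedSpace ℝ E]
  {M : Type*} [TopologicalSpace M] [ChartedSpace E M] {f : M → S.Q} {p : M × S.H0}

theorem mem_tangent_of_mem_lift (hp : p ∈ S.lift f) {w : 𝔤} (hw : w ∈ S.normalOf E f p.1) :
    w ∈ S.tangent (S.πφ p.2) := by
  have : f p.1 = S.πφ p.2 := hp
  rw [← this]
  exact hw.1

theorem hor_mem_normalLift (hp : p ∈ S.lift f) {w : 𝔤} (hw : w ∈ S.normalOf E f p.1) :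
    S.hor p.2 w ∈ S.normalLift E f p := by
  refine (Submodule.mem_orthogonal' _ _).2 fun X hX => ?_
  rw [← S.inner_dπφ _ _ (mem_tangent_of_mem_lift hp hw)]
  exact (Submodule.mem_orthogonal' _ _).1 hw.2 _ hX

variable [FiniteDimensional ℝ E]

theorem mem_tangentLift_of_forall_inner (hf : S.IsImmersion E f) (hp : p ∈ S.lift f) {X : S.H0}
    (h : ∀ w ∈ S.normalOf E f p.1, ⟪S.hor p.2 w, X⟫ = 0) : X ∈ S.tangentLift E f p := by
  have e : f p.1 = S.πφ p.2 := hp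
  refine mem_tangentOf_of_forall_inner (m := p.1) hf ?_ fun w hw => ?_
  · rw [e]
    exact S.dπφ_mem_tangent _ _
  · rw [real_inner_comm]
    exact (S.inner_dπφ _ _ (mem_tangent_of_mem_lift hp hw)).trans (h w hw)

/-- The normal part of a vector of `H⁰([0,1], 𝔤)`, as a normal vector of `M`. -/
theorem exists_normal_part (hf : S.IsImmersion E f) (hp : p ∈ S.lift f) (X : S.H0) :
    ∃ w ∈ S.normalOf E f p.1, X - S.hor p.2 w ∈ S.tangentLift E f p := by
  set w := (S.normalOf E f p.1).starProjection (S.dπφ p.2 X)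
  have hw : w ∈ S.normalOf E f p.1 := Submodule.starProjection_apply_mem _ _
  refine ⟨w, hw, mem_tangentLift_of_forall_inner hf hp fun w' hw' => ?_⟩
  rw [inner_sub_right, ← S.inner_dπφ _ _ (mem_tangent_of_mem_lift hp hw'), inner_hor_hor,
    ← inner_sub_right]
  exact (Submodule.mem_orthogonal _ _).1 (Submodule.sub_starProjection_mem_orthogonal _) _ hw'

theorem exists_of_mem_normalLift (hf : S.IsImmersion E f) (hp : p ∈ S.lift f) {n : S.H0}
    (hn : n ∈ S.normalLift E f p) : ∃ w ∈ S.normalOf E f p.1, n = S.hor p.2 w := by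
  obtain ⟨w, hw, h⟩ := exists_normal_part hf hp n
  refine ⟨w, hw, ?_⟩
  rw [← sub_eq_zero, ← inner_self_eq_zero (𝕜 := ℝ)]
  exact (Submodule.mem_orthogonal _ _).1 (sub_mem hn (hor_mem_normalLift hp hw)) _ h

end Lift

end CompactSymmetricSpace

end

noncomputable section

open BoundedContinuousFunction

namespace CompactSymmetricSpace

variable {𝔸 𝔤 : Type*} [NormedRing 𝔸] [NormedAlgebra ℝ 𝔸] [FiniteDimensional ℝ 𝔸]
  [NormedAddCommGroup 𝔤] [InnerProductSpace ℝ 𝔤] [FiniteDimensional ℝ 𝔤]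

variable (S : CompactSymmetricSpace 𝔸 𝔤)

/-! ### The derivative of horizontal lifts -/

/-- The derivative of `(u, v) ↦ Ad(g_u⁻¹) v`. -/
def adInvD (u : S.H0) (v : 𝔤) : S.H0 × 𝔤 →L[ℝ] (ℝ →ᵇ 𝔤) :=
  fderiv ℝ (fun p : S.H0 × 𝔤 => S.adInv p.1 p.2) (u, v)

theorem hasDerivAt_adInv {u : ℝ → S.H0} {v : ℝ → 𝔤} {X : S.H0} {v' : 𝔤}
    (hu : HasDerivAt u X 0) (hv : HasDerivAt v v' 0) :
    HasDerivAt (fun t => S.adInv (u t) (v t)) (S.adInvD (u 0) (v 0) (X, v')) 0 :=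
  (S.differentiable_adInv (u 0, v 0)).hasFDerivAt.comp_hasDerivAt (0 : ℝ)
    (f := fun t => (u t, v t)) (hu.prodMk hv)

theorem adInvD_apply (u : S.H0) (v : 𝔤) (X : S.H0) (v' : 𝔤) (s : ℝ) :
    S.adInvD u v (X, v') s = S.Ad (S.trG u s)⁻¹ (v' - S.br (S.trV u s X) v) := by
  have hu : HasDerivAt (fun r : ℝ => u + r • X) X 0 := by
    simpa using ((hasDerivAt_id (0 : ℝ)).smul_const X).const_add u
  have hv : HasDerivAt (fun r : ℝ => v + r • v') v' 0 := by
    simpa using ((hasDerivAt_id (0 : ℝ)).smul_const v').const_add v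
  have h0 : u + (0 : ℝ) • X = u := by simp
  have h0' : v + (0 : ℝ) • v' = v := by simp
  have h1 := S.hasDerivAt_adInv hu hv
  have h2 := (BoundedContinuousFunction.evalCLM (β := 𝔤) ℝ s).hasFDerivAt.comp_hasDerivAt (0 : ℝ) h1
  have h3 : HasFDerivAt (fun v => S.val (S.trG v s))
      ((BoundedContinuousFunction.evalCLM ℝ s).comp (S.trD u)) (u + (0 : ℝ) • X) := by
    rw [h0]; exact S.hasFDerivAt_tr_apply u s
  have h4 := h3.comp_hasDerivAt (0 : ℝ) hu
  have h5 : HasDerivAt (fun r : ℝ => S.val (S.trG (u + r • X) s))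
      (S.lie (S.trV u s X) * S.val (S.trG (u + (0 : ℝ) • X) s)) 0 := by
    rw [h0, ← trD_eq]
    exact h4
  have h6 := hasDerivAt_Ad_inv h5 hv
  rw [h0, h0'] at h6
  rw [h0, h0'] at h2
  refine h2.unique (h6.congr_of_eventuallyEq (Eventually.of_forall fun r => ?_))
  exact S.adInv_apply _ _ _

/-- The derivative of the horizontal lift `(u, v) ↦ hor u v`. -/
def horD (u : S.H0) (v : 𝔤) : S.H0 × 𝔤 →L[ℝ] S.H0 :=
  (BoundedContinuousFunction.toLp 2 unitMeasure ℝ).comp (S.adInvD u v)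

theorem horD_apply (u : S.H0) (v : 𝔤) (Y : S.H0 × 𝔤) :
    S.horD u v Y = BoundedContinuousFunction.toLp 2 unitMeasure ℝ (S.adInvD u v Y) := rfl

theorem hasDerivAt_hor {u : ℝ → S.H0} {v : ℝ → 𝔤} {X : S.H0} {v' : 𝔤}
    (hu : HasDerivAt u X 0) (hv : HasDerivAt v v' 0) :
    HasDerivAt (fun t => S.hor (u t) (v t)) (S.horD (u 0) (v 0) (X, v')) 0 := by
  have h := (BoundedContinuousFunction.toLp 2 unitMeasure ℝ :
    (ℝ →ᵇ 𝔤) →L[ℝ] S.H0).hasFDerivAt.comp_hasDerivAt (0 : ℝ) (S.hasDerivAt_adInv hu hv)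
  simp only [hor_apply]
  exact h

theorem inner_hor_horD (u : S.H0) {v w : 𝔤} (X : S.H0) (v' : 𝔤) (h : S.br v w = 0) :
    ⟪S.hor u w, S.horD u v (X, v')⟫ = ⟪w, v'⟫ := by
  rw [hor_apply, horD_apply, inner_toLp_toLp]
  have e : ∀ s, ⟪S.adInv u w s, S.adInvD u v (X, v') s⟫ = ⟪w, v'⟫ := fun s => by
    rw [adInv_apply, adInvD_apply, inner_Ad, inner_sub_right, br_swap, inner_neg_right,
      real_inner_comm (S.br v _) w, inner_br_left, h]
    simp
  simp [e]

theorem eq_of_horD_eq_hor {u X : S.H0} {v v' w : 𝔤} (h : S.horD u v (X, v') = S.hor u w) :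
    w = v' := by
  rw [hor_apply, horD_apply] at h
  have h1 : S.adInvD u v (X, v') =ᵐ[unitMeasure] S.adInv u w := by
    refine (BoundedContinuousFunction.coeFn_toLp 2 unitMeasure ℝ _).symm.trans ?_
    rw [h]
    exact BoundedContinuousFunction.coeFn_toLp 2 unitMeasure ℝ _
  have h2 := Measure.eqOn_Icc_of_ae_eq volume zero_ne_one h1
    (S.adInvD u v (X, v')).continuous.continuousOn (S.adInv u w).continuous.continuousOn
    (left_mem_Icc.2 zero_le_one)
  rw [adInvD_apply, adInv_apply, trG_zero, trV_zero, inv_one, Ad_one, Ad_one, map_zero,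
    _root_.zero_apply, sub_zero] at h2
  exact h2.symm

theorem isDifferentialAt_πφ (u : S.H0) :
    S.IsDifferentialAt 𝓘(ℝ, S.H0) S.πφ u (S.dπφ u) := by
  have h2 := isDifferentialAt_of_lift (f := S.πφ) (S.hasFDerivAt_tr_apply u 1).hasMFDerivAt
    (Eventually.of_forall fun v => (S.πφ_eq v).symm)
  rw [dπφ, h2.diff_eq]
  exact h2

section Lift

variable {S} {E : Type*} [NormedAddCommGroup E] [NormedSpace ℝ E]
  {M : Type*} [TopologicalSpace M] [ChartedSpace E M] {f : M → S.Q} {p : M × S.H0}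
  {c : ℝ → M × S.H0} {X : S.H0} {ν : M → 𝔤}

theorem IsParallelNormal.fieldLift_eq (hν : S.IsParallelNormal E f ν) (hp : p ∈ S.lift f) :
    S.fieldLift ν p = S.hor p.2 (ν p.1) :=
  S.hlift_eq _ (mem_tangent_of_mem_lift hp (hν.mem_normalOf p.1))

theorem IsParallelNormal.fieldLift_mem_normalLift (hν : S.IsParallelNormal E f ν)
    (hp : p ∈ S.lift f) : S.fieldLift ν p ∈ S.normalLift E f p := by
  rw [hν.fieldLift_eq hp]
  exact hor_mem_normalLift hp (hν.mem_normalOf p.1)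

/-- The velocity of the component in `M` of a curve in `M̃`. -/
theorem IsLiftCurve.exists_velocity (hf : S.IsImmersion E f) (hc : S.IsLiftCurve E f p c X) :
    ∃ Y : E, S.diff 𝓘(ℝ, E) f p.1 Y = S.dπφ p.2 X ∧ ∀ ν, S.IsParallelNormal E f ν →
      HasDerivAt (fun t => S.fieldLift ν (c t))
        (S.horD p.2 (ν p.1) (X, mfderiv 𝓘(ℝ, E) 𝓘(ℝ, 𝔤) ν p.1 Y)) 0 := by
  obtain ⟨hcl, rfl, h1, h2⟩ := hc
  have h1' := h1.hasMFDerivAt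
  let c' : ℝ →L[ℝ] E := mfderiv 𝓘(ℝ, ℝ) 𝓘(ℝ, E) (fun t => (c t).1) 0
  refine ⟨c' 1, ?_, fun ν hν => ?_⟩
  · have h3 := (hf.isDifferentialAt (c 0).1).comp_curve (c := fun t => (c t).1) h1'
    have h4 := (S.isDifferentialAt_πφ (c 0).2).comp_curve (c := fun t => (c t).2)
      h2.hasFDerivAt.hasMFDerivAt
    have e : (fun t => f (c t).1) = fun t => S.πφ (c t).2 := funext fun t => hcl t
    rw [e] at h3
    have h5 := DFunLike.congr_fun (h3.unique h4) (1 : ℝ)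
    refine Eq.trans h5 ?_
    change S.dπφ (c 0).2 ((1 : ℝ) • X) = _
    rw [one_smul]
  · have h3 : HasMFDerivAt 𝓘(ℝ, ℝ) 𝓘(ℝ, 𝔤) (fun t => ν (c t).1) 0 _ :=
      (hν.hasMFDerivAt (c 0).1).comp (0 : ℝ) h1'
    let L : ℝ →L[ℝ] 𝔤 := (mfderiv 𝓘(ℝ, E) 𝓘(ℝ, 𝔤) ν (c 0).1).comp c'
    have h4 : HasFDerivAt (fun t => ν (c t).1) L 0 := hasMFDerivAt_iff_hasFDerivAt.1 h3
    have h5 := S.hasDerivAt_hor h2 h4.hasDerivAt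
    refine h5.congr_of_eventuallyEq (Eventually.of_forall fun t => ?_)
    exact hν.fieldLift_eq (hcl t)

/-- A parallel orthonormal frame of the normal bundle. -/
theorem IsEquifocal.exists_frame [PreconnectedSpace M] [IsManifold 𝓘(ℝ, E) ∞ M] (hf : S.IsEquifocal E f) (m : M) :
    ∃ (d : ℕ) (ν : Fin d → M → 𝔤), (∀ k, S.IsParallelNormal E f (ν k)) ∧
      ∀ m', ∀ w ∈ S.normalOf E f m', w = ∑ k, ⟪w, ν k m'⟫ • ν k m' := by
  set b := stdOrthonormalBasis ℝ (S.normalOf E f m)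
  choose ν hν hνb using fun k => hf.trivialNormalHolonomy m (b k) (b k).2
  refine ⟨_, ν, hν, fun m' w hw => ?_⟩
  have horth : ∀ j k, ⟪ν j m', ν k m'⟫ = if j = k then 1 else 0 := fun j k => by
    rw [(hν j).inner_const (hν k) m' m, hνb, hνb]
    exact orthonormal_iff_ite.1 b.orthonormal j k
  set r := w - ∑ k, ⟪w, ν k m'⟫ • ν k m'
  have hr : r ∈ S.normalOf E f m' := sub_mem hw (Submodule.sum_mem _ fun k _ =>
    Submodule.smul_mem _ _ ((hν k).mem_normalOf m'))
  obtain ⟨ρ, hρ, hρr⟩ := hf.trivialNormalHolonomy m' r hr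
  have h1 : ∀ k, ⟪ν k m', r⟫ = 0 := fun k => by
    simp [r, inner_sub_right, inner_sum, real_inner_smul_right, horth, real_inner_comm]
  have h2 : (⟨ρ m, hρ.mem_normalOf m⟩ : S.normalOf E f m) = 0 := by
    refine InnerProductSpace.ext_inner_left_basis b.toBasis fun k => ?_
    rw [inner_zero_right, b.coe_toBasis]
    change ⟪(b k : 𝔤), ρ m⟫ = 0
    rw [← hνb, (hν k).inner_const hρ m m', hρr, h1]
  have h3 : ρ m = 0 := congrArg Subtype.val h2
  have h4 := hρ.inner_const hρ m' m
  rw [h3, hρr, inner_zero_left] at h4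
  exact sub_eq_zero.1 (inner_self_eq_zero.1 h4)

/-- The derivative of a normal field along a curve of `M̃` that vanishes at `0` is normal. -/
theorem IsEquifocal.deriv_mem_normalLift [PreconnectedSpace M] [IsManifold 𝓘(ℝ, E) ∞ M] [FiniteDimensional ℝ E]
    (hf : S.IsEquifocal E f) (hc : S.IsLiftCurve E f p c X) {η : ℝ → S.H0} {η' : S.H0}
    (hη : ∀ t, η t ∈ S.normalLift E f (c t)) (h0 : η 0 = 0) (hη' : HasDerivAt η η' 0) :
    η' ∈ S.normalLift E f p := by
  obtain ⟨d, ν, hν, hframe⟩ := hf.exists_frame p.1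
  obtain ⟨Y, -, hY⟩ := hc.exists_velocity hf.immersion
  have e : η = fun t => ∑ k, ⟪η t, S.fieldLift (ν k) (c t)⟫ • S.fieldLift (ν k) (c t) := by
    funext t
    obtain ⟨w, hw, hηw⟩ := exists_of_mem_normalLift hf.immersion (hc.1 t) (hη t)
    simp only [(hν _).fieldLift_eq (hc.1 t), hηw, inner_hor_hor]
    conv_lhs => rw [hframe _ w hw]
    rw [map_sum]
    simp only [map_smul]
  have h1 : HasDerivAt (fun t => ∑ k, ⟪η t, S.fieldLift (ν k) (c t)⟫ • S.fieldLift (ν k) (c t))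
      (∑ k, ⟪η', S.fieldLift (ν k) p⟫ • S.fieldLift (ν k) p) 0 := by
    refine HasDerivAt.fun_sum fun k _ => ?_
    have h2 := (hη'.inner ℝ (hY _ (hν k))).fun_smul (hY _ (hν k))
    refine h2.congr_deriv ?_
    simp only [h0, inner_zero_left, zero_smul, zero_add, hc.2.1]
  rw [← e] at h1
  rw [hη'.unique h1]
  refine Submodule.sum_mem _ fun k _ => Submodule.smul_mem _ _ ?_
  exact (hν k).fieldLift_mem_normalLift (hc.2.1 ▸ hc.1 0)

theorem IsEquifocal.exists_isShapeOperator [PreconnectedSpace M] [IsManifold 𝓘(ℝ, E) ∞ M] [FiniteDimensional ℝ E]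
    (hf : S.IsEquifocal E f) (hp : p ∈ S.lift f) {n : S.H0} (hn : n ∈ S.normalLift E f p) :
    ∃ A, S.IsShapeOperator E f p n A := by
  obtain ⟨w, hw, rfl⟩ := exists_of_mem_normalLift hf.immersion hp hn
  obtain ⟨ν, hν, rfl⟩ := hf.trivialNormalHolonomy p.1 w hw
  let df : E →L[ℝ] 𝔤 := S.diff 𝓘(ℝ, E) f p.1
  let dν : E →L[ℝ] 𝔤 := mfderiv 𝓘(ℝ, E) 𝓘(ℝ, 𝔤) ν p.1
  obtain ⟨ρ, hρ⟩ := df.toLinearMap.exists_leftInverse_of_injective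
    (LinearMap.ker_eq_bot.2 (hf.immersion.2 p.1))
  have : CompleteSpace (S.normalLift E f p) := Submodule.instOrthogonalCompleteSpace _
  let Pr := (S.normalLift E f p).starProjection
  let B : S.H0 →L[ℝ] S.H0 := (S.horD p.2 (ν p.1)).comp ((ContinuousLinearMap.id ℝ S.H0).prod
    (dν.comp ((LinearMap.toContinuousLinearMap ρ).comp (S.dπφ p.2))))
  refine ⟨-(B - Pr.comp B), fun Z _ => ?_, fun c X η η' hc hη hη0 hη' => ?_⟩
  · refine mem_tangentLift_of_forall_inner hf.immersion hp fun w' hw' => ?_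
    change ⟪S.hor p.2 w', -(B Z - Pr (B Z))⟫ = 0
    rw [inner_neg_right, neg_eq_zero]
    exact (Submodule.mem_orthogonal _ _).1 (Submodule.sub_starProjection_mem_orthogonal _) _
      (hor_mem_normalLift hp hw')
  · obtain ⟨Y, hY, hY'⟩ := hc.exists_velocity hf.immersion
    have hYρ : ρ (S.dπφ p.2 X) = Y := by
      rw [← hY]
      exact LinearMap.congr_fun hρ Y
    have hB : B X = S.horD p.2 (ν p.1) (X, dν Y) := by
      change S.horD p.2 (ν p.1) (X, dν (ρ (S.dπφ p.2 X))) = _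
      rw [hYρ]
    have h1 : η' - B X ∈ S.normalLift E f p := by
      rw [hB]
      refine hf.deriv_mem_normalLift hc (η := fun t => η t - S.fieldLift ν (c t))
        (fun t => sub_mem (hη t) (hν.fieldLift_mem_normalLift (hc.1 t))) ?_
        (hη'.fun_sub (hY' ν hν))
      rw [hη0, hc.2.1, hν.fieldLift_eq hp, sub_self]
    have h2 : Pr (B X) ∈ S.normalLift E f p := Submodule.starProjection_apply_mem _ _
    have h3 := add_mem h1 h2
    change η' + -(B X - Pr (B X)) ∈ _
    have e : η' + -(B X - Pr (B X)) = η' - B X + Pr (B X) := by abel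
    rw [e]
    exact h3

theorem IsEquifocal.isShapeOperator_shape [PreconnectedSpace M] [IsManifold 𝓘(ℝ, E) ∞ M] [FiniteDimensional ℝ E]
    (hf : S.IsEquifocal E f) (hp : p ∈ S.lift f) {n : S.H0} (hn : n ∈ S.normalLift E f p) :
    S.IsShapeOperator E f p n (S.shape E f p n) := by
  have h := hf.exists_isShapeOperator hp hn
  rw [shape, dif_pos h]
  exact h.choose_spec

theorem DT_sup_DT0_le {D : Fin 2 → M → Submodule ℝ 𝔤} {i j : Fin 2} (hij : j ≠ i) :
    S.DT E f D j p ⊔ S.DT0 E f p ≤ S.shapeKer E f p (S.DNLift E f (D i) p) := by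
  have e : j + 1 = i := by omega
  refine sup_le ?_ ?_
  · rw [DT, e]
    exact inf_le_left
  · refine inf_le_inf_left _ (le_iInf₂ fun n hn => ?_)
    exact iInf₂_le n hn.1

end Lift

end CompactSymmetricSpace

end

/-- Let `f : M → G/K` be an equifocal submanifold whose section `N` through `f x₀` is not flat and
has reducible restricted holonomy, with invariant decomposition `W 0 ⊕ W 1`; let `D i` be the
`∇^⊥`-parallel subbundle of the normal bundle with `(D i)_{x₀} = W i`. Let `ν` be the parallel normal
field extending a normal vector `v ∈ (D i)_{m₁}`. At every point `p` of `M̃` and for every vector `X`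
tangent to `M̃` at `p` (the velocity of a curve `c` in `M̃`):
(i) the derivative of `ν^L` along `X` exists, and its normal part `ζ` lies in `D̃^N_i`;
(ii) if `X ∈ D̃^T_j ⊕ D̃^T_0` with `j ≠ i`, the derivative is zero. -/
theorem parallelNormalLift_derivative
    {𝔸 𝔤 : Type*} [NormedRing 𝔸] [NormedAlgebra ℝ 𝔸] [FiniteDimensional ℝ 𝔸]
    [NormedAddCommGroup 𝔤] [InnerProductSpace ℝ 𝔤] [FiniteDimensional ℝ 𝔤]
    (S : CompactSymmetricSpace 𝔸 𝔤)
    {E : Type*} [NormedAddCommGroup E] [NormedSpace ℝ E] [FiniteDimensional ℝ E]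
    {M : Type*} [TopologicalSpace M] [T2Space M] [ConnectedSpace M]
    [ChartedSpace E M] [IsManifold 𝓘(ℝ, E) ∞ M]
    (f : M → S.Q) (hf : S.IsEquifocal E f)
    (x₀ : M) (N : S.Submfd) (W : Fin 2 → Submodule ℝ 𝔤) (hW : S.IsSectionSplitting E f x₀ N W)
    (D : Fin 2 → M → Submodule ℝ 𝔤) (hD : ∀ i, D i = S.parallelSubbundle E f x₀ (W i))
    (i : Fin 2) (m₁ : M) (v : 𝔤) (hv : v ∈ D i m₁)
    (ν : M → 𝔤) (hν : S.IsParallelNormal E f ν) (hνv : ν m₁ = v) :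
    ∀ p ∈ S.lift f, ∀ (c : ℝ → M × S.H0) (X : S.H0), S.IsLiftCurve E f p c X →
      (∃ τ ∈ S.tangentLift E f p, ∃ ζ ∈ S.normalLift E f p,
        HasDerivAt (fun t => S.fieldLift ν (c t)) (τ + ζ) 0 ∧
          ζ ∈ S.DNLift E f (D i) p) ∧
      (∀ j, j ≠ i → X ∈ S.DT E f D j p ⊔ S.DT0 E f p →
        HasDerivAt (fun t => S.fieldLift ν (c t)) 0 0) := by
  obtain rfl : D = fun i => S.parallelSubbundle E f x₀ (W i) := funext hD
  subst hνv
  have hνD : ∀ m, ν m ∈ S.parallelSubbundle E f x₀ (W i) m := hν.mem_parallelSubbundle hv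
  intro p hp c X hc
  obtain ⟨Y, -, hY⟩ := hc.exists_velocity hf.immersion
  have hd := hY ν hν
  set ν' : 𝔤 := mfderiv 𝓘(ℝ, E) 𝓘(ℝ, 𝔤) ν p.1 Y
  have hν' : ∀ w ∈ S.normalOf E f p.1, ⟪ν', w⟫ = 0 := hν.2.2 p.1 Y
  refine ⟨?_, fun j hj hX => ?_⟩
  · obtain ⟨w, hw, hτ⟩ :=
      CompactSymmetricSpace.exists_normal_part hf.immersion hp (S.horD p.2 (ν p.1) (X, ν'))
    have hζ := CompactSymmetricSpace.hor_mem_normalLift hp hw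
    refine ⟨_, hτ, S.hor p.2 w, hζ, by rwa [sub_add_cancel], hζ, ?_⟩
    change S.dπφ p.2 (S.hor p.2 w) ∈ S.parallelSubbundle E f x₀ (W i) p.1
    rw [S.dπφ_hor _ (CompactSymmetricSpace.mem_tangent_of_mem_lift hp hw)]
    refine hW.mem_parallelSubbundle_of_inner hf i hw fun j hj u hu => ?_
    obtain ⟨μ, hμ, -, rfl⟩ := CompactSymmetricSpace.mem_parallelSubbundle_iff.1 hu
    have hun := hμ.mem_normalOf p.1
    have h1 := (Submodule.mem_orthogonal' _ _).1
      (CompactSymmetricSpace.hor_mem_normalLift hp hun) _ hτ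
    rw [inner_sub_right, S.inner_hor_horD _ _ _ (hW.br_eq_zero hf hj (hνD p.1) hu), S.inner_hor_hor,
      real_inner_comm, hν' _ hun] at h1
    rw [real_inner_comm]
    linarith
  · have hn : S.fieldLift ν p ∈ S.normalLift E f p := hν.fieldLift_mem_normalLift hp
    have hnD : S.fieldLift ν p ∈ S.DNLift E f (S.parallelSubbundle E f x₀ (W i)) p := by
      refine ⟨hn, ?_⟩
      change S.dπφ p.2 (S.fieldLift ν p) ∈ S.parallelSubbundle E f x₀ (W i) p.1
      rw [hν.fieldLift_eq hp,
        S.dπφ_hor _ (CompactSymmetricSpace.mem_tangent_of_mem_lift hp (hν.mem_normalOf _))]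
      exact hνD p.1
    have hker := CompactSymmetricSpace.DT_sup_DT0_le (S := S)
      (D := fun i => S.parallelSubbundle E f x₀ (W i)) hj hX
    have hAX : S.shape E f p (S.fieldLift ν p) X = 0 :=
      (Submodule.mem_iInf _).1 ((Submodule.mem_iInf _).1 hker.2 (S.fieldLift ν p)) hnD
    have h1 := (hf.isShapeOperator_shape hp hn).2 c X _ _ hc
      (fun t => hν.fieldLift_mem_normalLift (hc.1 t)) (by rw [hc.2.1]) hd
    rw [hAX, add_zero] at h1
    obtain ⟨w, hw, hw'⟩ := CompactSymmetricSpace.exists_of_mem_normalLift hf.immersion hp h1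
    have hwν : w = ν' := S.eq_of_horD_eq_hor hw'
    have hw0 : w = 0 := by
      rw [← inner_self_eq_zero (𝕜 := ℝ)]
      nth_rewrite 1 [hwν]
      exact hν' w hw
    rw [hw', hw0, map_zero] at hd
    exact hd
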